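/- arXiv:2008.12651 — 3 statements merged into one kernel-verified Lean document; each statement's English description precedes it below -/
import Mathlib

section
/- Let F be a finite field of odd order and let X ∈ M_n(F) be invertible. Then there exists a nonsingular quadratic form Q on F^n such that X is an isometry of Q if and only if X is similar to X⁻¹ and, for every λ ∈ {1, −1} and every even m ≥ 2, the multiplicity of (t−λ)^m as an elementary divisor of X is even. -/
open Matrix

/-- The multiplicity of `(t - λ)^m` as an elementary divisor of `X`, computed as
`2·dim ker((X−λI)^m) − dim ker((X−λI)^{m+1}) − dim ker((X−λI)^{m−1})` (as an integer). -/
noncomputable def edMultiplicity {F : Type*} [Field F] {n : ℕ}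
    (X : Matrix (Fin n) (Fin n) F) (lam : F) (m : ℕ) : ℤ :=
  2 * (Module.finrank F (LinearMap.ker (Matrix.toLin' ((X - lam • 1) ^ m))) : ℤ)
    - (Module.finrank F (LinearMap.ker (Matrix.toLin' ((X - lam • 1) ^ (m + 1)))) : ℤ)
    - (Module.finrank F (LinearMap.ker (Matrix.toLin' ((X - lam • 1) ^ (m - 1)))) : ℤ)

/-!
An isometry `f` makes the space a module over the principal ideal domain `F[T;T⁻¹]`, and a bilinear
form is preserved by `f` exactly when `T` is adjoint to `T⁻¹`.

Every endomorphism `f` is self-adjoint for some nondegenerate form `H`: on a cyclic module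
`F[T] ⧸ (p ^ n)` take `(x, y) ↦ φ (x * y)` with `φ (p ^ (n - 1)) ≠ 0`. Composing with `H` turns the
nondegenerate forms `G` preserved by `f` into the invertible `P` with `f * P * f = P`, so `f` is
similar to its inverse if and only if it preserves some nondegenerate, not necessarily symmetric,
bilinear form.

It remains to decide when a preserved nondegenerate form `G` can be replaced by a symmetric one.
One splits off orthogonal summands carrying a symmetric form, prime by prime. A prime not associated
to its conjugate gives a hyperbolic summand. At a self-conjugate prime on whose residue field the
involution is nontrivial, symmetrizing some multiple of `G` gives a nondegenerate form on a cyclic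
summand. For the remaining primes `T - l`, with `l = ± 1`, the form
`(x, y) ↦ G ((T - l) ^ (m - 1) * x) y` on the kernel of `(T - l) ^ m` has as rank the number of
blocks of size `m`, and when `G` is symmetric it is symmetric or skew according as `m` is odd or
even. Skew forms have even rank, which makes the parity condition necessary. Conversely, a nonzero
form either has rank one or has a nonzero two by two principal minor with a nonzero off-diagonal
entry. Such a minor gives a hyperbolic summand made of two blocks of size `m`. In rank one, parity
forces `m` to be odd and a single block carries a symmetric form.
-/

section LinearAlgebra

variable {F V : Type*} [Field F] [AddCommGroup V] [Module F V]

lemma finrank_map_add_finrank_inf_ker [FiniteDimensional F V] {V' : Type*} [AddCommGroup V']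
    [Module F V'] (f : V →ₗ[F] V') (A : Submodule F V) :
    Module.finrank F (A.map f) + Module.finrank F (A ⊓ LinearMap.ker f : Submodule F V) =
      Module.finrank F A := by
  have h := LinearMap.finrank_range_add_finrank_ker (f.domRestrict A)
  rwa [LinearMap.range_domRestrict, LinearMap.ker_domRestrict,
    ← Submodule.finrank_map_subtype_eq, Submodule.map_comap_subtype] at h

lemma surjective_of_separatingLeft [FiniteDimensional F V] {B : V →ₗ[F] V →ₗ[F] F}
    (hB : B.SeparatingLeft) : Function.Surjective B :=
  (LinearMap.injective_iff_surjective_of_finrank_eq_finrank Subspace.dual_finrank_eq.symm).1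
    (LinearMap.ker_eq_bot.1 (LinearMap.separatingLeft_iff_ker_eq_bot.1 hB))

lemma even_finrank_of_skew [FiniteDimensional F V] (h2 : (2 : F) ≠ 0) {B : V →ₗ[F] V →ₗ[F] F}
    (hB : B.SeparatingLeft) (hskew : ∀ x y, B x y = -B y x) : Even (Module.finrank F V) := by
  let b := Module.finBasis F V
  have hdet := (LinearMap.separatingLeft_iff_det_ne_zero b).1 hB
  set A := LinearMap.toMatrix₂ b b B with hA
  have hAt : Aᵀ = -A := by
    ext i j
    simp only [hA, transpose_apply, Matrix.neg_apply, LinearMap.toMatrix₂_apply, hskew (b j)]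
  by_contra hodd
  have h := A.det_transpose
  rw [hAt, det_neg, Fintype.card_fin, (Nat.not_even_iff_odd.1 hodd).neg_one_pow] at h
  have htwo : 2 * A.det = 0 := by linear_combination -h
  exact hdet ((mul_eq_zero.1 htwo).resolve_left h2)

lemma even_finrank_range_of_skew [FiniteDimensional F V] (h2 : (2 : F) ≠ 0)
    {B : V →ₗ[F] V →ₗ[F] F} (hskew : ∀ x y, B x y = -B y x) :
    Even (Module.finrank F (LinearMap.range B)) := by
  obtain ⟨W, hW⟩ := Submodule.exists_isCompl (LinearMap.ker B)
  have hdim : Module.finrank F (LinearMap.range B) = Module.finrank F W := by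
    have := LinearMap.finrank_range_add_finrank_ker B
    have := Submodule.finrank_add_eq_of_isCompl hW
    omega
  have hker {x y : V} (hx : x ∈ LinearMap.ker B) : B y x = 0 := by
    rw [hskew, LinearMap.mem_ker.1 hx, LinearMap.zero_apply, neg_zero]
  have hsep : (B.domRestrict₁₂ W W).SeparatingLeft := fun x hx => by
    refine Subtype.ext (Submodule.disjoint_def.1 hW.disjoint _ (LinearMap.ext fun y => ?_) x.2)
    obtain ⟨u, hu, w, hw, rfl⟩ := Submodule.mem_sup.1 (hW.sup_eq_top ▸ Submodule.mem_top (x := y))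
    rw [map_add, hker hu, zero_add]
    exact hx ⟨w, hw⟩
  exact hdim ▸ even_finrank_of_skew h2 hsep fun x y => hskew x y

lemma apply_eq_zero_of_isotropic {B : V →ₗ[F] V →ₗ[F] F} {u w : V}
    (hminor : B u w ≠ 0 → B u u * B w w = B u w * B w u)
    (hu : B u u = 0) (hw : B w w = 0) (huw : B (u + w) (u + w) = 0) : B u w = 0 := by
  have hskew : B w u = -B u w := by
    simp only [map_add, LinearMap.add_apply] at huw
    linear_combination huw - hu - hw
  by_contra h
  have := hminor h
  rw [hu, hskew, zero_mul, mul_neg, eq_comm, neg_eq_zero, mul_self_eq_zero] at this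
  exact h this

lemma finrank_range_eq_one_of_vanishes_on_ker {B : V →ₗ[F] V →ₗ[F] F} {v : V} (hv : B v v ≠ 0)
    (hker : ∀ u w, B v u = 0 → B v w = 0 → B u w = 0) :
    Module.finrank F (LinearMap.range B) = 1 := by
  have decompose (x : V) : ∃ c u, x = c • v + u ∧ B v u = 0 :=
    ⟨B v x / B v v, x - (B v x / B v v) • v, by abel, by
      rw [map_sub, map_smul, smul_eq_mul, div_mul_cancel₀ _ hv, sub_self]⟩
  have hrange : LinearMap.range B = F ∙ B v := by
    refine le_antisymm ?_ ((Submodule.span_singleton_le_iff_mem _ _).2 ⟨v, rfl⟩)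
    rintro _ ⟨x, rfl⟩
    obtain ⟨c, u, rfl, hu⟩ := decompose x
    refine Submodule.mem_span_singleton.2 ⟨c + B u v / B v v, LinearMap.ext fun y => ?_⟩
    obtain ⟨d, w, rfl, hw⟩ := decompose y
    simp only [map_add, map_smul, LinearMap.add_apply, LinearMap.smul_apply, smul_eq_mul,
      hw, hker u w hu hw]
    field_simp
    ring
  rw [hrange, finrank_span_singleton]
  exact fun h => hv (by rw [h, LinearMap.zero_apply])

lemma exists_minor_ne_zero_or_finrank_range_eq_one {B : V →ₗ[F] V →ₗ[F] F} (hB : B ≠ 0) :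
    (∃ u w, B u w ≠ 0 ∧ B u u * B w w ≠ B u w * B w u) ∨
      (∃ v, B v v ≠ 0) ∧ Module.finrank F (LinearMap.range B) = 1 := by
  refine or_iff_not_imp_left.2 fun hminor => ?_
  push Not at hminor
  obtain ⟨v, hv⟩ : ∃ v, B v v ≠ 0 := by
    by_contra! h
    exact hB (LinearMap.ext₂ fun u w => apply_eq_zero_of_isotropic (hminor u w) (h u) (h w) (h _))
  have isotropic {w : V} (hw : B v w = 0) : B w w = 0 := by
    have := hminor v (v + w) (by simpa only [map_add, hw, add_zero] using hv)
    simp only [map_add, LinearMap.add_apply, hw] at this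
    exact (mul_eq_zero.1 (by linear_combination this : B v v * B w w = 0)).resolve_left hv
  refine ⟨⟨v, hv⟩, finrank_range_eq_one_of_vanishes_on_ker hv fun u w hu hw => ?_⟩
  exact apply_eq_zero_of_isotropic (hminor u w) (isotropic hu) (isotropic hw)
    (isotropic (by rw [map_add, hu, hw, add_zero]))

end LinearAlgebra

section BalancedForms

variable {F R M N M' N' : Type*} [Field F] [CommRing R] [Algebra F R]
  [AddCommGroup M] [Module F M] [Module R M] [AddCommGroup N] [Module F N] [Module R N]
  [AddCommGroup M'] [Module F M'] [Module R M'] [AddCommGroup N'] [Module F N'] [Module R N']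
  {σ : R ≃ₐ[F] R} {B : M →ₗ[F] N →ₗ[F] F}

/-- The pairing `B` of `R`-modules turns multiplication by `a` on the left into multiplication by
`σ a` on the right. For `R = F[T;T⁻¹]` and `σ` the inversion `T ↦ T⁻¹` this says that `T` acts by
isometries; for `R = F[T]` and `σ` the identity, that `T` is self-adjoint. -/
def IsBalanced (σ : R ≃ₐ[F] R) (B : M →ₗ[F] N →ₗ[F] F) : Prop :=
  ∀ (a : R) (x : M) (y : N), B (a • x) y = B x (σ a • y)

lemma IsBalanced.apply_smul_right (hσ : Function.Involutive σ) (hB : IsBalanced σ B) (a : R)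
    (x : M) (y : N) : B x (a • y) = B (σ a • x) y := by
  rw [hB, hσ a]

lemma IsBalanced.flip (hσ : Function.Involutive σ) (hB : IsBalanced σ B) : IsBalanced σ B.flip :=
  fun a x y => hB.apply_smul_right hσ a y x

variable (F M σ) in
/-- The `R`-module `M` carries a nondegenerate symmetric `σ`-balanced form. -/
def HasSymmForm : Prop :=
  ∃ H : M →ₗ[F] M →ₗ[F] F, H.SeparatingLeft ∧ (∀ x y, H x y = H y x) ∧ IsBalanced σ H

variable [IsScalarTower F R M] [IsScalarTower F R N] [IsScalarTower F R M'] [IsScalarTower F R N']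

/-- The pullback of a pairing of `R`-modules along `R`-linear maps: `LinearMap.compl₁₂`, with the
restriction of scalars to `F` built in. -/
def pullbackForm (B : M →ₗ[F] N →ₗ[F] F) (f : M' →ₗ[R] M) (g : N' →ₗ[R] N) :
    M' →ₗ[F] N' →ₗ[F] F :=
  B.compl₁₂ (f.restrictScalars F) (g.restrictScalars F)

@[simp]
lemma pullbackForm_apply (B : M →ₗ[F] N →ₗ[F] F) (f : M' →ₗ[R] M) (g : N' →ₗ[R] N) (x : M')
    (y : N') : pullbackForm B f g x y = B (f x) (g y) := rfl

/-- The restriction of a pairing of `R`-modules to submodules. -/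
abbrev restrictForm (B : M →ₗ[F] N →ₗ[F] F) (U : Submodule R M) (W : Submodule R N) :
    U →ₗ[F] W →ₗ[F] F :=
  pullbackForm B U.subtype W.subtype

lemma IsBalanced.pullback (hB : IsBalanced σ B) (f : M' →ₗ[R] M) (g : N' →ₗ[R] N) :
    IsBalanced σ (pullbackForm B f g) := fun a x y => by
  simp only [pullbackForm_apply, map_smul, hB a]

namespace HasSymmForm

lemma congr (h : HasSymmForm F M σ) (f : N ≃ₗ[R] M) : HasSymmForm F N σ := by
  obtain ⟨H, hsep, hsymm, hbal⟩ := h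
  refine ⟨pullbackForm H f.toLinearMap f.toLinearMap, fun x hx => ?_, fun x y => hsymm _ _,
    hbal.pullback _ _⟩
  exact f.map_eq_zero_iff.1 (hsep _ fun y => by simpa using hx (f.symm y))

lemma pi {ι : Type*} [Finite ι] {P : ι → Type*} [∀ i, AddCommGroup (P i)]
    [∀ i, Module F (P i)] [∀ i, Module R (P i)] [∀ i, IsScalarTower F R (P i)]
    (h : ∀ i, HasSymmForm F (P i) σ) : HasSymmForm F (∀ i, P i) σ := by
  classical
  have := Fintype.ofFinite ι
  choose H hsep hsymm hbal using h
  refine ⟨∑ i, pullbackForm (H i) (.proj i : _ →ₗ[R] _) (.proj i : _ →ₗ[R] _),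
    fun x hx => funext fun i => hsep i _ fun y => ?_, fun x y => ?_, fun a x y => ?_⟩
  · have := hx (Pi.single i y)
    simp only [LinearMap.sum_apply, pullbackForm_apply, LinearMap.proj_apply] at this
    rwa [Finset.sum_eq_single i (fun j _ hj => by rw [Pi.single_eq_of_ne hj, map_zero])
      (fun hi => absurd (Finset.mem_univ i) hi), Pi.single_eq_same] at this
  · simp only [LinearMap.sum_apply, pullbackForm_apply, hsymm _ (LinearMap.proj _ x)]
  · simp [hbal _ a]

lemma prod (hM : HasSymmForm F M σ) (hN : HasSymmForm F N σ) :
    HasSymmForm F (M × N) σ := by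
  obtain ⟨H, hsep, hsymm, hbal⟩ := hM
  obtain ⟨K, ksep, ksymm, kbal⟩ := hN
  refine ⟨pullbackForm H (.fst R M N) (.fst R M N) + pullbackForm K (.snd R M N) (.snd R M N),
    fun x hx => Prod.ext (hsep _ fun y => ?_) (ksep _ fun y => ?_), fun x y => ?_, fun a x y => ?_⟩
  · simpa using hx (y, 0)
  · simpa using hx (0, y)
  · simp [hsymm x.1, ksymm x.2]
  · simp [hbal a, kbal a]

lemma of_isCompl {U W : Submodule R M} (hUW : IsCompl U W) (hU : HasSymmForm F U σ)
    (hW : HasSymmForm F W σ) : HasSymmForm F M σ :=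
  (hU.prod hW).congr (Submodule.prodEquivOfIsCompl U W hUW).symm

lemma hyperbolic (hσ : Function.Involutive σ) (hB : IsBalanced σ B) (hl : B.SeparatingLeft)
    (hr : B.SeparatingRight) : HasSymmForm F (M × N) σ := by
  let H := pullbackForm B (.fst R M N) (.snd R M N)
  refine ⟨H + H.flip, fun x hx => Prod.ext (hl _ fun y => ?_) (hr _ fun y => ?_), fun x y => ?_,
    fun a x y => ?_⟩
  · simpa [H] using hx (0, y)
  · simpa [H] using hx (y, 0)
  · simp [H, add_comm]
  · simp [H, hB a, hB.apply_smul_right hσ a]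

end HasSymmForm

end BalancedForms

section Torsion

open Submodule Module

variable {F R M N : Type*} [Field F] [CommRing R] [Algebra F R]
  [AddCommGroup M] [Module F M] [Module R M] [IsScalarTower F R M] [FiniteDimensional F M]
  [AddCommGroup N] [Module F N] [Module R N] [IsScalarTower F R N] [FiniteDimensional F N]

variable (F M) in
/-- For a prime `p` of a principal ideal domain, the multiplicity of `R ⧸ (p ^ m)` as a direct
summand of the torsion module `M`, times the degree of `R ⧸ (p)` over `F`. The formula
requires `1 ≤ m`. -/
noncomputable def primaryMultiplicity (p : R) (m : ℕ) : ℤ :=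
  2 * (finrank F (torsionBy R M (p ^ m)) : ℤ) - finrank F (torsionBy R M (p ^ (m + 1)))
    - finrank F (torsionBy R M (p ^ (m - 1)))

omit [FiniteDimensional F M] [FiniteDimensional F N] in
lemma finrank_torsionBy_congr (f : M ≃ₗ[R] N) (a : R) :
    finrank F (torsionBy R M a) = finrank F (torsionBy R N a) := by
  have hmap : (torsionBy R M a).map f.toLinearMap = torsionBy R N a := by
    ext y
    refine ⟨?_, fun hy => ⟨f.symm y, ?_, f.apply_symm_apply y⟩⟩
    · rintro ⟨x, hx, rfl⟩
      rw [mem_torsionBy_iff, ← map_smul, (mem_torsionBy_iff a x).1 hx, map_zero]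
    · rw [SetLike.mem_coe, mem_torsionBy_iff, ← map_smul, (mem_torsionBy_iff a y).1 hy, map_zero]
  rw [← hmap]
  exact (f.submoduleMap _ |>.restrictScalars F).finrank_eq

instance finiteDimensional_submodule_of_isScalarTower (U : Submodule R M) : FiniteDimensional F U :=
  inferInstanceAs (FiniteDimensional F (U.restrictScalars F))

lemma finrank_torsionBy_prod (a : R) :
    finrank F (torsionBy R (M × N) a) =
      finrank F (torsionBy R M a) + finrank F (torsionBy R N a) := by
  have hker {x : M × N} : x ∈ torsionBy R (M × N) a ↔
      x.1 ∈ torsionBy R M a ∧ x.2 ∈ torsionBy R N a := Prod.ext_iff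
  let e : torsionBy R (M × N) a ≃ₗ[F] torsionBy R M a × torsionBy R N a :=
    { toFun x := (⟨x.1.1, (hker.1 x.2).1⟩, ⟨x.1.2, (hker.1 x.2).2⟩)
      invFun x := ⟨(x.1.1, x.2.1), hker.2 ⟨x.1.2, x.2.2⟩⟩
      map_add' _ _ := rfl
      map_smul' _ _ := rfl }
  rw [e.finrank_eq, finrank_prod]

lemma primaryMultiplicity_of_isCompl {U W : Submodule R M} (hUW : IsCompl U W) (p : R) (m : ℕ) :
    primaryMultiplicity F M p m = primaryMultiplicity F U p m + primaryMultiplicity F W p m := by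
  simp only [primaryMultiplicity,
    finrank_torsionBy_congr (F := F) (prodEquivOfIsCompl U W hUW).symm, finrank_torsionBy_prod]
  push_cast
  ring

end Torsion

section Splitting

open Submodule

variable {F R M N : Type*} [Field F] [CommRing R] [Algebra F R]
  [AddCommGroup M] [Module F M] [Module R M] [IsScalarTower F R M]
  [AddCommGroup N] [Module F N] [Module R N] [IsScalarTower F R N]
  {σ : R ≃ₐ[F] R} {G : M →ₗ[F] M →ₗ[F] F}

variable (σ G) in
/-- Some nonzero submodule on which `G` is nondegenerate carries a nondegenerate symmetric
`σ`-balanced form; it can be split off from `M`. -/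
def HasSymmSummand : Prop :=
  ∃ U : Submodule R M, U ≠ ⊥ ∧ (restrictForm G U U).SeparatingLeft ∧ HasSymmForm F U σ

lemma HasSymmSummand.of_pullback [Nontrivial N] {f : N →ₗ[R] M}
    (hf : (pullbackForm G f f).SeparatingLeft) (hN : HasSymmForm F N σ) :
    HasSymmSummand σ G := by
  have hinj : Function.Injective f := (injective_iff_map_eq_zero f).2 fun x hx =>
    hf x fun y => by rw [pullbackForm_apply, hx, map_zero, LinearMap.zero_apply]
  refine ⟨LinearMap.range f, ?_, ?_, hN.congr (LinearEquiv.ofInjective f hinj).symm⟩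
  · obtain ⟨x, hx⟩ := exists_ne (0 : N)
    exact (Submodule.ne_bot_iff _).2 ⟨f x, ⟨x, rfl⟩, (map_ne_zero_iff f hinj).2 hx⟩
  · rintro ⟨_, x, rfl⟩ hx
    have hx0 : x = 0 := hf x fun y => hx ⟨f y, y, rfl⟩
    exact Subtype.ext (by simp [hx0])

variable [FiniteDimensional F M]

lemma exists_isCompl_of_separatingLeft (hbal : IsBalanced σ G)
    (hG : G.SeparatingLeft) {U : Submodule R M} (hU : (restrictForm G U U).SeparatingLeft) :
    ∃ W : Submodule R M, IsCompl U W ∧ (restrictForm G W W).SeparatingLeft := by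
  let W : Submodule R M :=
    { carrier := {x | ∀ u ∈ U, G x u = 0}
      add_mem' := fun hx hy u hu => by simp [hx u hu, hy u hu]
      zero_mem' := by simp
      smul_mem' := fun a x hx u hu => by rw [hbal]; exact hx _ (U.smul_mem _ hu) }
  have hcompl : IsCompl U W := by
    refine ⟨disjoint_def.2 fun x hxU hxW => ?_, codisjoint_iff.2 (eq_top_iff.2 fun x _ => ?_)⟩
    · exact congrArg Subtype.val (hU ⟨x, hxU⟩ fun y => hxW y y.2)
    · obtain ⟨u, hu⟩ := surjective_of_separatingLeft hU (G x ∘ₗ U.subtype.restrictScalars F)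
      refine mem_sup.2 ⟨u, u.2, x - u, fun w hw => ?_, add_sub_cancel _ _⟩
      have : G u w = G x w := LinearMap.congr_fun hu ⟨w, hw⟩
      rw [map_sub, LinearMap.sub_apply, this, sub_self]
  refine ⟨W, hcompl, fun x hx => Subtype.ext (hG x fun y => ?_)⟩
  obtain ⟨u, hu, w, hw, rfl⟩ := mem_sup.1 (hcompl.sup_eq_top ▸ mem_top (x := y))
  rw [map_add, x.2 u hu, zero_add]
  exact hx ⟨w, hw⟩

end Splitting

section Layers

open Submodule

lemma eventually_eq_zero_of_pow_smul_pow_smul {R M : Type*} [CommRing R] [AddCommGroup M]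
    [Module R M] [IsNoetherian R M] (a : R) :
    ∀ᶠ k in Filter.atTop, ∀ x : M, a ^ k • a ^ k • x = 0 → a ^ k • x = 0 := by
  filter_upwards [Module.End.eventually_disjoint_ker_pow_range_pow
    (Algebra.lsmul R R M a)] with k hk x hx
  simp only [← map_pow] at hk
  exact disjoint_def.1 hk _ hx ⟨x, rfl⟩

variable {F R M N : Type*} [Field F] [CommRing R] [Algebra F R]
  [AddCommGroup M] [Module F M] [Module R M] [AddCommGroup N] [Module F N] [Module R N]
  {σ : R ≃ₐ[F] R} {B : M →ₗ[F] N →ₗ[F] F} {G : M →ₗ[F] M →ₗ[F] F} {p : R} {e : ℕ}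

lemma IsBalanced.separatingLeft_of_pow_smul (hB : IsBalanced σ B) {k : ℕ}
    (hk : ∀ x : M, p ^ k • x = 0)
    (hsoc : ∀ x : M, p • x = 0 → (∀ y, B x y = 0) → x = 0) : B.SeparatingLeft := by
  suffices h : ∀ k, ∀ x : M, p ^ k • x = 0 → (∀ y, B x y = 0) → x = 0 from fun x => h k x (hk x)
  intro k
  induction k with
  | zero => exact fun x hx _ => by rwa [pow_zero, one_smul] at hx
  | succ k ih =>
    refine fun x hx hxB => ih x (hsoc _ ?_ fun y => ?_) hxB
    · rwa [smul_smul, ← pow_succ']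
    · rw [hB, hxB]

variable [IsScalarTower F R M] [FiniteDimensional F M]

lemma IsBalanced.exists_eq_smul (hbal : IsBalanced σ G) (hG : G.SeparatingLeft) {a : R} {x : M}
    (hx : ∀ y, σ a • y = 0 → G x y = 0) : ∃ z, x = a • z := by
  have hann : G x ∈ (LinearMap.ker (Algebra.lsmul F F M (σ a))).dualAnnihilator :=
    (mem_dualAnnihilator _).2 fun y hy => hx y hy
  rw [← LinearMap.range_dualMap_eq_dualAnnihilator_ker] at hann
  obtain ⟨ψ, hψ⟩ := hann
  obtain ⟨z, rfl⟩ := surjective_of_separatingLeft hG ψ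
  refine ⟨z, sub_eq_zero.1 (hG _ fun y => ?_)⟩
  rw [map_sub, LinearMap.sub_apply, ← hψ, hbal, sub_eq_zero]
  rfl

lemma IsBalanced.exists_layer_ne_zero (hbal : IsBalanced σ G) (hG : G.SeparatingLeft) {x : M}
    (hx : p • x = 0) (hx0 : x ≠ 0) :
    ∃ e, ∃ u v : M, p ^ (e + 1) • u = 0 ∧ σ p ^ (e + 1) • v = 0 ∧ G (p ^ e • u) v ≠ 0 := by
  by_contra! h
  have hdiv (k : ℕ) : ∃ z, x = p ^ k • z := by
    induction k with
    | zero => exact ⟨x, by rw [pow_zero, one_smul]⟩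
    | succ k ih =>
      obtain ⟨z, rfl⟩ := ih
      refine hbal.exists_eq_smul hG fun y hy => h k z y ?_ (by rwa [← map_pow])
      rwa [pow_succ', mul_smul]
  have : IsNoetherian R M := isNoetherian_of_tower F inferInstance
  obtain ⟨k, hk, hk1⟩ := ((eventually_eq_zero_of_pow_smul_pow_smul (M := M) p).and
    (Filter.eventually_ge_atTop 1)).exists
  obtain ⟨j, rfl⟩ := Nat.exists_eq_add_of_le' hk1
  obtain ⟨z, hz⟩ := hdiv (j + 1)
  exact hx0 (hz ▸ hk z (by rw [← hz, pow_succ, mul_smul, hx, smul_zero]))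

end Layers

section CoprimeSummand

open Submodule

variable {F R M : Type*} [Field F] [CommRing R] [Algebra F R]
  [AddCommGroup M] [Module F M] [Module R M] [IsScalarTower F R M] [FiniteDimensional F M]
  {σ : R ≃ₐ[F] R} {G : M →ₗ[F] M →ₗ[F] F} {a p : R}

omit [IsScalarTower F R M] [FiniteDimensional F M] in
lemma IsBalanced.apply_eq_zero_of_isCoprime (hbal : IsBalanced σ G) (ha : IsCoprime a (σ a))
    {x y : M} (hx : a • x = 0) (hy : a • y = 0) : G x y = 0 := by
  obtain ⟨r, s, hrs⟩ := ha
  rw [← one_smul R y, ← hrs, add_smul, mul_smul, hy, smul_zero, zero_add, mul_comm, mul_smul,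
    ← hbal, hx, map_zero, LinearMap.zero_apply]

lemma IsBalanced.restrictForm_torsionBy_separatingLeft (hbal : IsBalanced σ G)
    (hG : G.SeparatingLeft) (ha : ∀ x : M, a • a • x = 0 → a • x = 0) :
    (restrictForm G (torsionBy R M a) (torsionBy R M (σ a))).SeparatingLeft := by
  intro x hx
  obtain ⟨z, hz⟩ := hbal.exists_eq_smul hG (x := (x : M)) fun y hy => hx ⟨y, hy⟩
  have := x.2
  rw [mem_torsionBy_iff, hz] at this
  exact Subtype.ext (hz.trans (ha z this))

lemma IsBalanced.restrictForm_torsionBy_separatingRight (hσ : Function.Involutive σ)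
    (hbal : IsBalanced σ G) (hG : G.SeparatingLeft)
    (ha : ∀ x : M, σ a • σ a • x = 0 → σ a • x = 0) :
    (restrictForm G (torsionBy R M a) (torsionBy R M (σ a))).SeparatingRight := by
  intro y hy
  have hflip : G.flip.SeparatingLeft :=
    LinearMap.flip_separatingLeft.2 (LinearMap.BilinForm.Nondegenerate.ofSeparatingLeft hG).2
  have := (hbal.flip hσ).restrictForm_torsionBy_separatingLeft hflip ha
  rw [hσ a] at this
  exact this y hy

lemma IsBalanced.hasSymmSummand_of_torsionBy_ne_bot (hσ : Function.Involutive σ)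
    (hbal : IsBalanced σ G) (hG : G.SeparatingLeft) (hcop : IsCoprime a (σ a))
    (ha : ∀ x : M, a • a • x = 0 → a • x = 0) (hσa : ∀ x : M, σ a • σ a • x = 0 → σ a • x = 0)
    (hne : torsionBy R M a ≠ ⊥) : HasSymmSummand σ G := by
  have hleft := hbal.restrictForm_torsionBy_separatingLeft hG ha
  have hright := hbal.restrictForm_torsionBy_separatingRight hσ hG hσa
  have hcop' : IsCoprime (σ a) (σ (σ a)) := by rw [hσ a]; exact hcop.symm
  have : Nontrivial (torsionBy R M a) := nontrivial_iff_ne_bot.2 hne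
  refine .of_pullback (f := (torsionBy R M a).subtype.coprod (torsionBy R M (σ a)).subtype) ?_
    (.hyperbolic hσ (hbal.pullback _ _) hleft hright)
  rintro ⟨y, z⟩ h
  have hy : y = 0 := hleft y fun z' => by
    simpa [hbal.apply_eq_zero_of_isCoprime hcop' z.2 z'.2] using h (0, z')
  have hz : z = 0 := hbal.restrictForm_torsionBy_separatingLeft hG hσa z fun ⟨y', hy'⟩ => by
    rw [mem_torsionBy_iff, hσ a] at hy'
    simpa [hy] using h (⟨y', hy'⟩, 0)
  exact Prod.ext hy hz

lemma IsBalanced.hasSymmSummand_of_isCoprime (hσ : Function.Involutive σ) (hbal : IsBalanced σ G)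
    (hG : G.SeparatingLeft) (hp : IsCoprime p (σ p)) (hne : torsionBy R M p ≠ ⊥) :
    HasSymmSummand σ G := by
  have : IsNoetherian R M := isNoetherian_of_tower F inferInstance
  obtain ⟨k, ⟨hk, hσk⟩, hk1⟩ :=
    ((eventually_eq_zero_of_pow_smul_pow_smul (M := M) p).and
      (eventually_eq_zero_of_pow_smul_pow_smul (M := M) (σ p))).and
        (Filter.eventually_ge_atTop 1) |>.exists
  rw [← map_pow] at hσk
  refine hbal.hasSymmSummand_of_torsionBy_ne_bot hσ hG (by rw [map_pow]; exact hp.pow) hk hσk ?_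
  exact ne_bot_of_le_ne_bot hne
    (torsionBy_le_torsionBy_of_dvd _ _ (dvd_pow_self p (Nat.one_le_iff_ne_zero.1 hk1)))

end CoprimeSummand

section CyclicModules

open Submodule

variable {F R M N : Type*} [CommRing R] [AddCommGroup M] [Module R M] {p : R} {e : ℕ} {v : M}

lemma smul_eq_zero_of_mem_span_singleton {q : R} {x : M} (hv : q • v = 0) (hx : x ∈ R ∙ v) :
    q • x = 0 := by
  obtain ⟨a, rfl⟩ := mem_span_singleton.1 hx
  rw [smul_comm, hv, smul_zero]

lemma exists_mul_smul_eq_self_of_isCoprime {a b : R} (hab : IsCoprime a b) {x : M}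
    (hx : a • x = 0) : ∃ c, (c * b) • x = x := by
  obtain ⟨d, c, hdc⟩ := hab
  refine ⟨c, ?_⟩
  rw [show c * b = 1 - d * a by linear_combination hdc, sub_smul, one_smul, mul_smul, hx,
    smul_zero, sub_zero]

variable [IsDomain R] [IsPrincipalIdealRing R]

lemma pow_dvd_of_pow_smul_ne_zero (hp : Irreducible p) (hv : p ^ (e + 1) • v = 0)
    (hv0 : p ^ e • v ≠ 0) {a : R} (ha : p • a • v = 0) : p ^ e ∣ a := by
  rcases eq_or_ne a 0 with rfl | ha0
  · exact dvd_zero _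
  obtain ⟨i, a', hna, rfl⟩ := WfDvdMonoid.max_power_factor ha0 hp
  refine dvd_mul_of_dvd_left (pow_dvd_pow p (not_lt.1 fun hi => hv0 ?_)) a'
  obtain ⟨r, s, hrs⟩ := (hp.coprime_iff_not_dvd.2 hna).symm.pow_right (n := e + 1)
  have hpi : p ^ (i + 1) • v = 0 := by
    rw [show p ^ (i + 1) = r * (p * (p ^ i * a')) + p ^ (i + 1) * s * p ^ (e + 1) by
      linear_combination -p ^ (i + 1) * hrs, add_smul, mul_smul r, mul_smul p, ha,
      mul_smul _ (p ^ (e + 1)), hv, smul_zero, smul_zero, add_zero]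
  rw [← Nat.sub_add_cancel hi, pow_add, mul_smul, hpi, smul_zero]

lemma exists_eq_smul_of_mem_span_singleton (hp : Irreducible p) (hv : p ^ (e + 1) • v = 0)
    (hv0 : p ^ e • v ≠ 0) {x : M} (hx : x ∈ R ∙ v) (hpx : p • x = 0) :
    ∃ c : R, x = c • p ^ e • v := by
  obtain ⟨a, rfl⟩ := mem_span_singleton.1 hx
  obtain ⟨c, rfl⟩ := pow_dvd_of_pow_smul_ne_zero hp hv hv0 hpx
  exact ⟨c, by rw [smul_smul, mul_comm]⟩

variable [Field F] [Algebra F R] [Module F M] [IsScalarTower F R M]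
  [AddCommGroup N] [Module F N] [Module R N] [IsScalarTower F R N]
  {σ : R ≃ₐ[F] R} {B : M →ₗ[F] N →ₗ[F] F} {G : M →ₗ[F] M →ₗ[F] F}

lemma IsBalanced.separatingLeft_restrictForm_span_singleton (hp : Irreducible p)
    (hB : IsBalanced σ B) (hv : p ^ (e + 1) • v = 0) {W : Submodule R N} {y : N}
    (hy : y ∈ W) (hvy : B (p ^ e • v) y ≠ 0) : (restrictForm B (R ∙ v) W).SeparatingLeft := by
  have hv0 : p ^ e • v ≠ 0 := fun h => hvy (by rw [h, map_zero, LinearMap.zero_apply])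
  have hpv : p • p ^ e • v = 0 := by rwa [smul_smul, ← pow_succ']
  refine (hB.pullback _ _).separatingLeft_of_pow_smul (p := p) (k := e + 1)
    (fun x => Subtype.ext (smul_eq_zero_of_mem_span_singleton hv x.2)) fun ⟨x, hx⟩ hpx hxB => ?_
  obtain ⟨c, rfl⟩ := exists_eq_smul_of_mem_span_singleton hp hv hv0 hx (congrArg Subtype.val hpx)
  by_cases hc : p ∣ c
  · obtain ⟨d, rfl⟩ := hc
    refine Subtype.ext (show (p * d) • p ^ e • v = 0 from ?_)
    rw [mul_comm, mul_smul, hpv, smul_zero]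
  obtain ⟨r, hrc⟩ := exists_mul_smul_eq_self_of_isCoprime (hp.coprime_iff_not_dvd.2 hc) hpv
  refine absurd ?_ hvy
  rw [← hrc, mul_smul, hB]
  exact hxB ⟨σ r • y, W.smul_mem _ hy⟩

lemma IsBalanced.hasSymmSummand_of_span_singleton (hσ : Function.Involutive σ)
    (hbal : IsBalanced σ G) (hp : Irreducible p) {g : R} (hg : σ p = g * p)
    (hv : p ^ (e + 1) • v = 0) {c c' : R}
    (h : G (c • c' • p ^ e • v) v + G (c • v) (c' • p ^ e • v) ≠ 0) : HasSymmSummand σ G := by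
  have hmem := mem_span_singleton_self (R := R) v
  let Gc : M →ₗ[F] M →ₗ[F] F := pullbackForm G (LinearMap.lsmul R M c) .id
  have hGc : IsBalanced σ Gc := hbal.pullback _ _
  let D := Gc + Gc.flip
  have hD : IsBalanced σ D := fun a x y => by
    simp only [D, LinearMap.add_apply, LinearMap.flip_apply, hGc a, hGc.apply_smul_right hσ a]
  have hDsep : (restrictForm D (R ∙ v) (R ∙ v)).SeparatingLeft :=
    hD.separatingLeft_restrictForm_span_singleton hp hv (smul_mem _ (σ c') hmem) (by rwa [← hD])
  have hGsep : (restrictForm G (R ∙ v) (R ∙ v)).SeparatingLeft := by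
    obtain ⟨a, ha⟩ : ∃ a : R, G (a • p ^ e • v) v ≠ 0 := by
      by_contra! h0
      refine h ?_
      rw [hbal.apply_smul_right hσ, hbal.apply_smul_right hσ, map_pow, hg, mul_pow, smul_smul c,
        h0, zero_add, show (g ^ e * p ^ e) • σ c' • c • v = (g ^ e * σ c' * c) • p ^ e • v by
          simp only [smul_smul]; ring_nf, h0]
    exact hbal.separatingLeft_restrictForm_span_singleton hp hv (smul_mem _ (σ a) hmem)
      (by rwa [← hbal])
  refine ⟨R ∙ v, ?_, hGsep, restrictForm D (R ∙ v) (R ∙ v), hDsep, fun x y => add_comm _ _,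
    hD.pullback _ _⟩
  rw [Ne, span_singleton_eq_bot]
  rintro rfl
  simp at h

end CyclicModules

section UnitarySummand

open Submodule

variable {F R M : Type*} [Field F] [CommRing R] [Algebra F R] [AddCommGroup M] [Module F M]
  [Module R M] {σ : R ≃ₐ[F] R} {G : M →ₗ[F] M →ₗ[F] F} {p t : R} {e : ℕ}

lemma IsBalanced.apply_pow_smul_eq_zero_of_isotropic (hσ : Function.Involutive σ)
    (hbal : IsBalanced σ G) (ht : IsCoprime p (t - σ t))
    (hiso : ∀ (a : R) (v : M), p ^ (e + 1) • v = 0 → G (a • p ^ e • v) v = 0) {x y : M}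
    (hx : p ^ (e + 1) • x = 0) (hy : p ^ (e + 1) • y = 0) : G (p ^ e • x) y = 0 := by
  have hpolar {x y : M} (hx : p ^ (e + 1) • x = 0) (hy : p ^ (e + 1) • y = 0) (a : R) :
      G (a • p ^ e • x) y = -G (a • p ^ e • y) x := by
    have := hiso a (x + y) (by rw [smul_add, hx, hy, add_zero])
    simp only [smul_add, map_add, LinearMap.add_apply, hiso a x hx, hiso a y hy] at this
    linear_combination this
  have hswap (a : R) : G ((a * σ t) • p ^ e • x) y = G ((a * t) • p ^ e • x) y := by
    have hty : p ^ (e + 1) • t • y = 0 := by rw [smul_comm, hy, smul_zero]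
    rw [mul_comm, mul_smul, ← hbal.apply_smul_right hσ, hpolar hx hty, smul_comm (p ^ e),
      ← mul_smul, ← hpolar hx hy]
  obtain ⟨s, hs⟩ := exists_mul_smul_eq_self_of_isCoprime ht
    (show p • p ^ e • x = 0 by rwa [smul_smul, ← pow_succ'])
  rw [← hs, mul_sub, sub_smul, map_sub, LinearMap.sub_apply, hswap, sub_self]

omit [Module F M] in
lemma map_smul_eq_zero_iff_of_dvd (hσ : Function.Involutive σ) (hp : p ∣ σ p) {y : M} :
    σ p • y = 0 ↔ p • y = 0 := by
  constructor <;> intro hy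
  · obtain ⟨c, hc⟩ : σ p ∣ p := by simpa only [hσ p] using map_dvd σ hp
    rw [hc, mul_comm, mul_smul, hy, smul_zero]
  · obtain ⟨c, hc⟩ := hp
    rw [hc, mul_comm, mul_smul, hy, smul_zero]

variable [IsScalarTower F R M] [FiniteDimensional F M]

lemma IsBalanced.exists_layer_ne_zero_of_dvd (hσ : Function.Involutive σ)
    (hbal : IsBalanced σ G) (hG : G.SeparatingLeft) (hp : p ∣ σ p) (hne : torsionBy R M p ≠ ⊥) :
    ∃ e, ∃ u v : M, p ^ (e + 1) • u = 0 ∧ p ^ (e + 1) • v = 0 ∧ G (p ^ e • u) v ≠ 0 := by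
  obtain ⟨x, hx, hx0⟩ := (Submodule.ne_bot_iff _).1 hne
  obtain ⟨e, u, v, hu, hv, huv⟩ := hbal.exists_layer_ne_zero hG hx hx0
  rw [← map_pow, map_smul_eq_zero_iff_of_dvd hσ (map_pow σ p _ ▸ pow_dvd_pow_of_dvd hp _)] at hv
  exact ⟨e, u, v, hu, hv, huv⟩

lemma IsBalanced.hasSymmSummand_of_isCoprime_sub [IsDomain R] [IsPrincipalIdealRing R]
    (hσ : Function.Involutive σ) (hbal : IsBalanced σ G)
    (hG : G.SeparatingLeft) (hp : Irreducible p) (hpσ : p ∣ σ p) (ht : IsCoprime p (t - σ t))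
    (hne : torsionBy R M p ≠ ⊥) : HasSymmSummand σ G := by
  obtain ⟨e, x, y, hx, hy, hxy⟩ := hbal.exists_layer_ne_zero_of_dvd hσ hG hpσ hne
  by_contra hnone
  refine hxy (hbal.apply_pow_smul_eq_zero_of_isotropic hσ ht (fun a v hv => ?_) hx hy)
  have hanti (c c' : R) : G (c • c' • p ^ e • v) v = -G (c • v) (c' • p ^ e • v) := by
    obtain ⟨g, hg⟩ := hpσ
    by_contra h
    exact hnone (hbal.hasSymmSummand_of_span_singleton hσ hp (hg.trans (mul_comm _ _)) hv
      fun h0 => h (eq_neg_of_add_eq_zero_left h0))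
  have hswap (c : R) : G ((c * t) • p ^ e • v) v = G ((c * σ t) • p ^ e • v) v := by
    calc G ((c * t) • p ^ e • v) v = -G (c • v) (t • p ^ e • v) := by rw [mul_smul, hanti]
      _ = -G ((c * σ t) • v) ((1 : R) • p ^ e • v) := by
        rw [hbal.apply_smul_right hσ, smul_smul, mul_comm, one_smul]
      _ = G ((c * σ t) • p ^ e • v) v := by rw [← hanti, one_smul]
  obtain ⟨s, hs⟩ := exists_mul_smul_eq_self_of_isCoprime ht
    (show p • p ^ e • v = 0 by rwa [smul_smul, ← pow_succ'])
  rw [← hs, ← mul_smul, ← mul_assoc, mul_sub, sub_smul, map_sub, LinearMap.sub_apply, hswap,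
    sub_self]

end UnitarySummand

section SocleLayers

open Submodule Module

variable {F R M : Type*} [Field F] [CommRing R] [Algebra F R]
  [AddCommGroup M] [Module F M] [Module R M] [IsScalarTower F R M] {p : R} {e : ℕ}

variable (F M) in
/-- The subspace `p ^ e M ∩ M[p]` of the `p`-socle of a `p`-primary module `M`, cut out in a
general `M`. The quotient of the `e`-th layer by the next one counts the summands
`R ⧸ (p ^ (e + 1))` of `M`. -/
def socleLayer (p : R) (e : ℕ) : Submodule F M :=
  ((torsionBy R M (p ^ (e + 1))).restrictScalars F).map (Algebra.lsmul F F M (p ^ e))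

lemma mem_socleLayer {z : M} :
    z ∈ socleLayer F M p e ↔ ∃ x, p ^ (e + 1) • x = 0 ∧ p ^ e • x = z := Iff.rfl

/-- The pairing `(x, y) ↦ G (p ^ e • x) y` of elements killed by `p ^ (e + 1)`. -/
def layerForm (G : M →ₗ[F] M →ₗ[F] F) (p : R) (e : ℕ) :
    torsionBy R M (p ^ (e + 1)) →ₗ[F] torsionBy R M (p ^ (e + 1)) →ₗ[F] F :=
  pullbackForm G (p ^ e • (torsionBy R M (p ^ (e + 1))).subtype) (Submodule.subtype _)

@[simp]
lemma layerForm_apply (G : M →ₗ[F] M →ₗ[F] F) (x y : torsionBy R M (p ^ (e + 1))) :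
    layerForm G p e x y = G (p ^ e • x) y := rfl

variable [FiniteDimensional F M]

lemma finrank_socleLayer_add (p : R) (e : ℕ) :
    finrank F (socleLayer F M p e) + finrank F (torsionBy R M (p ^ e)) =
      finrank F (torsionBy R M (p ^ (e + 1))) := by
  have h := finrank_map_add_finrank_inf_ker (Algebra.lsmul F F M (p ^ e))
    ((torsionBy R M (p ^ (e + 1))).restrictScalars F)
  have hker : (torsionBy R M (p ^ (e + 1))).restrictScalars F ⊓
      LinearMap.ker (Algebra.lsmul F F M (p ^ e)) = (torsionBy R M (p ^ e)).restrictScalars F :=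
    inf_eq_right.2 (torsionBy_le_torsionBy_of_dvd _ _ (pow_dvd_pow p e.le_succ))
  rwa [hker] at h

lemma primaryMultiplicity_succ (p : R) (e : ℕ) : primaryMultiplicity F M p (e + 1) =
    finrank F (socleLayer F M p e) - finrank F (socleLayer F M p (e + 1)) := by
  have h := finrank_socleLayer_add (F := F) (M := M) p e
  have h' := finrank_socleLayer_add (F := F) (M := M) p (e + 1)
  rw [primaryMultiplicity, Nat.add_sub_cancel]
  omega

variable {σ : R ≃ₐ[F] R} {G : M →ₗ[F] M →ₗ[F] F}

lemma IsBalanced.mem_socleLayer_succ_iff (hσ : Function.Involutive σ) (hbal : IsBalanced σ G)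
    (hG : G.SeparatingLeft) (hp : p ∣ σ p) {z : M} : z ∈ socleLayer F M p (e + 1) ↔
      z ∈ socleLayer F M p e ∧ ∀ y, p ^ (e + 1) • y = 0 → G z y = 0 := by
  have hker {y : M} : σ (p ^ (e + 1)) • y = 0 ↔ p ^ (e + 1) • y = 0 :=
    map_smul_eq_zero_iff_of_dvd hσ (map_pow σ p _ ▸ pow_dvd_pow_of_dvd hp _)
  simp only [mem_socleLayer]
  constructor
  · rintro ⟨x, hx, rfl⟩
    refine ⟨⟨p • x, ?_, ?_⟩, fun y hy => ?_⟩
    · rwa [smul_smul, ← pow_succ]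
    · rw [smul_smul, ← pow_succ]
    · rw [hbal, hker.2 hy, map_zero]
  · rintro ⟨⟨x, hx, rfl⟩, hG0⟩
    obtain ⟨z, hz⟩ := hbal.exists_eq_smul hG fun y hy => hG0 y (hker.1 hy)
    exact ⟨z, by rwa [pow_succ', mul_smul, ← hz, smul_smul, ← pow_succ'], hz.symm⟩

lemma IsBalanced.finrank_range_layerForm (hσ : Function.Involutive σ) (hbal : IsBalanced σ G)
    (hG : G.SeparatingLeft) (hp : p ∣ σ p) :
    (finrank F (LinearMap.range (layerForm G p e)) : ℤ) = primaryMultiplicity F M p (e + 1) := by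
  let ψ : M →ₗ[F] torsionBy R M (p ^ (e + 1)) →ₗ[F] F := pullbackForm G .id (Submodule.subtype _)
  have hrange : LinearMap.range (layerForm G p e) = (socleLayer F M p e).map ψ := by
    ext φ
    exact ⟨fun ⟨x, hx⟩ => ⟨_, ⟨x, x.2, rfl⟩, hx⟩, fun ⟨_, ⟨x, hx, rfl⟩, hφ⟩ => ⟨⟨x, hx⟩, hφ⟩⟩
  have hker : socleLayer F M p e ⊓ LinearMap.ker ψ = socleLayer F M p (e + 1) := by
    ext z
    rw [hbal.mem_socleLayer_succ_iff hσ hG hp, Submodule.mem_inf, LinearMap.mem_ker]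
    exact and_congr_right fun _ => LinearMap.ext_iff.trans Subtype.forall
  have h := finrank_map_add_finrank_inf_ker ψ (socleLayer F M p e)
  rw [hker, ← hrange] at h
  rw [primaryMultiplicity_succ]
  omega

end SocleLayers

section SkewPrimes

open Submodule Module

variable {F R M : Type*} [Field F] [CommRing R] [Algebra F R]
  [AddCommGroup M] [Module F M] [Module R M] [IsScalarTower F R M]
  {σ : R ≃ₐ[F] R} {G : M →ₗ[F] M →ₗ[F] F} {p : R} {e : ℕ}

variable (σ p) in
/-- A prime `p` with residue field `F` such that `σ` acts as `-1` on `(p) ⧸ (p ^ 2)`. In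
`F[T;T⁻¹]` with the inversion these are the primes `T - 1` and `T + 1`. -/
structure IsSkewPrime : Prop where
  irreducible : Irreducible p
  sq_dvd_map_add : p ^ 2 ∣ σ p + p
  exists_dvd_sub_algebraMap : ∀ a : R, ∃ c : F, p ∣ a - algebraMap F R c

namespace IsSkewPrime

lemma dvd_map (hp : IsSkewPrime σ p) : p ∣ σ p :=
  (dvd_add_left dvd_rfl).1 ((dvd_pow_self p two_ne_zero).trans hp.sq_dvd_map_add)

lemma exists_smul_eq (hp : IsSkewPrime σ p) {x : M} (hx : p • x = 0) (a : R) :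
    ∃ c : F, a • x = c • x := by
  obtain ⟨c, b, hb⟩ := hp.exists_dvd_sub_algebraMap a
  refine ⟨c, ?_⟩
  rw [sub_eq_iff_eq_add.1 hb, add_smul, mul_comm, mul_smul, hx, smul_zero, zero_add,
    algebraMap_smul]

lemma map_pow_smul (hp : IsSkewPrime σ p) {x : M} (hx : p ^ (e + 1) • x = 0) :
    σ p ^ e • x = (-1 : F) ^ e • p ^ e • x := by
  obtain ⟨k, hk⟩ := hp.sq_dvd_map_add
  obtain ⟨c, hc⟩ : p ∣ (p * k - 1) ^ e - (-1) ^ e :=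
    (dvd_mul_right p k).trans (by simpa using sub_dvd_pow_sub_pow (p * k - 1) (-1) e)
  have hσ : σ p ^ e = (-1) ^ e * p ^ e + c * p ^ (e + 1) := by
    rw [show σ p = (p * k - 1) * p by linear_combination hk, mul_pow, sub_eq_iff_eq_add.1 hc]
    ring
  rw [hσ, add_smul, mul_smul c, hx, smul_zero, add_zero, mul_smul,
    ← algebraMap_smul R ((-1 : F) ^ e), map_pow, map_neg, map_one]

lemma apply_pow_smul (hp : IsSkewPrime σ p) (hσ : Function.Involutive σ) (hbal : IsBalanced σ G)
    {x : M} (hx : p ^ (e + 1) • x = 0) (y : M) :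
    G x (p ^ e • y) = (-1) ^ e * G (p ^ e • x) y := by
  rw [hbal.apply_smul_right hσ, map_pow, hp.map_pow_smul hx, map_smul, LinearMap.smul_apply,
    smul_eq_mul]

lemma even_primaryMultiplicity [FiniteDimensional F M] (hp : IsSkewPrime σ p) (h2 : (2 : F) ≠ 0)
    (hσ : Function.Involutive σ) (hbal : IsBalanced σ G) (hG : G.SeparatingLeft)
    (hsymm : ∀ x y, G x y = G y x) {m : ℕ} (hm : 2 ≤ m) (heven : Even m) :
    Even (primaryMultiplicity F M p m) := by
  obtain ⟨e, rfl⟩ := Nat.exists_eq_add_of_le' (one_le_two.trans hm)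
  have hodd : Odd e := by rwa [Nat.even_add_one, Nat.not_even_iff_odd] at heven
  rw [← hbal.finrank_range_layerForm hσ hG hp.dvd_map, Int.even_coe_nat]
  refine even_finrank_range_of_skew h2 fun ⟨x, _⟩ ⟨y, hy⟩ => ?_
  rw [layerForm_apply, layerForm_apply, hsymm, hp.apply_pow_smul hσ hbal hy, hodd.neg_one_pow,
    neg_one_mul]

variable [IsDomain R] [IsPrincipalIdealRing R]

lemma exists_eq_smul_of_mem_span_singleton (hp : IsSkewPrime σ p) {v : M}
    (hv : p ^ (e + 1) • v = 0) (hv0 : p ^ e • v ≠ 0) {x : M} (hx : x ∈ R ∙ v) (hpx : p • x = 0) :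
    ∃ c : F, x = c • p ^ e • v := by
  obtain ⟨a, rfl⟩ := _root_.exists_eq_smul_of_mem_span_singleton hp.irreducible hv hv0 hx hpx
  exact hp.exists_smul_eq (by rwa [smul_smul, ← pow_succ']) a

lemma separatingLeft_pullbackForm_coprod (hp : IsSkewPrime σ p) (hbal : IsBalanced σ G) {u w : M}
    (hu : p ^ (e + 1) • u = 0) (hu0 : p ^ e • u ≠ 0) (hw : p ^ (e + 1) • w = 0)
    (hw0 : p ^ e • w ≠ 0)
    (hminor : G (p ^ e • u) u * G (p ^ e • w) w ≠ G (p ^ e • u) w * G (p ^ e • w) u) :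
    (pullbackForm G ((R ∙ u).subtype.coprod (R ∙ w).subtype)
      ((R ∙ u).subtype.coprod (R ∙ w).subtype)).SeparatingLeft := by
  refine (hbal.pullback _ _).separatingLeft_of_pow_smul (p := p) (k := e + 1)
    (fun x => Prod.ext (Subtype.ext (smul_eq_zero_of_mem_span_singleton hu x.1.2))
      (Subtype.ext (smul_eq_zero_of_mem_span_singleton hw x.2.2))) ?_
  rintro ⟨⟨x, hx⟩, y, hy⟩ hpxy hG
  obtain ⟨a, rfl⟩ := hp.exists_eq_smul_of_mem_span_singleton hu hu0 hx
    (congrArg (fun z => (z.1 : M)) hpxy)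
  obtain ⟨b, rfl⟩ := hp.exists_eq_smul_of_mem_span_singleton hw hw0 hy
    (congrArg (fun z => (z.2 : M)) hpxy)
  have h1 := hG (⟨u, mem_span_singleton_self u⟩, 0)
  have h2 := hG (0, ⟨w, mem_span_singleton_self w⟩)
  simp only [pullbackForm_apply, LinearMap.coprod_apply, Submodule.subtype_apply, map_add,
    LinearMap.add_apply, map_smul, LinearMap.smul_apply, smul_eq_mul, map_zero, add_zero,
    zero_add] at h1 h2
  have hdet := sub_ne_zero.2 hminor
  have ha : a = 0 := by
    refine mul_right_cancel₀ hdet ?_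
    linear_combination G (p ^ e • w) w * h1 - G (p ^ e • w) u * h2
  have hb : b = 0 := by
    refine mul_right_cancel₀ hdet ?_
    linear_combination G (p ^ e • u) u * h2 - G (p ^ e • u) w * h1
  refine Prod.ext (Subtype.ext ?_) (Subtype.ext ?_)
  · change a • p ^ e • u = 0
    rw [ha, zero_smul]
  · change b • p ^ e • w = 0
    rw [hb, zero_smul]

lemma hasSymmSummand_of_minor_ne_zero (hp : IsSkewPrime σ p) (hσ : Function.Involutive σ)
    (hbal : IsBalanced σ G) {u w : M} (hu : p ^ (e + 1) • u = 0) (hw : p ^ (e + 1) • w = 0)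
    (huw : G (p ^ e • u) w ≠ 0)
    (hminor : G (p ^ e • u) u * G (p ^ e • w) w ≠ G (p ^ e • u) w * G (p ^ e • w) u) :
    HasSymmSummand σ G := by
  have hwu : G.flip (p ^ e • w) u ≠ 0 := by
    rw [LinearMap.flip_apply, hp.apply_pow_smul hσ hbal hu]
    exact mul_ne_zero (pow_ne_zero _ (neg_ne_zero.2 one_ne_zero)) huw
  have hu0 : p ^ e • u ≠ 0 := fun h => huw (by rw [h, map_zero, LinearMap.zero_apply])
  have hw0 : p ^ e • w ≠ 0 := fun h => hwu (by rw [h, map_zero, LinearMap.zero_apply])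
  have hleft := hbal.separatingLeft_restrictForm_span_singleton hp.irreducible hu
    (mem_span_singleton_self w) huw
  have hright := (hbal.flip hσ).separatingLeft_restrictForm_span_singleton hp.irreducible hw
    (mem_span_singleton_self u) hwu
  have : Nontrivial (R ∙ u) := nontrivial_iff_ne_bot.2 fun h => hu0 (by
    rw [span_singleton_eq_bot.1 h, smul_zero])
  exact .of_pullback (hp.separatingLeft_pullbackForm_coprod hbal hu hu0 hw hw0 hminor)
    (.hyperbolic hσ (hbal.pullback (R ∙ u).subtype (R ∙ w).subtype) hleft hright)

lemma hasSymmSummand [FiniteDimensional F M] (hp : IsSkewPrime σ p) (h2 : (2 : F) ≠ 0)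
    (hσ : Function.Involutive σ) (hbal : IsBalanced σ G) (hG : G.SeparatingLeft)
    (hpar : ∀ m, 2 ≤ m → Even m → Even (primaryMultiplicity F M p m))
    (hne : torsionBy R M p ≠ ⊥) : HasSymmSummand σ G := by
  obtain ⟨e, x, y, hx, hy, hxy⟩ := hbal.exists_layer_ne_zero_of_dvd hσ hG hp.dvd_map hne
  have hlayer : layerForm G p e ≠ 0 := fun h =>
    hxy (LinearMap.congr_fun₂ h ⟨x, hx⟩ ⟨y, hy⟩)
  obtain ⟨⟨u, hu⟩, ⟨w, hw⟩, huw, hminor⟩ | ⟨⟨⟨v, hv⟩, hvv⟩, hrank⟩ :=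
    exists_minor_ne_zero_or_finrank_range_eq_one hlayer
  · exact hp.hasSymmSummand_of_minor_ne_zero hσ hbal hu hw huw hminor
  have heven : Even e := by
    by_contra hodd
    have := hpar (e + 1) (by have := (Nat.not_even_iff_odd.1 hodd).pos; omega)
      (Nat.even_add_one.2 hodd)
    rw [← hbal.finrank_range_layerForm hσ hG hp.dvd_map, hrank] at this
    exact Int.not_even_one this
  obtain ⟨g, hg⟩ := hp.dvd_map
  refine hbal.hasSymmSummand_of_span_singleton hσ hp.irreducible (hg.trans (mul_comm _ _)) hv
    (c := 1) (c' := 1) ?_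
  simp only [one_smul, hp.apply_pow_smul hσ hbal hv, heven.neg_one_pow, one_mul, ← two_mul]
  exact mul_ne_zero h2 hvv

end IsSkewPrime

end SkewPrimes

section SymmetricForms

open Submodule Module

variable {F R M : Type*} [Field F] [CommRing R] [IsDomain R] [IsPrincipalIdealRing R] [Algebra F R]
  [AddCommGroup M] [Module F M] [Module R M] [IsScalarTower F R M] [FiniteDimensional F M]
  {σ : R ≃ₐ[F] R} {G : M →ₗ[F] M →ₗ[F] F} {S : Set R}

lemma exists_irreducible_torsionBy_ne_bot (hR : ¬Module.Finite F R) [Nontrivial M] :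
    ∃ p : R, Irreducible p ∧ torsionBy R M p ≠ ⊥ := by
  obtain ⟨P, hP⟩ := associatedPrimes.nonempty R M
  obtain ⟨hprime, x, hx⟩ := isAssociatedPrime_iff.1 hP
  obtain ⟨p, rfl⟩ := (IsPrincipalIdealRing.principal P).principal
  have mem_iff (a : R) : a • x = 0 ↔ p ∣ a := by
    rw [← mem_bot R, ← mem_colon_singleton, ← hx, ← Ideal.mem_span_singleton]
  have hp0 : p ≠ 0 := by
    rintro rfl
    refine hR (Module.Finite.of_injective ((LinearMap.toSpanSingleton R M x).restrictScalars F) ?_)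
    exact (injective_iff_map_eq_zero _).2 fun a ha => zero_dvd_iff.1 ((mem_iff a).1 ha)
  have hp : Prime p := (Ideal.span_singleton_prime hp0).1 hprime
  refine ⟨p, hp.irreducible, (Submodule.ne_bot_iff _).2 ⟨x, (mem_iff p).2 dvd_rfl, ?_⟩⟩
  rintro rfl
  exact hp.not_isUnit (isUnit_of_dvd_one ((mem_iff 1).1 (smul_zero _)))

lemma IsBalanced.hasSymmSummand (h2 : (2 : F) ≠ 0) (hR : ¬Module.Finite F R)
    (hσ : Function.Involutive σ) (hS : ∀ q ∈ S, IsSkewPrime σ q)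
    (hcover : ∀ p : R, Irreducible p → p ∣ σ p → (∀ t, p ∣ t - σ t) → ∃ q ∈ S, p ∣ q)
    (hbal : IsBalanced σ G) (hG : G.SeparatingLeft)
    (hpar : ∀ q ∈ S, ∀ m, 2 ≤ m → Even m → Even (primaryMultiplicity F M q m)) [Nontrivial M] :
    HasSymmSummand σ G := by
  obtain ⟨p, hp, hne⟩ := exists_irreducible_torsionBy_ne_bot (M := M) hR
  by_cases hpσ : p ∣ σ p
  · by_cases ht : ∀ t, p ∣ t - σ t
    · obtain ⟨q, hq, hpq⟩ := hcover p hp hpσ ht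
      exact (hS q hq).hasSymmSummand h2 hσ hbal hG (hpar q hq)
        (ne_bot_of_le_ne_bot hne (torsionBy_le_torsionBy_of_dvd _ _ hpq))
    · obtain ⟨t, ht⟩ := not_forall.1 ht
      exact hbal.hasSymmSummand_of_isCoprime_sub hσ hG hp hpσ (hp.coprime_iff_not_dvd.2 ht) hne
  · exact hbal.hasSymmSummand_of_isCoprime hσ hG (hp.coprime_iff_not_dvd.2 hpσ) hne

lemma IsBalanced.hasSymmForm (h2 : (2 : F) ≠ 0) (hR : ¬Module.Finite F R)
    (hσ : Function.Involutive σ) (hS : ∀ q ∈ S, IsSkewPrime σ q)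
    (hcover : ∀ p : R, Irreducible p → p ∣ σ p → (∀ t, p ∣ t - σ t) → ∃ q ∈ S, p ∣ q)
    (hbal : IsBalanced σ G) (hG : G.SeparatingLeft)
    (hpar : ∀ q ∈ S, ∀ m, 2 ≤ m → Even m → Even (primaryMultiplicity F M q m)) :
    HasSymmForm F M σ := by
  induction hn : finrank F M using Nat.strong_induction_on generalizing M with
  | _ n ih =>
  rcases subsingleton_or_nontrivial M with hM | hM
  · exact ⟨0, fun x _ => Subsingleton.elim _ _, fun x y => rfl, fun a x y => rfl⟩
  obtain ⟨U, hU0, hU, hUsymm⟩ := hbal.hasSymmSummand h2 hR hσ hS hcover hG hpar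
  obtain ⟨W, hUW, hW⟩ := exists_isCompl_of_separatingLeft hbal hG hU
  refine .of_isCompl hUW hUsymm (ih (finrank F W) ?_ (hbal.pullback _ _) hW ?_ rfl)
  · refine hn ▸ finrank_lt (s := W.restrictScalars F) fun h => hU0 ?_
    exact hUW.disjoint.eq_bot_of_le ((restrictScalars_eq_top_iff F R M).1 h ▸ le_top)
  · intro q hq m hm hmeven
    obtain ⟨H, hH, hHsymm, hHbal⟩ := hUsymm
    refine (Int.even_add.1 ?_).1
      ((hS q hq).even_primaryMultiplicity h2 hσ hHbal hH hHsymm hm hmeven)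
    rw [← primaryMultiplicity_of_isCompl hUW]
    exact hpar q hq m hm hmeven

lemma IsBalanced.hasSymmForm_iff (h2 : (2 : F) ≠ 0) (hR : ¬Module.Finite F R)
    (hσ : Function.Involutive σ) (hS : ∀ q ∈ S, IsSkewPrime σ q)
    (hcover : ∀ p : R, Irreducible p → p ∣ σ p → (∀ t, p ∣ t - σ t) → ∃ q ∈ S, p ∣ q)
    (hbal : IsBalanced σ G) (hG : G.SeparatingLeft) : HasSymmForm F M σ ↔
      ∀ q ∈ S, ∀ m, 2 ≤ m → Even m → Even (primaryMultiplicity F M q m) :=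
  ⟨fun ⟨_, hH, hHsymm, hHbal⟩ q hq _ hm hmeven =>
    (hS q hq).even_primaryMultiplicity h2 hσ hHbal hH hHsymm hm hmeven,
    hbal.hasSymmForm h2 hR hσ hS hcover hG⟩

end SymmetricForms

section LaurentPolynomials

open LaurentPolynomial
open scoped Polynomial

variable {F : Type*} [Field F]

instance isPrincipalIdealRing_laurentPolynomial : IsPrincipalIdealRing F[T;T⁻¹] where
  principal I := by
    obtain ⟨a, ha⟩ := (IsPrincipalIdealRing.principal (I.under F[X])).principal
    refine ⟨algebraMap F[X] F[T;T⁻¹] a, ?_⟩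
    rw [← IsLocalization.map_under (Submonoid.powers (Polynomial.X : F[X])) F[T;T⁻¹] I, ha]
    exact (Ideal.map_span _ _).trans (by rw [Set.image_singleton])

lemma not_finite_laurentPolynomial : ¬Module.Finite F F[T;T⁻¹] := fun _ =>
  Polynomial.not_finite (R := F) <|
    Module.Finite.of_injective (Polynomial.toLaurentAlg (R := F)).toLinearMap
      Polynomial.toLaurent_injective

variable {A : Type*} [Ring A] [Algebra F A]

/-- Evaluation of Laurent polynomials at a unit of a possibly noncommutative algebra. -/
noncomputable def laurentAeval (u : Aˣ) : F[T;T⁻¹] →ₐ[F] A :=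
  AddMonoidAlgebra.lift F A ℤ ((Units.coeHom A).comp (zpowersHom Aˣ u))

@[simp]
lemma laurentAeval_T_one (u : Aˣ) : laurentAeval u (T 1 : F[T;T⁻¹]) = u := by
  simp only [laurentAeval, T, AddMonoidAlgebra.lift_single, MonoidHom.coe_comp,
    Function.comp_apply, Units.coeHom_apply, zpowersHom_apply, toAdd_ofAdd, zpow_one, one_smul]

lemma laurent_algHom_ext {f g : F[T;T⁻¹] →ₐ[F] A} (h : f (T 1) = g (T 1)) : f = g :=
  AddMonoidAlgebra.algHom_ext' (MonoidHom.ext_mint h) (Subsingleton.elim _ _)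

lemma T_one_sub_C_dvd_iff (u : Fˣ) (a : F[T;T⁻¹]) :
    T 1 - C (u : F) ∣ a ↔ laurentAeval u a = 0 := by
  let I : Ideal F[T;T⁻¹] := Ideal.span {T 1 - C (u : F)}
  have hmk : Ideal.Quotient.mkₐ F I = (Algebra.ofId F _).comp (laurentAeval u) := by
    refine laurent_algHom_ext ?_
    rw [AlgHom.comp_apply, laurentAeval_T_one]
    exact Ideal.Quotient.eq.2 (Ideal.mem_span_singleton_self _)
  refine ⟨?_, fun h => ?_⟩
  · rintro ⟨b, rfl⟩
    rw [map_mul, map_sub, laurentAeval_T_one, C_eq_algebraMap, AlgHom.commutes,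
      Algebra.algebraMap_self_apply, sub_self, zero_mul]
  · rw [← Ideal.mem_span_singleton, ← Ideal.Quotient.eq_zero_iff_mem]
    exact (DFunLike.congr_fun hmk a).trans (by rw [AlgHom.comp_apply, h, map_zero])

lemma prime_T_one_sub_C (u : Fˣ) : Prime (T 1 - C (u : F) : F[T;T⁻¹]) := by
  have hspan : Ideal.span {T 1 - C (u : F)} = RingHom.ker (laurentAeval (F := F) u) :=
    Ideal.ext fun a => Ideal.mem_span_singleton.trans (T_one_sub_C_dvd_iff u a)
  have hne : T 1 - C (u : F) ≠ 0 := by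
    rw [← Polynomial.toLaurent_X, ← Polynomial.toLaurent_C, ← map_sub]
    exact Polynomial.toLaurent_ne_zero.2 (Polynomial.X_sub_C_ne_zero _)
  rw [← Ideal.span_singleton_prime hne, hspan]
  exact RingHom.ker_isPrime _

lemma isSkewPrime_T_one_sub_C {l : F} (hl : l ^ 2 = 1) :
    IsSkewPrime (invert (R := F)) (T 1 - C l) := by
  obtain ⟨u, rfl⟩ : IsUnit l := .of_pow_eq_one hl two_ne_zero
  refine ⟨(prime_T_one_sub_C u).irreducible, ⟨T (-1), ?_⟩, fun a => ⟨laurentAeval u a, ?_⟩⟩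
  · have hT : (T 1 * T (-1) : F[T;T⁻¹]) = 1 := by rw [← T_add, add_neg_cancel, T_zero]
    have hC : (C (u : F) : F[T;T⁻¹]) ^ 2 = 1 := by rw [← map_pow, hl, map_one]
    rw [map_sub, invert_T, invert_C]
    linear_combination (2 * C (u : F) - T 1) * hT - T (-1) * hC
  · rw [T_one_sub_C_dvd_iff, map_sub, AlgHom.commutes, Algebra.algebraMap_self_apply, sub_self]

lemma exists_dvd_T_one_sub_C {p : F[T;T⁻¹]} (hp : Prime p) (h : p ∣ T 1 - invert (T 1)) :
    ∃ l : F, l ^ 2 = 1 ∧ p ∣ T 1 - C l := by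
  have hfactor : (T 1 - C 1) * (T 1 - C (-1)) = T 1 * (T 1 - invert (T 1 : F[T;T⁻¹])) := by
    have hT : (T 1 * T (-1) : F[T;T⁻¹]) = 1 := by rw [← T_add, add_neg_cancel, T_zero]
    rw [invert_T, map_neg, map_one]
    linear_combination hT
  rcases hp.dvd_or_dvd (hfactor ▸ h.mul_left (T 1)) with h1 | h1
  · exact ⟨1, one_pow 2, h1⟩
  · exact ⟨-1, neg_one_sq, h1⟩

variable {M : Type*} [AddCommGroup M] [Module F M] [Module F[T;T⁻¹] M]
  [IsScalarTower F F[T;T⁻¹] M] {B : M →ₗ[F] M →ₗ[F] F}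

lemma isBalanced_invert_iff : IsBalanced invert B ↔
    ∀ x y, B ((T 1 : F[T;T⁻¹]) • x) ((T 1 : F[T;T⁻¹]) • y) = B x y := by
  have hTT (n : ℤ) (x : M) : (T n : F[T;T⁻¹]) • (T (-n) : F[T;T⁻¹]) • x = x := by
    rw [smul_smul, ← T_add, add_neg_cancel, T_zero, one_smul]
  refine ⟨fun h x y => ?_, fun h a => ?_⟩
  · rw [h, invert_T, ← hTT (-1) y, neg_neg, hTT]
  have hT (x y : M) : B ((T 1 : F[T;T⁻¹]) • x) y = B x ((T (-1) : F[T;T⁻¹]) • y) := by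
    simpa only [hTT] using h x ((T (-1) : F[T;T⁻¹]) • y)
  have hT' (x y : M) : B ((T (-1) : F[T;T⁻¹]) • x) y = B x ((T 1 : F[T;T⁻¹]) • y) := by
    simpa only [hTT] using (h ((T (-1) : F[T;T⁻¹]) • x) y).symm
  have hmul {a b : F[T;T⁻¹]} (ha : ∀ x y, B (a • x) y = B x (invert a • y))
      (hb : ∀ x y, B (b • x) y = B x (invert b • y)) (x y : M) :
      B ((a * b) • x) y = B x (invert (a * b) • y) := by
    rw [mul_smul, ha, hb, smul_smul, mul_comm a, map_mul]
  induction a using LaurentPolynomial.induction_on with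
  | h_C c =>
    intro x y
    rw [invert_C, C_eq_algebraMap, algebraMap_smul, algebraMap_smul, map_smul, map_smul,
      LinearMap.smul_apply]
  | h_add ha hb =>
    intro x y
    simp only [add_smul, map_add, LinearMap.add_apply, ha, hb]
  | h_C_mul_T n a ih =>
    rw [T_add, ← mul_assoc]
    exact hmul ih fun x y => by rw [hT, invert_T]
  | h_C_mul_T_Z n a ih =>
    rw [T_sub, ← mul_assoc]
    exact hmul ih fun x y => by rw [hT', invert_T, neg_neg]

end LaurentPolynomials

section Isometries

open LaurentPolynomial Module

variable {F V : Type*} [Field F] [AddCommGroup V] [Module F V]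

/-- The number of Jordan blocks of `f` of size `m` with eigenvalue `l`, for `1 ≤ m`. -/
noncomputable def jordanBlockCount (f : End F V) (l : F) (m : ℕ) : ℤ :=
  2 * (finrank F (LinearMap.ker ((f - algebraMap F _ l) ^ m)) : ℤ)
    - finrank F (LinearMap.ker ((f - algebraMap F _ l) ^ (m + 1)))
    - finrank F (LinearMap.ker ((f - algebraMap F _ l) ^ (m - 1)))

lemma isUnit_of_separatingLeft_of_isometry [FiniteDimensional F V] {f : End F V}
    {G : V →ₗ[F] V →ₗ[F] F} (hG : G.SeparatingLeft) (hf : ∀ x y, G (f x) (f y) = G x y) :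
    IsUnit f := by
  rw [LinearMap.isUnit_iff_ker_eq_bot, LinearMap.ker_eq_bot']
  exact fun x hx => hG x fun y => by rw [← hf, hx, map_zero, LinearMap.zero_apply]

lemma hasSymmForm_invert_iff [Module F[T;T⁻¹] V] [IsScalarTower F F[T;T⁻¹] V]
    [FiniteDimensional F V] (h2 : (2 : F) ≠ 0) {G : V →ₗ[F] V →ₗ[F] F}
    (hG : G.SeparatingLeft) (hbal : IsBalanced invert G) :
    HasSymmForm F V (invert (R := F)) ↔ ∀ l : F, l ^ 2 = 1 → ∀ m, 2 ≤ m → Even m →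
      Even (primaryMultiplicity F V (T 1 - C l : F[T;T⁻¹]) m) := by
  rw [hbal.hasSymmForm_iff (S := {q | ∃ l : F, l ^ 2 = 1 ∧ T 1 - C l = q}) h2
    not_finite_laurentPolynomial involutive_invert ?_ ?_ hG]
  · exact ⟨fun h l hl => h _ ⟨l, hl, rfl⟩, fun h q ⟨l, hl, hq⟩ => hq ▸ h l hl⟩
  · rintro q ⟨l, hl, rfl⟩
    exact isSkewPrime_T_one_sub_C hl
  · intro p hp _ ht
    obtain ⟨l, hl, hpl⟩ := exists_dvd_T_one_sub_C hp.prime (ht (T 1))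
    exact ⟨_, ⟨l, hl, rfl⟩, hpl⟩

lemma exists_symm_isometry_iff [FiniteDimensional F V] (h2 : (2 : F) ≠ 0) {f : End F V}
    {G : V →ₗ[F] V →ₗ[F] F} (hG : G.SeparatingLeft) (hf : ∀ x y, G (f x) (f y) = G x y) :
    (∃ H : V →ₗ[F] V →ₗ[F] F, H.SeparatingLeft ∧ (∀ x y, H x y = H y x) ∧
      ∀ x y, H (f x) (f y) = H x y) ↔
      ∀ l : F, l ^ 2 = 1 → ∀ m, 2 ≤ m → Even m → Even (jordanBlockCount f l m) := by
  obtain ⟨u, rfl⟩ := isUnit_of_separatingLeft_of_isometry hG hf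
  let : Module F[T;T⁻¹] V := Module.compHom V (laurentAeval (F := F) u).toRingHom
  have smul_def (a : F[T;T⁻¹]) (x : V) : a • x = laurentAeval u a x := rfl
  have : IsScalarTower F F[T;T⁻¹] V := ⟨fun c a x => by
    rw [smul_def, smul_def, map_smul, LinearMap.smul_apply]⟩
  have isBalanced_iff (B : V →ₗ[F] V →ₗ[F] F) :
      IsBalanced invert B ↔ ∀ x y, B ((u : End F V) x) ((u : End F V) y) = B x y := by
    simp only [isBalanced_invert_iff, smul_def, laurentAeval_T_one]
  have hcount (l : F) (m : ℕ) :
      primaryMultiplicity F V (T 1 - C l : F[T;T⁻¹]) m = jordanBlockCount (u : End F V) l m := by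
    have hker (k : ℕ) : finrank F (Submodule.torsionBy F[T;T⁻¹] V ((T 1 - C l) ^ k)) =
        finrank F (LinearMap.ker (((u : End F V) - algebraMap F _ l) ^ k)) := by
      have heq : (Submodule.torsionBy F[T;T⁻¹] V ((T 1 - C l) ^ k)).restrictScalars F =
          LinearMap.ker (((u : End F V) - algebraMap F _ l) ^ k) := by
        ext x
        rw [Submodule.restrictScalars_mem, Submodule.mem_torsionBy_iff, smul_def, map_pow,
          map_sub, laurentAeval_T_one, C_eq_algebraMap, AlgHom.commutes, LinearMap.mem_ker]
      rw [← heq]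
      rfl
    rw [primaryMultiplicity, jordanBlockCount, hker, hker, hker]
  simp only [← isBalanced_iff, ← hcount]
  exact hasSymmForm_invert_iff h2 hG ((isBalanced_iff G).2 hf)

end Isometries

section SelfAdjointForms

open Module Polynomial

variable {F R M : Type*} [Field F] [CommRing R] [IsDomain R] [IsPrincipalIdealRing R] [Algebra F R]

lemma exists_mul_eq_mk_pow {p : R} (hp : Irreducible p) (n : ℕ)
    {x : R ⧸ Ideal.span {p ^ (n + 1)}} (hx : x ≠ 0) :
    ∃ y, x * y = Ideal.Quotient.mk _ (p ^ n) := by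
  obtain ⟨a, rfl⟩ := Ideal.Quotient.mk_surjective x
  rw [Ne, Ideal.Quotient.eq_zero_iff_mem, Ideal.mem_span_singleton] at hx
  have ha : a ≠ 0 := by rintro rfl; exact hx (dvd_zero _)
  obtain ⟨k, u, hu, rfl⟩ := WfDvdMonoid.max_power_factor ha hp
  have hk : k ≤ n := by
    by_contra! h
    exact hx (dvd_mul_of_dvd_left (pow_dvd_pow p h) u)
  obtain ⟨s, t, hst⟩ : IsCoprime u (p ^ (n + 1)) := (hp.coprime_iff_not_dvd.2 hu).symm.pow_right
  refine ⟨Ideal.Quotient.mk _ (p ^ (n - k) * s), ?_⟩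
  rw [← map_mul, Ideal.Quotient.eq, Ideal.mem_span_singleton]
  refine ⟨-(p ^ n * t), ?_⟩
  have hpow : p ^ k * p ^ (n - k) = p ^ n := by rw [← pow_add, Nat.add_sub_cancel' hk]
  linear_combination u * s * hpow + p ^ n * hst

lemma hasSymmForm_refl_quotient {p : R} (hp : Irreducible p) (n : ℕ) :
    HasSymmForm F (R ⧸ Ideal.span {p ^ n}) (AlgEquiv.refl : R ≃ₐ[F] R) := by
  cases n with
  | zero =>
    have : Subsingleton (R ⧸ Ideal.span {p ^ 0}) :=
      Ideal.Quotient.subsingleton_iff.2 (by rw [pow_zero, Ideal.span_singleton_one])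
    exact ⟨0, fun x _ => Subsingleton.elim _ _, fun x y => rfl, fun a x y => rfl⟩
  | succ n =>
    have hne : Ideal.Quotient.mk (Ideal.span {p ^ (n + 1)}) (p ^ n) ≠ 0 := by
      rw [Ne, Ideal.Quotient.eq_zero_iff_mem, Ideal.mem_span_singleton,
        pow_dvd_pow_iff hp.ne_zero hp.not_isUnit]
      exact (Nat.lt_succ_self n).not_ge
    obtain ⟨φ, hφ⟩ := not_forall.1 fun h => hne ((forall_dual_apply_eq_zero_iff F _).1 h)
    refine ⟨(LinearMap.mul F _).compr₂ φ, fun x hx => ?_, fun x y => ?_, fun a x y => ?_⟩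
    · by_contra hx0
      obtain ⟨y, hy⟩ := exists_mul_eq_mk_pow hp n hx0
      exact hφ (by rw [← hy]; exact hx y)
    · exact congrArg φ (mul_comm x y)
    · exact congrArg φ ((smul_mul_assoc a x y).trans (mul_smul_comm a x y).symm)

variable [AddCommGroup M] [Module F M] [Module R M] [IsScalarTower F R M] [Module.Finite R M]

lemma hasSymmForm_refl_of_isTorsion (hM : IsTorsion R M) :
    HasSymmForm F M (AlgEquiv.refl : R ≃ₐ[F] R) := by
  obtain ⟨ι, _, p, hp, e, ⟨f⟩⟩ := equiv_directSum_of_isTorsion hM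
  classical
  exact (HasSymmForm.pi fun i => hasSymmForm_refl_quotient (hp i) (e i)).congr
    (f.trans (DirectSum.linearEquivFunOnFintype R ι _))

variable {V : Type*} [AddCommGroup V] [Module F V] [FiniteDimensional F V]

lemma exists_separatingLeft_selfAdjoint (f : End F V) :
    ∃ H : V →ₗ[F] V →ₗ[F] F, H.SeparatingLeft ∧ ∀ x y, H (f x) y = H x (f y) := by
  obtain ⟨H, hH, -, hbal⟩ := hasSymmForm_refl_of_isTorsion (F := F)
    (AEval.isTorsion_of_finiteDimensional F V f)
  let e := AEval'.of f
  refine ⟨H.compl₁₂ e.toLinearMap e.toLinearMap, fun x hx => ?_, fun x y => ?_⟩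
  · exact e.map_eq_zero_iff.1 (hH _ fun y => by simpa using hx (e.symm y))
  · calc H (e (f x)) (e y) = H (X • e x) (e y) := by rw [AEval'.X_smul_of]
      _ = H (e x) (X • e y) := hbal X _ _
      _ = H (e x) (e (f y)) := by rw [AEval'.X_smul_of]

end SelfAdjointForms

section Similarity

open Module

variable {F V : Type*} [Field F] [AddCommGroup V] [Module F V] [FiniteDimensional F V]

lemma exists_isometry_iff_exists_mul_mul_eq (f : End F V) :
    (∃ G : V →ₗ[F] V →ₗ[F] F, G.SeparatingLeft ∧ ∀ x y, G (f x) (f y) = G x y) ↔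
      ∃ P : End F V, IsUnit P ∧ f * P * f = P := by
  obtain ⟨H, hH, hfH⟩ := exists_separatingLeft_selfAdjoint f
  have hnd := LinearMap.BilinForm.Nondegenerate.ofSeparatingLeft hH
  constructor
  · rintro ⟨G, hG, hfG⟩
    let P : End F V := (LinearMap.BilinForm.toDual H hnd).symm ∘ₗ G
    have hP (x y : V) : H (P x) y = G x y :=
      LinearMap.BilinForm.apply_toDual_symm_apply (hB := hnd) (G x) y
    refine ⟨P, ?_, LinearMap.ext fun x => ?_⟩
    · rw [LinearMap.isUnit_iff_ker_eq_bot, LinearMap.ker_eq_bot']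
      exact fun x hx => hG x fun y => by rw [← hP, hx, map_zero, LinearMap.zero_apply]
    · refine LinearMap.ker_eq_bot.1 (LinearMap.separatingLeft_iff_ker_eq_bot.1 hH) ?_
      exact LinearMap.ext fun y => by
        rw [End.mul_apply, End.mul_apply, hfH, hP, hP, hfG]
  · rintro ⟨P, hP, hfP⟩
    refine ⟨H ∘ₗ P, fun x hx => ?_, fun x y => ?_⟩
    · exact (map_eq_zero_iff P ((End.isUnit_iff P).1 hP).1).1 (hH _ hx)
    · rw [LinearMap.comp_apply, ← hfH, LinearMap.comp_apply]
      exact congrArg (H · y) (LinearMap.congr_fun hfP x)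

end Similarity

section Matrices

open Module

variable {F : Type*} [Field F] {n : ℕ}

lemma vecMulLinear_eq_toLinAlgEquiv' (A : Matrix (Fin n) (Fin n) F) :
    A.vecMulLinear = Matrix.toLinAlgEquiv' Aᵀ :=
  (Matrix.mulVecLin_transpose A).symm

lemma finrank_ker_vecMulLinear (A : Matrix (Fin n) (Fin n) F) :
    finrank F (LinearMap.ker A.vecMulLinear) = finrank F (LinearMap.ker A.toLin') := by
  have hrange : finrank F (LinearMap.range A.vecMulLinear) =
      finrank F (LinearMap.range A.toLin') := by
    rw [← Matrix.mulVecLin_transpose]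
    exact A.rank_transpose
  have h1 := LinearMap.finrank_range_add_finrank_ker A.vecMulLinear
  have h2 := LinearMap.finrank_range_add_finrank_ker A.toLin'
  omega

lemma jordanBlockCount_vecMulLinear (X : Matrix (Fin n) (Fin n) F) (l : F) (m : ℕ) :
    jordanBlockCount X.vecMulLinear l m = edMultiplicity X l m := by
  have hpow (k : ℕ) : (X.vecMulLinear - algebraMap F (End F (Fin n → F)) l) ^ k =
      ((X - l • 1) ^ k).vecMulLinear := by
    rw [vecMulLinear_eq_toLinAlgEquiv', vecMulLinear_eq_toLinAlgEquiv', transpose_pow,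
      transpose_sub, transpose_smul, transpose_one, map_pow, map_sub, map_smul, map_one,
      Algebra.algebraMap_eq_smul_one]
  have hker (k : ℕ) :
      finrank F (LinearMap.ker ((X.vecMulLinear - algebraMap F (End F (Fin n → F)) l) ^ k)) =
        finrank F (LinearMap.ker ((X - l • 1) ^ k).toLin') := by
    rw [hpow, finrank_ker_vecMulLinear]
  rw [jordanBlockCount, edMultiplicity, hker, hker, hker]

lemma inv_eq_inv_mul_mul_iff {X P : Matrix (Fin n) (Fin n) F} (hX : IsUnit X) (hP : IsUnit P) :
    X⁻¹ = P⁻¹ * X * P ↔ X * P * X = P := by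
  obtain ⟨u, rfl⟩ := hX
  obtain ⟨w, rfl⟩ := hP
  rw [← Matrix.coe_units_inv, ← Matrix.coe_units_inv]
  norm_cast
  rw [mul_assoc, eq_inv_mul_iff_mul_eq, mul_inv_eq_iff_eq_mul, eq_comm]

lemma exists_similar_inv_iff {X : Matrix (Fin n) (Fin n) F} (hX : IsUnit X) :
    (∃ P : Matrix (Fin n) (Fin n) F, IsUnit P ∧ X⁻¹ = P⁻¹ * X * P) ↔
      ∃ P : End F (Fin n → F), IsUnit P ∧ X.vecMulLinear * P * X.vecMulLinear = P := by
  have hmul (P : Matrix (Fin n) (Fin n) F) :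
      X.vecMulLinear * P.vecMulLinear * X.vecMulLinear = (X * P * X).vecMulLinear := by
    simp only [vecMulLinear_eq_toLinAlgEquiv', transpose_mul, map_mul, mul_assoc]
  have hunit (P : Matrix (Fin n) (Fin n) F) :
      IsUnit (P.vecMulLinear : End F (Fin n → F)) ↔ IsUnit P := by
    rw [vecMulLinear_eq_toLinAlgEquiv', MulEquiv.isUnit_map, Matrix.isUnit_transpose]
  have hinj {A B : Matrix (Fin n) (Fin n) F} : A.vecMulLinear = B.vecMulLinear ↔ A = B :=
    Matrix.toLinearMapRight'.injective.eq_iff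
  refine (exists_congr fun P => ?_).trans Matrix.toLinearMapRight'.surjective.exists.symm
  change _ ↔ IsUnit P.vecMulLinear ∧
    X.vecMulLinear * P.vecMulLinear * X.vecMulLinear = P.vecMulLinear
  rw [hunit, hmul, hinj]
  exact and_congr_right fun hP => inv_eq_inv_mul_mul_iff hX hP

end Matrices

section QuadraticForms

open QuadraticMap

variable {F V : Type*} [Field F] [AddCommGroup V] [Module F V]

lemma polar_inv_two_mul_self (h2 : (2 : F) ≠ 0) {H : V →ₗ[F] V →ₗ[F] F}
    (hsymm : ∀ x y, H x y = H y x) (x y : V) : polar (fun v => 2⁻¹ * H v v) x y = H x y := by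
  simp only [polar, map_add, LinearMap.add_apply, hsymm y x]
  field_simp
  ring

lemma exists_isometric_quadratic_iff (h2 : (2 : F) ≠ 0) (f : V →ₗ[F] V) :
    (∃ Q : V → F, (∀ (a : F) v, Q (a • v) = a ^ 2 * Q v) ∧
      (∀ u₁ u₂ v, polar Q (u₁ + u₂) v = polar Q u₁ v + polar Q u₂ v) ∧
      (∀ (a : F) u v, polar Q (a • u) v = a * polar Q u v) ∧
      (∀ u v₁ v₂, polar Q u (v₁ + v₂) = polar Q u v₁ + polar Q u v₂) ∧
      (∀ (a : F) u v, polar Q u (a • v) = a * polar Q u v) ∧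
      (∀ v, (∀ u, polar Q v u = 0) → v = 0) ∧ ∀ v, Q (f v) = Q v) ↔
    ∃ H : V →ₗ[F] V →ₗ[F] F, H.SeparatingLeft ∧ (∀ x y, H x y = H y x) ∧
      ∀ x y, H (f x) (f y) = H x y := by
  constructor
  · rintro ⟨Q, -, hadd, hsmul, hadd', hsmul', hnondeg, hQf⟩
    refine ⟨LinearMap.mk₂ F (polar Q) hadd hsmul hadd' hsmul', hnondeg, polar_comm Q,
      fun x y => ?_⟩
    simp only [LinearMap.mk₂_apply, polar, ← map_add, hQf]
  · rintro ⟨H, hH, hsymm, hHf⟩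
    refine ⟨fun v => 2⁻¹ * H v v, ?_⟩
    simp only [polar_inv_two_mul_self h2 hsymm, map_add, map_smul, LinearMap.add_apply,
      LinearMap.smul_apply, smul_eq_mul, hHf, implies_true, true_and, and_true]
    exact ⟨fun a v => by ring, hH⟩

end QuadraticForms

lemma two_ne_zero_of_odd_card {F : Type*} [Field F] [Fintype F] (hodd : Odd (Fintype.card F)) :
    (2 : F) ≠ 0 :=
  Ring.two_ne_zero fun hchar =>
    Nat.not_even_iff_odd.2 hodd (Nat.even_iff.2 (FiniteField.even_card_of_char_two hchar))

theorem exists_quadratic_form_iff_odd_char_general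
    {F : Type*} [Field F] (h2 : (2 : F) ≠ 0) {n : ℕ}
    (X : Matrix (Fin n) (Fin n) F) (hX : IsUnit X) :
    (∃ Q : (Fin n → F) → F,
        (∀ (a : F) (v : Fin n → F), Q (a • v) = a ^ 2 * Q v) ∧
        (∀ u₁ u₂ v, QuadraticMap.polar Q (u₁ + u₂) v =
            QuadraticMap.polar Q u₁ v + QuadraticMap.polar Q u₂ v) ∧
        (∀ (a : F) (u v : Fin n → F), QuadraticMap.polar Q (a • u) v =
            a * QuadraticMap.polar Q u v) ∧
        (∀ u v₁ v₂, QuadraticMap.polar Q u (v₁ + v₂) =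
            QuadraticMap.polar Q u v₁ + QuadraticMap.polar Q u v₂) ∧
        (∀ (a : F) (u v : Fin n → F), QuadraticMap.polar Q u (a • v) =
            a * QuadraticMap.polar Q u v) ∧
        (∀ v, (∀ u, QuadraticMap.polar Q v u = 0) → v = 0) ∧
        (∀ v, Q (v ᵥ* X) = Q v)) ↔
      ((∃ P : Matrix (Fin n) (Fin n) F, IsUnit P ∧ X⁻¹ = P⁻¹ * X * P) ∧
        ∀ lam : F, (lam = 1 ∨ lam = -1) → ∀ m : ℕ, 2 ≤ m → Even m →
          Even (edMultiplicity X lam m)) := by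
  have hsq (lam : F) : lam = 1 ∨ lam = -1 ↔ lam ^ 2 = 1 := by
    rw [← sq_eq_sq_iff_eq_or_eq_neg, one_pow]
  rw [exists_similar_inv_iff hX, ← exists_isometry_iff_exists_mul_mul_eq]
  simp only [← Matrix.vecMulLinear_apply, exists_isometric_quadratic_iff h2, hsq,
    ← jordanBlockCount_vecMulLinear]
  constructor
  · rintro ⟨H, hH, hsymm, hHX⟩
    exact ⟨⟨H, hH, hHX⟩, (exists_symm_isometry_iff h2 hH hHX).1 ⟨H, hH, hsymm, hHX⟩⟩
  · rintro ⟨⟨G, hG, hGX⟩, hpar⟩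
    exact (exists_symm_isometry_iff h2 hG hGX).2 hpar

/-- Let `F` be a finite field of odd order and `X ∈ GL(n,F)`.  There is a nonsingular
quadratic form `Q` on `F^n` with `X` an isometry of `Q` iff `X` is similar to `X⁻¹` and for
every `λ ∈ {1,−1}` and every even `m ≥ 2` the multiplicity of `(t−λ)^m` as an elementary
divisor of `X` is even. -/
theorem exists_quadratic_form_iff_odd_char
    {F : Type*} [Field F] [Fintype F] (hodd : Odd (Fintype.card F)) {n : ℕ}
    (X : Matrix (Fin n) (Fin n) F) (hX : IsUnit X) :
    (∃ Q : (Fin n → F) → F,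
        (∀ (a : F) (v : Fin n → F), Q (a • v) = a ^ 2 * Q v) ∧
        (∀ u₁ u₂ v, QuadraticMap.polar Q (u₁ + u₂) v =
            QuadraticMap.polar Q u₁ v + QuadraticMap.polar Q u₂ v) ∧
        (∀ (a : F) (u v : Fin n → F), QuadraticMap.polar Q (a • u) v =
            a * QuadraticMap.polar Q u v) ∧
        (∀ u v₁ v₂, QuadraticMap.polar Q u (v₁ + v₂) =
            QuadraticMap.polar Q u v₁ + QuadraticMap.polar Q u v₂) ∧
        (∀ (a : F) (u v : Fin n → F), QuadraticMap.polar Q u (a • v) =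
            a * QuadraticMap.polar Q u v) ∧
        (∀ v, (∀ u, QuadraticMap.polar Q v u = 0) → v = 0) ∧
        (∀ v, Q (v ᵥ* X) = Q v)) ↔
      ((∃ P : Matrix (Fin n) (Fin n) F, IsUnit P ∧ X⁻¹ = P⁻¹ * X * P) ∧
        ∀ lam : F, (lam = 1 ∨ lam = -1) → ∀ m : ℕ, 2 ≤ m → Even m →
          Even (edMultiplicity X lam m)) :=
  exists_quadratic_form_iff_odd_char_general (two_ne_zero_of_odd_card hodd) X hX
end

section
/- Let F be a finite field of even order (characteristic 2) and let X ∈ M_n(F) be invertible. Then there exists a nonsingular quadratic form Q on F^n such that X is an isometry of Q if and only if X is similar to X⁻¹ and, for every odd m ≥ 1, the multiplicity of (t+1)^m as an elementary divisor of X is even. -/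
open Matrix

/-!
Over a perfect field of characteristic 2, every alternating form `β` is the polar form of a
quadratic form, and two quadratic forms with the same polar form differ by the square of a linear
form. If `T` preserves `β`, and `Q` has polar form `β`, then `Q ∘ T + Q` is the square of a linear
form `f` which vanishes on the fixed vectors of `T`; hence `f = g ∘ (T - 1)` for some `g`, and `T`
is an isometry of `Q + g ^ 2`. So the question is when `T` preserves a nondegenerate alternating
form.

If it does, then `T` is conjugate to `T⁻¹`, since `T⁻¹` is the adjoint of `T` for `β` and every `T`
is conjugate to its adjoint. Moreover `(u, v) ↦ β ((T - 1) ^ a u) ((T - 1) ^ a v)` is an alternating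
form with radical `ker ((T - 1) ^ (2 * a))`, whose dimension is therefore congruent to `dim V`
modulo 2; so the multiplicity of `(X - 1) ^ m` is even for odd `m`.

Conversely, split `V` into modules `F[X] / (q)` along the elementary divisors `q` of `T`. These come
in pairs `q`, `q*`, where `q*` is the reciprocal polynomial: the modules of such a pair are dual to
each other, which gives an alternating form on their sum. A divisor `q = q*` that is not paired up
occurs an odd number of times, hence is not an odd power of `X - 1`; then `q` has even degree and
`F[X] / (q)` itself carries an invariant alternating form.
-/

open Module Polynomial

section AlternatingForms

variable {F V : Type*} [Field F] [AddCommGroup V] [Module F V]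

theorem exists_orthogonal_eq_self_of_isAlt [FiniteDimensional F V] {β : LinearMap.BilinForm F V}
    (hβ : β.IsAlt) : ∃ W : Submodule F V, β.orthogonal W = W := by
  obtain ⟨W, hW, hmax⟩ := wellFounded_gt.has_min
    {W : Submodule F V | W ≤ β.orthogonal W} ⟨⊥, bot_le (a := β.orthogonal ⊥)⟩
  refine ⟨W, le_antisymm (fun x hx => ?_) hW⟩
  have hxW : ∀ w ∈ W, β w x = 0 := hx
  have hsup : W ⊔ F ∙ x ≤ β.orthogonal (W ⊔ F ∙ x) := by
    intro u hu v hv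
    obtain ⟨w, hw, y, hy, rfl⟩ := Submodule.mem_sup.mp hu
    obtain ⟨w', hw', y', hy', rfl⟩ := Submodule.mem_sup.mp hv
    obtain ⟨a, rfl⟩ := Submodule.mem_span_singleton.mp hy
    obtain ⟨b, rfl⟩ := Submodule.mem_span_singleton.mp hy'
    have hww : β w' w = 0 := hW hw w' hw'
    have hxw : β x w = 0 := hβ.isRefl _ _ (hxW w hw)
    simp [hww, hxW w' hw', hxw, hβ.self_eq_zero x]
  by_contra hxn
  refine hmax _ hsup (lt_of_le_of_ne le_sup_left fun h => hxn ?_)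
  rw [h]
  exact Submodule.mem_sup_right (Submodule.mem_span_singleton_self x)

theorem even_finrank_add_finrank_ker_of_isAlt [FiniteDimensional F V] {β : LinearMap.BilinForm F V}
    (hβ : β.IsAlt) : Even (finrank F V + finrank F β.ker) := by
  obtain ⟨W, hW⟩ := exists_orthogonal_eq_self_of_isAlt hβ
  have hker : W ⊓ β.ker = β.ker := by
    rw [inf_eq_right, ← LinearMap.BilinForm.orthogonal_top_eq_ker hβ.isRefl, ← hW]
    exact LinearMap.BilinForm.orthogonal_le le_top
  have hdim := β.finrank_add_finrank_orthogonal' W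
  rw [hW, hker] at hdim
  exact ⟨finrank F W, hdim.symm⟩

variable {β : LinearMap.BilinForm F V} {T : V ≃ₗ[F] V}

theorem apply_sub_one_pow_of_isometry (hT : ∀ u v, β (T u) (T v) = β u v) (a : ℕ) (u v : V) :
    β ((((T : End F V) - 1) ^ a) u) v =
      (-1) ^ a * β (((T : End F V) ^ a) u) ((((T : End F V) - 1) ^ a) v) := by
  have hone : ∀ x y, β (((T : End F V) - 1) x) y = -β (T x) (((T : End F V) - 1) y) := by
    intro x y
    simp [hT]
  have hcomm : ∀ k, Commute (T : End F V) (((T : End F V) - 1) ^ k) := fun k =>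
    ((Commute.refl _).sub_right (Commute.one_right _)).pow_right k
  induction a generalizing u v with
  | zero => simp
  | succ a ih =>
    have hswap : T ((((T : End F V) - 1) ^ a) u) = (((T : End F V) - 1) ^ a) (T u) :=
      LinearMap.congr_fun (hcomm a).eq u
    calc β ((((T : End F V) - 1) ^ (a + 1)) u) v
        = -β ((((T : End F V) - 1) ^ a) (T u)) (((T : End F V) - 1) v) := by
          rw [pow_succ', End.mul_apply, hone, hswap]
      _ = (-1) ^ (a + 1) * β (((T : End F V) ^ (a + 1)) u) ((((T : End F V) - 1) ^ (a + 1)) v) := by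
          rw [ih, pow_succ (T : End F V), pow_succ ((T : End F V) - 1), pow_succ (-1 : F)]
          simp

theorem even_finrank_add_finrank_ker_sub_one_pow [FiniteDimensional F V] (hβ : β.IsAlt)
    (hnd : β.Nondegenerate) (hT : ∀ u v, β (T u) (T v) = β u v) (a : ℕ) :
    Even (finrank F V + finrank F (LinearMap.ker (((T : End F V) - 1) ^ (2 * a)))) := by
  let γ : LinearMap.BilinForm F V :=
    β.compl₁₂ (((T : End F V) - 1) ^ a) (((T : End F V) - 1) ^ a)
  have hγ : γ.IsAlt := fun v => hβ _
  have hT_surj : Function.Surjective ((T : End F V) ^ a) := by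
    rw [End.coe_pow]
    exact Function.Surjective.iterate T.surjective a
  have hγT : ∀ u v, γ u v =
      (-1) ^ a * β (((T : End F V) ^ a) u) ((((T : End F V) - 1) ^ (2 * a)) v) := by
    intro u v
    rw [two_mul, pow_add, End.mul_apply]
    exact apply_sub_one_pow_of_isometry hT a u _
  have hker : γ.ker = LinearMap.ker (((T : End F V) - 1) ^ (2 * a)) := by
    ext v
    have hflip : γ v = 0 ↔ ∀ u, γ u v = 0 := by
      simp only [LinearMap.ext_iff, LinearMap.zero_apply, hγ.isRefl.eq_iff (x := v)]
    simp only [LinearMap.mem_ker, hflip, hγT, mul_eq_zero, pow_eq_zero_iff', neg_eq_zero,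
      one_ne_zero, false_and, false_or]
    refine ⟨fun h => hnd.2 _ fun u => ?_, fun h u => by rw [h, map_zero]⟩
    obtain ⟨w, rfl⟩ := hT_surj u
    exact h w
  rw [← hker]
  exact even_finrank_add_finrank_ker_of_isAlt hγ

end AlternatingForms

section QuadraticForms

variable {F V : Type*} [Field F] [AddCommGroup V] [Module F V]

theorem exists_sub_flip_eq_of_isAlt [FiniteDimensional F V] {β : LinearMap.BilinForm F V}
    (hβ : β.IsAlt) : ∃ b : LinearMap.BilinForm F V, b - b.flip = β := by
  let basis := finBasis F V
  let b : LinearMap.BilinForm F V := basis.constr F fun i => basis.constr F fun j =>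
    if i < j then β (basis i) (basis j) else 0
  have hb : ∀ i j, b (basis i) (basis j) = if i < j then β (basis i) (basis j) else 0 := by
    intro i j
    rw [Basis.constr_basis, Basis.constr_basis]
  refine ⟨b, LinearMap.BilinForm.ext_basis basis fun i j => ?_⟩
  rw [LinearMap.sub_apply, LinearMap.sub_apply, LinearMap.BilinForm.flip_apply, hb, hb]
  rcases lt_trichotomy i j with hij | rfl | hij
  · rw [if_pos hij, if_neg hij.not_gt, sub_zero]
  · rw [sub_self, hβ.self_eq_zero]
  · rw [if_neg hij.not_gt, if_pos hij, zero_sub, hβ.neg_eq]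

variable [CharP F 2]

theorem isAlt_polarBilin (Q : QuadraticForm F V) : Q.polarBilin.IsAlt := fun v => by
  rw [QuadraticMap.polarBilin_apply_apply, QuadraticMap.polar_self, two_smul,
    CharTwo.add_self_eq_zero]

theorem exists_polarBilin_eq_of_isAlt [FiniteDimensional F V] {β : LinearMap.BilinForm F V}
    (hβ : β.IsAlt) : ∃ Q : QuadraticForm F V, Q.polarBilin = β := by
  obtain ⟨b, rfl⟩ := exists_sub_flip_eq_of_isAlt hβ
  refine ⟨LinearMap.BilinMap.toQuadraticMap b, ?_⟩
  ext u v
  rw [LinearMap.BilinMap.polarBilin_toQuadraticMap]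
  exact (CharTwo.sub_eq_add (b u v) (b v u)).symm

theorem exists_eq_linMulLin_of_polarBilin_eq_zero [PerfectRing F 2] {Q : QuadraticForm F V}
    (hQ : Q.polarBilin = 0) : ∃ f : V →ₗ[F] F, Q = QuadraticMap.linMulLin f f := by
  have hadd : ∀ u v, Q (u + v) = Q u + Q v := fun u v => by
    rw [QuadraticMap.map_add Q, ← QuadraticMap.polarBilin_apply_apply, hQ, LinearMap.zero_apply,
      LinearMap.zero_apply, add_zero]
  let f : V →ₗ[F] F :=
    { toFun := fun v => (frobeniusEquiv F 2).symm (Q v)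
      map_add' := fun u v => by rw [hadd, map_add]
      map_smul' := fun a v => by
        rw [QuadraticMap.map_smul, smul_eq_mul, map_mul, ← pow_two, frobeniusEquiv_symm_pow,
          RingHom.id_apply, smul_eq_mul] }
  refine ⟨f, QuadraticMap.ext fun v => ?_⟩
  rw [QuadraticMap.linMulLin_apply, ← pow_two]
  exact (frobeniusEquiv_symm_pow_p F 2 _).symm

theorem exists_comp_add_self_eq_linMulLin [PerfectRing F 2] {T : End F V} {Q : QuadraticForm F V}
    (hT : ∀ u v, Q.polarBilin (T u) (T v) = Q.polarBilin u v) :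
    ∃ f : V →ₗ[F] F, Q.comp T + Q = QuadraticMap.linMulLin f f := by
  refine exists_eq_linMulLin_of_polarBilin_eq_zero (LinearMap.ext₂ fun u v => ?_)
  have hcomp : QuadraticMap.polar (Q.comp T) u v = QuadraticMap.polar Q u v := by
    rw [← QuadraticMap.polarBilin_apply_apply Q, ← hT, QuadraticMap.polarBilin_apply_apply,
      QuadraticMap.polar, QuadraticMap.polar, ← map_add]
    rfl
  change QuadraticMap.polar (⇑(Q.comp T) + ⇑Q) u v = 0
  rw [QuadraticMap.polar_add, hcomp, CharTwo.add_self_eq_zero]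

theorem exists_polarBilin_eq_and_isometry [PerfectRing F 2] [FiniteDimensional F V]
    {T : End F V} {β : LinearMap.BilinForm F V} (hβ : β.IsAlt)
    (hT : ∀ u v, β (T u) (T v) = β u v) :
    ∃ Q : QuadraticForm F V, Q.polarBilin = β ∧ ∀ v, Q (T v) = Q v := by
  obtain ⟨Q, rfl⟩ := exists_polarBilin_eq_of_isAlt hβ
  obtain ⟨f, hf⟩ := exists_comp_add_self_eq_linMulLin hT
  have hf_sq : ∀ v, Q (T v) + Q v = f v * f v := fun v => QuadraticMap.congr_fun hf v
  obtain ⟨g, hg⟩ : f ∈ LinearMap.range (T - 1).dualMap := by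
    rw [LinearMap.range_dualMap_eq_dualAnnihilator_ker, Submodule.mem_dualAnnihilator]
    intro v hv
    have hTv : T v = v := sub_eq_zero.mp hv
    rw [← mul_self_eq_zero, ← hf_sq, hTv, CharTwo.add_self_eq_zero]
  have hgT : ∀ v, g (T v) = g v + f v := by
    intro v
    rw [← hg, LinearMap.dualMap_apply, LinearMap.sub_apply, End.one_apply, map_sub]
    ring
  refine ⟨Q + QuadraticMap.linMulLin g g, ?_, fun v => ?_⟩
  · ext u v
    change QuadraticMap.polar (⇑Q + ⇑(QuadraticMap.linMulLin g g)) u v = QuadraticMap.polar Q u v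
    have hg_sq : QuadraticMap.polar (QuadraticMap.linMulLin g g) u v = 0 := by
      simp only [QuadraticMap.polar, QuadraticMap.linMulLin_apply, map_add]
      linear_combination g u * g v * CharTwo.two_eq_zero (R := F)
    rw [QuadraticMap.polar_add, hg_sq, add_zero]
  · rw [_root_.add_apply, _root_.add_apply, QuadraticMap.linMulLin_apply,
      QuadraticMap.linMulLin_apply, hgT]
    linear_combination hf_sq v + (g v * f v + f v * f v - Q v) * CharTwo.two_eq_zero (R := F)

end QuadraticForms

section QuadraticFormsAsFunctions

variable {R V : Type*} [CommRing R] [AddCommGroup V] [Module R V]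

theorem nondegenerate_polarBilin_iff {Q : QuadraticForm R V} :
    Q.polarBilin.Nondegenerate ↔ ∀ v, (∀ u, QuadraticMap.polar Q v u = 0) → v = 0 := by
  have hsymm : Q.polarBilin.IsSymm := ⟨fun u v => QuadraticMap.polar_comm Q u v⟩
  exact LinearMap.IsRefl.nondegenerate_iff_separatingLeft hsymm.isRefl

theorem exists_function_iff_exists_quadraticForm {p : (V → R) → Prop} :
    (∃ Q : V → R, (∀ (a : R) (v : V), Q (a • v) = a ^ 2 * Q v) ∧
        (∀ u₁ u₂ v, QuadraticMap.polar Q (u₁ + u₂) v =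
            QuadraticMap.polar Q u₁ v + QuadraticMap.polar Q u₂ v) ∧
        (∀ (a : R) (u v : V), QuadraticMap.polar Q (a • u) v = a * QuadraticMap.polar Q u v) ∧
        (∀ u v₁ v₂, QuadraticMap.polar Q u (v₁ + v₂) =
            QuadraticMap.polar Q u v₁ + QuadraticMap.polar Q u v₂) ∧
        (∀ (a : R) (u v : V), QuadraticMap.polar Q u (a • v) = a * QuadraticMap.polar Q u v) ∧
        p Q) ↔ ∃ Q : QuadraticForm R V, p Q := by
  constructor
  · rintro ⟨Q, hsmul, hadd_left, hsmul_left, -, -, hp⟩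
    exact ⟨QuadraticMap.ofPolar Q (fun a v => by rw [hsmul, pow_two, smul_eq_mul]) hadd_left
      hsmul_left, hp⟩
  · rintro ⟨Q, hp⟩
    exact ⟨Q, fun a v => by rw [QuadraticMap.map_smul, pow_two, smul_eq_mul],
      QuadraticMap.polar_add_left Q, QuadraticMap.polar_smul_left Q,
      QuadraticMap.polar_add_right Q, QuadraticMap.polar_smul_right Q, hp⟩

end QuadraticFormsAsFunctions

section FrobeniusForms

variable {F : Type*} [Field F]

/-- A linear functional on an algebra is a *Frobenius form* if its kernel contains no nonzero
right ideal, i.e. if the trace form `(a, b) ↦ τ (a * b)` separates points on the left. -/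
def IsFrobeniusForm {A : Type*} [Ring A] [Algebra F A] (τ : A →ₗ[F] F) : Prop :=
  ∀ a, (∀ b, τ (a * b) = 0) → a = 0

theorem IsFrobeniusForm.comp_mulLeft {A : Type*} [Ring A] [Algebra F A] {τ : A →ₗ[F] F}
    (hτ : IsFrobeniusForm τ) {c : A} (hc : IsUnit c) :
    IsFrobeniusForm (τ ∘ₗ LinearMap.mulLeft F c) := fun a ha =>
  hc.mul_right_eq_zero.mp (hτ (c * a) fun b => by
    rw [mul_assoc]
    exact ha b)

theorem IsFrobeniusForm.pi {ι : Type*} [Fintype ι] {A : ι → Type*} [∀ i, Ring (A i)]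
    [∀ i, Algebra F (A i)] {τ : ∀ i, A i →ₗ[F] F} (hτ : ∀ i, IsFrobeniusForm (τ i)) :
    IsFrobeniusForm (∑ i, τ i ∘ₗ LinearMap.proj i : (∀ i, A i) →ₗ[F] F) := by
  classical
  intro a ha
  funext i
  refine hτ i _ fun b => ?_
  have h := ha (Pi.single i b)
  rw [LinearMap.sum_apply, Finset.sum_eq_single i _ (by simp)] at h
  · simpa using h
  · intro j _ hj
    simp [hj]

/-- The coefficient of `X ^ (natDegree f - 1)` in the reduced representative of an element of
`F[X] / (f)`. -/
noncomputable def topCoeff {f : F[X]} (hf : f.Monic) : AdjoinRoot f →ₗ[F] F :=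
  lcoeff F (f.natDegree - 1) ∘ₗ AdjoinRoot.modByMonicHom hf

theorem topCoeff_mk_of_natDegree_lt {f : F[X]} (hf : f.Monic) {p : F[X]}
    (hp : p.natDegree < f.natDegree) :
    topCoeff hf (AdjoinRoot.mk f p) = p.coeff (f.natDegree - 1) := by
  rw [topCoeff, LinearMap.comp_apply, AdjoinRoot.modByMonicHom_mk, lcoeff_apply,
    (modByMonic_eq_self_iff hf).mpr (degree_lt_degree hp)]

theorem isFrobeniusForm_topCoeff {f : F[X]} (hf : f.Monic) : IsFrobeniusForm (topCoeff hf) := by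
  intro a ha
  by_contra ha0
  obtain ⟨p, rfl⟩ := AdjoinRoot.mk_surjective a
  rw [← AdjoinRoot.mk_leftInverse hf (AdjoinRoot.mk f p), AdjoinRoot.modByMonicHom_mk] at ha ha0
  set r := p %ₘ f
  have hr : r ≠ 0 := fun hr => ha0 (by rw [hr, map_zero])
  have hdeg : r.natDegree < f.natDegree := natDegree_lt_natDegree hr (degree_modByMonic_lt p hf)
  have hshift := ha (AdjoinRoot.mk f (X ^ (f.natDegree - 1 - r.natDegree)))
  rw [← map_mul, topCoeff_mk_of_natDegree_lt hf, coeff_mul_X_pow',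
    if_pos (Nat.sub_le _ _), Nat.sub_sub_self (Nat.le_sub_one_of_lt hdeg)] at hshift
  · exact hr (leadingCoeff_eq_zero.mp hshift)
  · rw [natDegree_mul_X_pow _ hr]
    omega

end FrobeniusForms

section PrimaryDecomposition

universe u v

/-- A primary cyclic decomposition of the `F[X]`-module defined by `T`: an isomorphism of `V` with
a product of algebras `F[X] / (p i ^ e i)`, the `p i` monic irreducible, that turns `T` into
multiplication by the class of `X`. -/
structure PrimaryDecomposition {F : Type u} {V : Type v} [Field F] [AddCommGroup V] [Module F V]
    (T : End F V) where
  ι : Type u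
  [fintype : Fintype ι]
  p : ι → F[X]
  e : ι → ℕ
  irreducible : ∀ i, Irreducible (p i)
  monic : ∀ i, (p i).Monic
  equiv : V ≃ₗ[F] ∀ i, AdjoinRoot (p i ^ e i)
  equiv_apply : ∀ v, equiv (T v) = (fun i => AdjoinRoot.root (p i ^ e i)) * equiv v

attribute [instance] PrimaryDecomposition.fintype

variable {F : Type u} {V : Type v} [Field F] [AddCommGroup V] [Module F V]

theorem nonempty_primaryDecomposition [FiniteDimensional F V] (T : End F V) :
    Nonempty (PrimaryDecomposition T) := by
  classical
  obtain ⟨ι, hι, q, hq, e, ⟨ψ⟩⟩ := Module.equiv_directSum_of_isTorsion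
    (Module.AEval.isTorsion_of_finiteDimensional F V T)
  have hspan : ∀ i, Submodule.span F[X] {q i ^ e i} = Ideal.span {normalize (q i) ^ e i} :=
    fun i => Ideal.span_singleton_eq_span_singleton.mpr (normalize_associated (q i)).pow_pow.symm
  let χ : Module.AEval F V T ≃ₗ[F[X]] ∀ i, F[X] ⧸ Ideal.span {normalize (q i) ^ e i} :=
    ψ.trans ((DirectSum.linearEquivFunOnFintype F[X] ι _).trans
      (LinearEquiv.piCongrRight fun i => Submodule.quotEquivOfEq _ _ (hspan i)))
  let φ : V ≃ₗ[F] ∀ i, F[X] ⧸ Ideal.span {normalize (q i) ^ e i} :=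
    (Module.AEval.of F V T).trans (χ.restrictScalars F)
  have hφ : ∀ v, φ (T v) = (X : F[X]) • φ v := fun v => by
    change χ (Module.AEval.of F V T (T • v)) = (X : F[X]) • χ (Module.AEval.of F V T v)
    rw [← Module.AEval.X_smul_of, map_smul]
  exact ⟨ι, fun i => normalize (q i), e,
    fun i => (normalize_associated (q i)).irreducible_iff.mpr (hq i),
    fun i => monic_normalize (hq i).ne_zero, φ, hφ⟩

namespace PrimaryDecomposition

variable {T : End F V} (D : PrimaryDecomposition T)

theorem equiv_aeval_apply (g : F[X]) (v : V) (i : D.ι) :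
    D.equiv (aeval T g v) i = AdjoinRoot.mk _ g * D.equiv v i := by
  induction g using Polynomial.induction_on generalizing v with
  | C a => simp [AdjoinRoot.mk_C, Algebra.smul_def]
  | add p q hp hq => simp [hp, hq, add_mul]
  | monomial n a h =>
    calc D.equiv (aeval T (C a * X ^ (n + 1)) v) i
        = D.equiv (aeval T (C a * X ^ n) (T v)) i := by
          rw [pow_succ, ← mul_assoc, map_mul, End.mul_apply, aeval_X]
      _ = AdjoinRoot.mk _ (C a * X ^ n) * (AdjoinRoot.root _ * D.equiv v i) := by
          rw [h, D.equiv_apply, Pi.mul_apply]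
      _ = AdjoinRoot.mk _ (C a * X ^ (n + 1)) * D.equiv v i := by
          rw [← mul_assoc, ← AdjoinRoot.mk_X, ← map_mul, mul_assoc, ← pow_succ]

end PrimaryDecomposition

theorem exists_nondegenerate_isSelfAdjoint [FiniteDimensional F V] (T : End F V) :
    ∃ γ : LinearMap.BilinForm F V, γ.Nondegenerate ∧ ∀ u v, γ (T u) v = γ u (T v) := by
  obtain ⟨D⟩ := nonempty_primaryDecomposition T
  obtain ⟨τ, hτ⟩ : ∃ τ : (∀ i, AdjoinRoot (D.p i ^ D.e i)) →ₗ[F] F, IsFrobeniusForm τ :=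
    ⟨_, IsFrobeniusForm.pi fun i => isFrobeniusForm_topCoeff ((D.monic i).pow (D.e i))⟩
  let γ : LinearMap.BilinForm F V :=
    ((LinearMap.mul F (∀ i, AdjoinRoot (D.p i ^ D.e i))).compr₂ τ).compl₁₂ D.equiv D.equiv
  have hγ : ∀ u v, γ u v = τ (D.equiv u * D.equiv v) := fun _ _ => rfl
  have hsymm : γ.IsSymm := ⟨fun u v => by simp only [hγ, mul_comm]⟩
  refine ⟨γ, (LinearMap.IsRefl.nondegenerate_iff_separatingLeft hsymm.isRefl).mpr fun u hu => ?_,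
    fun u v => by rw [hγ, hγ, D.equiv_apply, D.equiv_apply, mul_left_comm, mul_assoc]⟩
  refine D.equiv.map_eq_zero_iff.mp (hτ _ fun b => ?_)
  rw [← D.equiv.apply_symm_apply b, ← hγ, hu]

theorem isConj_inv_of_isometry [FiniteDimensional F V] {β : LinearMap.BilinForm F V}
    (hβ : β.Nondegenerate) {T : V ≃ₗ[F] V} (hT : ∀ u v, β (T u) (T v) = β u v) :
    IsConj T T⁻¹ := by
  obtain ⟨γ, hγ, hTγ⟩ := exists_nondegenerate_isSelfAdjoint (T : End F V)
  let c : V ≃ₗ[F] V := (β.toDual hβ).trans (γ.toDual hγ).symm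
  have hc : ∀ u v, γ (c u) v = β u v := fun u v =>
    LinearMap.BilinForm.apply_toDual_symm_apply (hB := hγ) (β.toDual hβ u) v
  have hTcT : ∀ u, T (c (T u)) = c u := by
    refine fun u => sub_eq_zero.mp (hγ.1 _ fun v => ?_)
    rw [map_sub, LinearMap.sub_apply, hc, ← hT u v, ← hc (T u) (T v), sub_eq_zero]
    exact hTγ _ v
  refine isConj_iff.mpr ⟨c, mul_inv_eq_iff_eq_mul.mpr (eq_inv_mul_of_mul_eq ?_)⟩
  exact LinearEquiv.ext hTcT

end PrimaryDecomposition

section ElementaryDivisors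

section AdjoinRoot

variable {F : Type*} [Field F]

theorem finrank_adjoinRoot {f : F[X]} (hf : f ≠ 0) : finrank F (AdjoinRoot f) = f.natDegree := by
  rw [(AdjoinRoot.powerBasis hf).finrank, AdjoinRoot.powerBasis_dim]

theorem finrank_ker_mulLeft_mk {f g d : F[X]} (hf : f.Monic)
    (hd : Ideal.span {f, g} = Ideal.span {d}) :
    finrank F (LinearMap.ker (LinearMap.mulLeft F (AdjoinRoot.mk f g))) = d.natDegree := by
  have hmem : ∀ h, d ∣ h ↔ ∃ a b, a * f + b * g = h := fun h => by
    rw [← Ideal.mem_span_singleton, ← hd, Ideal.mem_span_pair]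
  have hdf : d ∣ f := (hmem f).mpr ⟨1, 0, by ring⟩
  have := hf.finite_adjoinRoot
  let π : AdjoinRoot f →ₗ[F] AdjoinRoot d := (AdjoinRoot.algHomOfDvd F f d hdf).toLinearMap
  have hπ : ∀ h, π (AdjoinRoot.mk f h) = AdjoinRoot.mk d h := fun h => by
    change AdjoinRoot.algHomOfDvd F f d hdf (AdjoinRoot.mk f h) = _
    rw [← AdjoinRoot.aeval_eq, ← aeval_algHom_apply, AdjoinRoot.algHomOfDvd_root,
      AdjoinRoot.aeval_eq]
  have hπ_surj : Function.Surjective π := fun y => by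
    obtain ⟨h, rfl⟩ := AdjoinRoot.mk_surjective y
    exact ⟨_, hπ h⟩
  have hker : LinearMap.range (LinearMap.mulLeft F (AdjoinRoot.mk f g)) = LinearMap.ker π := by
    ext x
    obtain ⟨h, rfl⟩ := AdjoinRoot.mk_surjective x
    rw [LinearMap.mem_ker, hπ, AdjoinRoot.mk_eq_zero, hmem, LinearMap.mem_range]
    constructor
    · rintro ⟨y, hy⟩
      obtain ⟨b, rfl⟩ := AdjoinRoot.mk_surjective y
      rw [LinearMap.mulLeft_apply, ← map_mul, AdjoinRoot.mk_eq_mk] at hy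
      obtain ⟨c, hc⟩ := hy
      exact ⟨-c, b, by linear_combination hc⟩
    · rintro ⟨a, b, rfl⟩
      exact ⟨AdjoinRoot.mk f b, by simp [mul_comm]⟩
  have hdim := LinearMap.finrank_range_add_finrank_ker
    (LinearMap.mulLeft F (AdjoinRoot.mk f g))
  have hdimπ := LinearMap.finrank_range_add_finrank_ker π
  rw [LinearMap.range_eq_top.mpr hπ_surj, finrank_top,
    finrank_adjoinRoot (ne_zero_of_dvd_ne_zero hf.ne_zero hdf)] at hdimπ
  rw [hker] at hdim
  omega

theorem finrank_ker_mulLeft_mk_pow_pow {p q : F[X]} [Decidable (p = q)] (hp : p.Monic)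
    (hq : q.Monic) (hp_irr : Irreducible p) (hq_irr : Irreducible q) (e m : ℕ) :
    finrank F (LinearMap.ker (LinearMap.mulLeft F (AdjoinRoot.mk (p ^ e) (q ^ m)))) =
      if p = q then min e m * q.natDegree else 0 := by
  split_ifs with hpq
  · subst hpq
    rw [finrank_ker_mulLeft_mk (hp.pow e) (d := p ^ min e m), natDegree_pow]
    rw [Ideal.span_insert]
    rcases le_total e m with hem | hem
    · rw [min_eq_left hem, sup_eq_left, Ideal.span_singleton_le_span_singleton]
      exact pow_dvd_pow p hem
    · rw [min_eq_right hem, sup_eq_right, Ideal.span_singleton_le_span_singleton]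
      exact pow_dvd_pow p hem
  · have hcop : IsCoprime (p ^ e) (q ^ m) := by
      refine IsCoprime.pow (hp_irr.coprime_iff_not_dvd.mpr fun hdvd => hpq ?_)
      exact eq_of_monic_of_associated hp hq (hp_irr.associated_of_dvd hq_irr hdvd)
    rw [finrank_ker_mulLeft_mk (hp.pow e) (d := 1), natDegree_one]
    rw [Ideal.span_singleton_one, Ideal.eq_top_iff_one, Ideal.mem_span_pair]
    exact hcop

theorem pow_eq_pow_iff_of_monic_of_irreducible {p q : F[X]} (hp : p.Monic) (hq : q.Monic)
    (hp_irr : Irreducible p) (hq_irr : Irreducible q) {e m : ℕ} (hm : 1 ≤ m) :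
    p ^ e = q ^ m ↔ p = q ∧ e = m := by
  refine ⟨fun h => ?_, by rintro ⟨rfl, rfl⟩; rfl⟩
  have hqp : q ∣ p := hq_irr.prime.dvd_of_dvd_pow (h ▸ dvd_pow_self q (by omega))
  obtain rfl := eq_of_monic_of_associated hq hp (hq_irr.associated_of_dvd hp_irr hqp)
  exact ⟨rfl, pow_injective_of_not_isUnit hq_irr.not_isUnit hq.ne_zero h⟩

end AdjoinRoot

variable {F V : Type*} [Field F] [AddCommGroup V] [Module F V]

/-- The second difference `2 d m - d (m + 1) - d (m - 1)` of `d k = dim ker (q(T) ^ k)`. For `q`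
irreducible and `1 ≤ m` this is `deg q` times the multiplicity of `q ^ m` as an elementary divisor
of `T`. -/
noncomputable def divisorWeight (T : End F V) (q : F[X]) (m : ℕ) : ℤ :=
  2 * (finrank F (LinearMap.ker (aeval T q ^ m)) : ℤ)
    - (finrank F (LinearMap.ker (aeval T q ^ (m + 1))) : ℤ)
    - (finrank F (LinearMap.ker (aeval T q ^ (m - 1))) : ℤ)

namespace PrimaryDecomposition

variable {T : End F V} (D : PrimaryDecomposition T)

/-- The multiset of elementary divisors of `T`, as read off a primary decomposition. -/
noncomputable def divisors : Multiset F[X] :=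
  Finset.univ.val.map fun i => D.p i ^ D.e i

theorem finrank_ker_aeval (g : F[X]) : finrank F (LinearMap.ker (aeval T g)) =
    ∑ i, finrank F (LinearMap.ker (LinearMap.mulLeft F (AdjoinRoot.mk (D.p i ^ D.e i) g))) := by
  have := fun i => ((D.monic i).pow (D.e i)).finite_adjoinRoot
  have hmem : ∀ v, v ∈ LinearMap.ker (aeval T g) ↔
      ∀ i, D.equiv v i ∈ LinearMap.ker (LinearMap.mulLeft F (AdjoinRoot.mk (D.p i ^ D.e i) g)) := by
    intro v
    simp only [LinearMap.mem_ker, LinearMap.mulLeft_apply, ← D.equiv_aeval_apply]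
    rw [← D.equiv.map_eq_zero_iff, funext_iff]
    rfl
  rw [← finrank_pi_fintype F]
  exact LinearEquiv.finrank_eq
    { toFun := fun v i => ⟨D.equiv v i, (hmem v).mp v.2 i⟩
      invFun := fun w => ⟨D.equiv.symm fun i => w i, (hmem _).mpr fun i => by
        rw [LinearEquiv.apply_symm_apply]
        exact (w i).2⟩
      map_add' := fun u v => funext fun i => Subtype.ext (by simp)
      map_smul' := fun a v => funext fun i => Subtype.ext (by simp)
      left_inv := fun v => Subtype.ext (D.equiv.symm_apply_apply _)
      right_inv := fun w => funext fun i => Subtype.ext (by simp) }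

theorem finrank_ker_aeval_pow [DecidableEq F[X]] {q : F[X]} (hq : q.Monic) (hq_irr : Irreducible q)
    (m : ℕ) : finrank F (LinearMap.ker (aeval T q ^ m)) =
      ∑ i, if D.p i = q then min (D.e i) m * q.natDegree else 0 := by
  rw [← map_pow, D.finrank_ker_aeval]
  exact Finset.sum_congr rfl fun i _ =>
    finrank_ker_mulLeft_mk_pow_pow (D.monic i) hq (D.irreducible i) hq_irr _ _

theorem divisorWeight_eq [DecidableEq F[X]] {q : F[X]} (hq : q.Monic) (hq_irr : Irreducible q)
    {m : ℕ} (hm : 1 ≤ m) : divisorWeight T q m = q.natDegree * D.divisors.count (q ^ m) := by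
  have hfactor : ∀ i, (if q ^ m = D.p i ^ D.e i then (q.natDegree : ℤ) else 0) =
      2 * (if D.p i = q then min (D.e i) m * q.natDegree else 0 : ℕ)
        - (if D.p i = q then min (D.e i) (m + 1) * q.natDegree else 0 : ℕ)
        - (if D.p i = q then min (D.e i) (m - 1) * q.natDegree else 0 : ℕ) := by
    intro i
    simp only [eq_comm (a := q ^ m), pow_eq_pow_iff_of_monic_of_irreducible (D.monic i) hq
      (D.irreducible i) hq_irr hm]
    by_cases hpq : D.p i = q
    · rcases lt_trichotomy (D.e i) m with hem | hem | hem
      · simp only [hpq, hem.ne, and_false, if_false, if_true, min_eq_left hem.le,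
          min_eq_left (Nat.le_succ_of_le hem.le), min_eq_left (Nat.le_sub_one_of_lt hem)]
        ring
      · simp only [hpq, hem, and_self, if_true, min_self, min_eq_left (Nat.le_succ m),
          min_eq_right (Nat.sub_le m 1)]
        push_cast [hm]
        ring
      · simp only [hpq, hem.ne', and_false, if_false, if_true, min_eq_right hem.le,
          min_eq_right (Nat.succ_le_of_lt hem), min_eq_right ((Nat.sub_le m 1).trans hem.le)]
        push_cast [hm]
        ring
    · simp [hpq]
  have hcount : (q.natDegree * D.divisors.count (q ^ m) : ℤ) =
      ∑ i, if q ^ m = D.p i ^ D.e i then (q.natDegree : ℤ) else 0 := by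
    rw [divisors, Multiset.count_map, ← Finset.filter_val, Finset.card_val, ← Finset.sum_filter,
      Finset.sum_const, nsmul_eq_mul, mul_comm]
  rw [hcount, Finset.sum_congr rfl fun i _ => hfactor i, divisorWeight]
  simp only [D.finrank_ker_aeval_pow hq hq_irr, Finset.sum_sub_distrib, ← Finset.mul_sum,
    Nat.cast_sum]

end PrimaryDecomposition

end ElementaryDivisors

section Reciprocal

variable {F : Type*} [Field F] {f g : F[X]}

/-- The reciprocal polynomial `X ^ deg f * f (1 / X)`, divided by `f (0)` so as to be monic. It is
the polynomial whose roots are the inverses of those of `f`; it vanishes if `f (0) = 0`. -/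
noncomputable def monicReciprocal (f : F[X]) : F[X] :=
  C (f.coeff 0)⁻¹ * f.reverse

theorem natDegree_reverse_of_coeff_zero_ne_zero (h0 : f.coeff 0 ≠ 0) :
    f.reverse.natDegree = f.natDegree := by
  rw [reverse_natDegree, natTrailingDegree_eq_zero.mpr (Or.inr h0), Nat.sub_zero]

theorem natDegree_monicReciprocal (h0 : f.coeff 0 ≠ 0) :
    (monicReciprocal f).natDegree = f.natDegree := by
  rw [monicReciprocal, natDegree_C_mul (inv_ne_zero h0),
    natDegree_reverse_of_coeff_zero_ne_zero h0]

theorem monic_monicReciprocal (h0 : f.coeff 0 ≠ 0) : (monicReciprocal f).Monic := by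
  rw [Monic, monicReciprocal, leadingCoeff_mul, leadingCoeff_C, reverse_leadingCoeff,
    trailingCoeff, natTrailingDegree_eq_zero.mpr (Or.inr h0), inv_mul_cancel₀ h0]

theorem coeff_zero_monicReciprocal (hf : f.Monic) :
    (monicReciprocal f).coeff 0 = (f.coeff 0)⁻¹ := by
  rw [monicReciprocal, coeff_C_mul, coeff_zero_reverse, hf, mul_one]

theorem monicReciprocal_one : monicReciprocal (1 : F[X]) = 1 := by
  rw [monicReciprocal, coeff_one_zero, inv_one, C_1, one_mul, ← C_1, reverse_C]

theorem monicReciprocal_mul (f g : F[X]) :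
    monicReciprocal (f * g) = monicReciprocal f * monicReciprocal g := by
  rw [monicReciprocal, monicReciprocal, monicReciprocal, reverse_mul_of_domain, mul_coeff_zero,
    mul_inv, C_mul]
  ring

theorem monicReciprocal_pow (f : F[X]) (k : ℕ) :
    monicReciprocal (f ^ k) = monicReciprocal f ^ k := by
  induction k with
  | zero => rw [pow_zero, pow_zero, monicReciprocal_one]
  | succ k ih => rw [pow_succ, monicReciprocal_mul, ih, pow_succ]

theorem monicReciprocal_monicReciprocal (hf : f.Monic) (h0 : f.coeff 0 ≠ 0) :
    monicReciprocal (monicReciprocal f) = f := by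
  have hrev : f.reverse.reverse = f := by
    rw [reverse, natDegree_reverse_of_coeff_zero_ne_zero h0, reverse, reflect_reflect]
  rw [monicReciprocal, coeff_zero_monicReciprocal hf, inv_inv, monicReciprocal,
    reverse_mul_of_domain, reverse_C, hrev, ← mul_assoc, ← C_mul, mul_inv_cancel₀ h0, C_1, one_mul]

theorem irreducible_monicReciprocal (hf : f.Monic) (hf_irr : Irreducible f)
    (h0 : f.coeff 0 ≠ 0) : Irreducible (monicReciprocal f) := by
  refine (irreducible_of_monic (monic_monicReciprocal h0) fun h => ?_).mpr fun a b ha hb hab => ?_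
  · have hdeg := natDegree_monicReciprocal h0
    rw [h, natDegree_one] at hdeg
    exact hf_irr.ne_one (hf.natDegree_eq_zero.mp hdeg.symm)
  · have hab0 : a.coeff 0 * b.coeff 0 ≠ 0 := by
      rw [← mul_coeff_zero, hab, coeff_zero_monicReciprocal hf]
      exact inv_ne_zero h0
    have ha0 := left_ne_zero_of_mul hab0
    have hb0 := right_ne_zero_of_mul hab0
    have hfac : f = monicReciprocal a * monicReciprocal b := by
      rw [← monicReciprocal_mul, hab, monicReciprocal_monicReciprocal hf h0]
    refine (hf_irr.isUnit_or_isUnit hfac).imp (fun h => ?_) (fun h => ?_)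
    · rw [← monicReciprocal_monicReciprocal ha ha0, (monic_monicReciprocal ha0).eq_one_of_isUnit h,
        monicReciprocal_one]
    · rw [← monicReciprocal_monicReciprocal hb hb0, (monic_monicReciprocal hb0).eq_one_of_isUnit h,
        monicReciprocal_one]

theorem pow_mul_aeval_reverse {A : Type*} [Ring A] [Algebra F A] {t s : A} (hts : t * s = 1)
    (f : F[X]) : t ^ f.natDegree * aeval s f.reverse = aeval t f := by
  rw [aeval_eq_sum_range' (Nat.lt_succ_of_le f.reverse_natDegree_le) s, aeval_eq_sum_range,
    Finset.mul_sum, ← Finset.sum_range_reflect]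
  refine Finset.sum_congr rfl fun i hi => ?_
  obtain ⟨j, hj⟩ := Nat.exists_eq_add_of_le (Nat.lt_succ_iff.mp (Finset.mem_range.mp hi))
  have hpow : t ^ f.natDegree * s ^ j = t ^ i := by
    rw [hj, pow_add, mul_assoc, pow_mul_pow_eq_one j hts, mul_one]
  have hrefl : f.natDegree + 1 - 1 - i = j := by omega
  rw [hrefl, coeff_reverse, revAt_le (by omega), mul_smul_comm, hpow]
  congr 2
  omega

theorem ker_aeval_monicReciprocal {V : Type*} [AddCommGroup V] [Module F V] (T : V ≃ₗ[F] V)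
    (h0 : g.coeff 0 ≠ 0) :
    LinearMap.ker (aeval (T : End F V) (monicReciprocal g)) =
      LinearMap.ker (aeval ((T⁻¹ : V ≃ₗ[F] V) : End F V) g) := by
  have hST : ((T⁻¹ : V ≃ₗ[F] V) : End F V) * (T : End F V) = 1 := LinearMap.ext T.symm_apply_apply
  have hinj : Function.Injective (((T⁻¹ : V ≃ₗ[F] V) : End F V) ^ g.natDegree) := by
    rw [End.coe_pow]
    exact (T⁻¹).injective.iterate _
  rw [← pow_mul_aeval_reverse hST g, monicReciprocal, map_mul, aeval_C]
  refine Eq.trans (LinearMap.ker_smul _ _ (inv_ne_zero h0)) (.symm ?_)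
  exact LinearMap.ker_comp_of_ker_eq_bot _ (LinearMap.ker_eq_bot.mpr hinj)

theorem finrank_ker_aeval_of_isConj {V : Type*} [AddCommGroup V] [Module F V] {T S : V ≃ₗ[F] V}
    (h : IsConj T S) (g : F[X]) : finrank F (LinearMap.ker (aeval (T : End F V) g)) =
      finrank F (LinearMap.ker (aeval (S : End F V) g)) := by
  obtain ⟨c, rfl⟩ := isConj_iff.mp h
  have hconj : aeval ((c * T * c⁻¹ : V ≃ₗ[F] V) : End F V) g = c.conj (aeval (T : End F V) g) :=
    aeval_algHom_apply (c.conjAlgEquiv F) (T : End F V) g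
  have hker : LinearMap.ker (c.conj (aeval (T : End F V) g)) =
      (LinearMap.ker (aeval (T : End F V) g)).map (c : V →ₗ[F] V) := by
    rw [Submodule.map_equiv_eq_comap_symm, ← LinearMap.ker_comp, LinearEquiv.conj_apply,
      LinearMap.comp_assoc]
    exact LinearMap.ker_comp_of_ker_eq_bot _ c.ker
  rw [hconj, hker, LinearEquiv.finrank_map_eq]

theorem reverse_eq_self_of_monicReciprocal_eq_self [CharP F 2] (hf : f.Monic)
    (h0 : f.coeff 0 ≠ 0) (h : monicReciprocal f = f) : f.reverse = f := by
  have hinv : (f.coeff 0)⁻¹ = f.coeff 0 := by rw [← coeff_zero_monicReciprocal hf, h]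
  have hone : f.coeff 0 = 1 := by
    have hsq : f.coeff 0 * f.coeff 0 = 1 := by
      nth_rewrite 1 [← hinv]
      exact inv_mul_cancel₀ h0
    rcases mul_self_eq_one_iff.mp hsq with hpos | hneg
    · exact hpos
    · rw [hneg, CharTwo.neg_eq]
  rwa [monicReciprocal, hone, inv_one, C_1, one_mul] at h

theorem eval_one_eq_zero_of_reverse_eq_self [CharP F 2] (h : f.reverse = f)
    (hodd : Odd f.natDegree) : f.eval 1 = 0 := by
  have hle : ∀ i ∈ Finset.range (f.natDegree + 1), i ≤ f.natDegree := fun i hi =>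
    Nat.lt_succ_iff.mp (Finset.mem_range.mp hi)
  rw [eval_eq_sum_range]
  refine Finset.sum_involution (fun i _ => f.natDegree - i) (fun i hi => ?_) (fun i hi _ => ?_)
    (fun i _ => Finset.mem_range.mpr (by omega)) (fun i hi => Nat.sub_sub_self (hle i hi))
  · have hsymm : f.coeff (f.natDegree - i) = f.coeff i := by
      conv_rhs => rw [← h, coeff_reverse, revAt_le (hle i hi)]
    rw [hsymm, one_pow, one_pow]
    exact CharTwo.add_self_eq_zero _
  · have := hle i hi
    obtain ⟨c, hc⟩ := hodd
    omega

theorem eq_X_sub_one_and_odd_of_monicReciprocal_pow_eq [CharP F 2] (hf : f.Monic)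
    (hf_irr : Irreducible f) {e : ℕ} (h0 : (f ^ e).coeff 0 ≠ 0)
    (h : monicReciprocal (f ^ e) = f ^ e) (hodd : Odd (f ^ e).natDegree) :
    f = X - C 1 ∧ Odd e := by
  have heval := eval_one_eq_zero_of_reverse_eq_self
    (reverse_eq_self_of_monicReciprocal_eq_self (hf.pow e) h0 h) hodd
  rw [eval_pow] at heval
  have hroot : f.IsRoot 1 := eq_zero_of_pow_eq_zero heval
  refine ⟨(eq_of_monic_of_associated (monic_X_sub_C 1) hf ?_).symm, ?_⟩
  · exact (irreducible_X_sub_C (1 : F)).associated_of_dvd hf_irr (dvd_iff_isRoot.mpr hroot)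
  · rw [natDegree_pow] at hodd
    exact (Nat.odd_mul.mp hodd).1

end Reciprocal

section TwistedForms

variable {F : Type*} [Field F]

/-- The pairing `(x, y) ↦ τ (x * σ y)` attached to a functional `τ` on `A` and an isomorphism
`σ : B ≃ A`. If `σ` sends `s` to `t⁻¹`, then multiplication by `t` on `A` and by `s` on `B`
preserve it. -/
def twistedForm {A B : Type*} [CommRing A] [Algebra F A] [Ring B] [Algebra F B] (τ : A →ₗ[F] F)
    (σ : B ≃ₐ[F] A) : A →ₗ[F] B →ₗ[F] F :=
  ((LinearMap.mul F A).compr₂ τ).compl₂ σ.toLinearMap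

section

variable {A B : Type*} [CommRing A] [Algebra F A] [Ring B] [Algebra F B] {τ : A →ₗ[F] F}
  {σ : B ≃ₐ[F] A}

theorem twistedForm_apply (x : A) (y : B) : twistedForm τ σ x y = τ (x * σ y) := rfl

theorem twistedForm_mul_mul {t : A} {s : B} (hts : t * σ s = 1) (x : A) (y : B) :
    twistedForm τ σ (t * x) (s * y) = twistedForm τ σ x y := by
  rw [twistedForm_apply, twistedForm_apply, map_mul σ, mul_mul_mul_comm, hts, one_mul]

theorem nondegenerate_twistedForm (hτ : IsFrobeniusForm τ) : (twistedForm τ σ).Nondegenerate := by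
  refine ⟨fun x hx => hτ x fun a => ?_, fun y hy => ?_⟩
  · simpa only [twistedForm_apply, AlgEquiv.apply_symm_apply] using hx (σ.symm a)
  · refine (map_eq_zero_iff σ σ.injective).mp (hτ _ fun a => ?_)
    rw [mul_comm]
    exact hy a

end

theorem isAlt_of_span_eq_top {V : Type*} [AddCommGroup V] [Module F V]
    {β : LinearMap.BilinForm F V} {s : Set V} (hs : Submodule.span F s = ⊤)
    (hskew : ∀ u v, β v u = -β u v) (hdiag : ∀ v ∈ s, β v v = 0) : β.IsAlt := by
  intro v
  induction (hs ▸ Submodule.mem_top : v ∈ Submodule.span F s) using Submodule.span_induction with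
  | mem v hv => exact hdiag v hv
  | zero => rw [map_zero]
  | add u v _ _ hu hv =>
    rw [LinearMap.BilinForm.add_left, LinearMap.BilinForm.add_right, hu,
      LinearMap.BilinForm.add_right, hv, hskew u v]
    ring
  | smul a v _ hv =>
    rw [LinearMap.BilinForm.smul_left, LinearMap.BilinForm.smul_right, hv, mul_zero, mul_zero]

theorem isUnit_root_iff {f : F[X]} : IsUnit (AdjoinRoot.root f) ↔ f.coeff 0 ≠ 0 := by
  rw [Ne, ← X_dvd_iff, ← irreducible_X.coprime_iff_not_dvd, isUnit_iff_exists_inv]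
  constructor
  · rintro ⟨y, hy⟩
    obtain ⟨g, rfl⟩ := AdjoinRoot.mk_surjective y
    rw [← AdjoinRoot.mk_X, ← map_mul, ← map_one (AdjoinRoot.mk f), AdjoinRoot.mk_eq_mk] at hy
    obtain ⟨c, hc⟩ := hy
    exact ⟨g, -c, by linear_combination hc⟩
  · rintro ⟨a, b, hab⟩
    refine ⟨AdjoinRoot.mk f a, ?_⟩
    rw [← AdjoinRoot.mk_X, ← map_mul, ← map_one (AdjoinRoot.mk f), AdjoinRoot.mk_eq_mk]
    exact ⟨-b, by linear_combination hab⟩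

theorem aeval_monicReciprocal_eq_zero_iff {A : Type*} [CommRing A] [Algebra F A] {t s : A}
    (hts : t * s = 1) {f : F[X]} (h0 : f.coeff 0 ≠ 0) :
    aeval s (monicReciprocal f) = 0 ↔ aeval t f = 0 := by
  have ht : IsUnit (t ^ f.natDegree) := (IsUnit.of_mul_eq_one _ hts).pow _
  have hc : IsUnit (aeval s (C (f.coeff 0)⁻¹)) :=
    (isUnit_C.mpr (isUnit_iff_ne_zero.mpr (inv_ne_zero h0))).map _
  rw [monicReciprocal, map_mul, hc.mul_right_eq_zero, ← pow_mul_aeval_reverse hts,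
    ht.mul_right_eq_zero]

theorem exists_algEquiv_adjoinRoot_of_mul_eq_one {f g : F[X]} {w : AdjoinRoot f}
    {z : AdjoinRoot g} (hw : AdjoinRoot.root f * w = 1) (hz : AdjoinRoot.root g * z = 1)
    (hgw : aeval w g = 0) (hfz : aeval z f = 0) :
    ∃ σ : AdjoinRoot g ≃ₐ[F] AdjoinRoot f, σ (AdjoinRoot.root g) = w := by
  let φ : AdjoinRoot g →ₐ[F] AdjoinRoot f := AdjoinRoot.liftAlgHom g (Algebra.ofId F _) w hgw
  let ψ : AdjoinRoot f →ₐ[F] AdjoinRoot g := AdjoinRoot.liftAlgHom f (Algebra.ofId F _) z hfz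
  have hφ : φ (AdjoinRoot.root g) = w := AdjoinRoot.liftAlgHom_root _ _ _ _
  have hψ : ψ (AdjoinRoot.root f) = z := AdjoinRoot.liftAlgHom_root _ _ _ _
  have hφz : φ z = AdjoinRoot.root f := by
    refine (left_inv_eq_right_inv hw ?_).symm
    rw [← hφ, ← map_mul, hz, map_one]
  have hψw : ψ w = AdjoinRoot.root g := by
    refine (left_inv_eq_right_inv hz ?_).symm
    rw [← hψ, ← map_mul, hw, map_one]
  refine ⟨AlgEquiv.ofAlgHom φ ψ (AdjoinRoot.algHom_ext ?_) (AdjoinRoot.algHom_ext ?_), hφ⟩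
  · rw [AlgHom.comp_apply, hψ, hφz, AlgHom.id_apply]
  · rw [AlgHom.comp_apply, hφ, hψw, AlgHom.id_apply]

theorem exists_algEquiv_adjoinRoot_monicReciprocal {f : F[X]} (hf : f.Monic)
    (h0 : f.coeff 0 ≠ 0) : ∃ σ : AdjoinRoot (monicReciprocal f) ≃ₐ[F] AdjoinRoot f,
      AdjoinRoot.root f * σ (AdjoinRoot.root (monicReciprocal f)) = 1 := by
  have hg0 : (monicReciprocal f).coeff 0 ≠ 0 := by
    rw [coeff_zero_monicReciprocal hf]
    exact inv_ne_zero h0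
  obtain ⟨w, hw⟩ := isUnit_iff_exists_inv.mp (isUnit_root_iff.mpr h0)
  obtain ⟨z, hz⟩ := isUnit_iff_exists_inv.mp (isUnit_root_iff.mpr hg0)
  obtain ⟨σ, rfl⟩ := exists_algEquiv_adjoinRoot_of_mul_eq_one hw hz
    ((aeval_monicReciprocal_eq_zero_iff hw h0).mpr (AdjoinRoot.aeval_eq f ▸ AdjoinRoot.mk_self))
    ((aeval_monicReciprocal_eq_zero_iff ((mul_comm _ _).trans hz) h0).mp
      (AdjoinRoot.aeval_eq (monicReciprocal f) ▸ AdjoinRoot.mk_self))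
  exact ⟨σ, hw⟩

theorem topCoeff_root_pow {f : F[X]} (hf : f.Monic) {i : ℕ} (hi : i < f.natDegree) :
    topCoeff hf (AdjoinRoot.root f ^ i) = if f.natDegree - 1 = i then 1 else 0 := by
  rw [← AdjoinRoot.mk_X, ← map_pow, topCoeff_mk_of_natDegree_lt hf (by rwa [natDegree_X_pow]),
    coeff_X_pow]

theorem topCoeff_of_root_mul_eq_one {f : F[X]} (hf : f.Monic) (hdeg : 0 < f.natDegree)
    {w : AdjoinRoot f} (hw : AdjoinRoot.root f * w = 1) :
    topCoeff hf w = -(f.coeff 0)⁻¹ := by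
  have h0 : f.coeff 0 ≠ 0 := isUnit_root_iff.mp (IsUnit.of_mul_eq_one _ hw)
  have hdivX := congrArg (AdjoinRoot.mk f) (X_mul_divX_add f)
  rw [map_add, map_mul, AdjoinRoot.mk_X, AdjoinRoot.mk_self, AdjoinRoot.mk_C] at hdivX
  have hsmul : AdjoinRoot.mk f f.divX = -(f.coeff 0 • w) := by
    rw [Algebra.smul_def, AdjoinRoot.algebraMap_eq]
    linear_combination w * hdivX - AdjoinRoot.mk f f.divX * hw
  have htop : topCoeff hf (AdjoinRoot.mk f f.divX) = 1 := by
    rw [topCoeff_mk_of_natDegree_lt hf (by rw [natDegree_divX_eq_natDegree_tsub_one]; omega),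
      coeff_divX, Nat.sub_add_cancel hdeg, hf.coeff_natDegree]
  rw [hsmul, map_neg, map_smul, smul_eq_mul] at htop
  field_simp
  linear_combination -htop

theorem span_range_root_pow (f : F[X]) :
    Submodule.span F (Set.range fun n : ℕ => AdjoinRoot.root f ^ n) = ⊤ := by
  refine eq_top_iff.mpr fun x _ => ?_
  obtain ⟨p, rfl⟩ := AdjoinRoot.mk_surjective x
  rw [← AdjoinRoot.aeval_eq, aeval_eq_sum_range]
  exact Submodule.sum_mem _ fun i _ =>
    Submodule.smul_mem _ _ (Submodule.subset_span (Set.mem_range_self i))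

/- On the basis `1, t, ..., t ^ (2 * j - 1)`, where `t` is the class of `X`, both sides vanish
except at the last element, where `t ^ (2 * j - 2) * σ t ^ (2 * j - 1) = t⁻¹`. -/
theorem topCoeff_root_pow_mul_eq_neg {f : F[X]} (hf : f.Monic) (hrev : f.reverse = f) {j : ℕ}
    (hj : f.natDegree = 2 * j) {σ : AdjoinRoot f ≃ₐ[F] AdjoinRoot f}
    (hσ : AdjoinRoot.root f * σ (AdjoinRoot.root f) = 1) (y : AdjoinRoot f) :
    topCoeff hf (AdjoinRoot.root f ^ (2 * (j - 1)) * σ y) = -topCoeff hf y := by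
  have h0 : f.coeff 0 = 1 := by rw [← hrev, coeff_zero_reverse, hf]
  set t := AdjoinRoot.root f with ht
  suffices topCoeff hf ∘ₗ LinearMap.mulLeft F (t ^ (2 * (j - 1))) ∘ₗ σ.toLinearMap =
      -topCoeff hf from DFunLike.congr_fun this y
  refine (AdjoinRoot.powerBasis' hf).basis.ext fun i => ?_
  have hi : (i : ℕ) < 2 * j := hj ▸ i.2
  have hcancel : ∀ k l, t ^ (k + l) * σ t ^ l = t ^ k := fun k l => by
    rw [pow_add, mul_assoc, pow_mul_pow_eq_one l hσ, mul_one]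
  rw [PowerBasis.basis_eq_pow, AdjoinRoot.powerBasis'_gen, ← ht]
  change topCoeff hf (t ^ (2 * (j - 1)) * σ (t ^ (i : ℕ))) = -topCoeff hf (t ^ (i : ℕ))
  rw [map_pow, topCoeff_root_pow hf (by omega), hj]
  rcases (Nat.le_sub_one_of_lt hi).lt_or_eq with hlt | heq
  · obtain ⟨k, hk⟩ : ∃ k, 2 * (j - 1) = k + i := ⟨2 * (j - 1) - i, by omega⟩
    rw [hk, hcancel, topCoeff_root_pow hf (by omega), if_neg (by omega), if_neg (by omega),
      neg_zero]
  · have hinv : t ^ (2 * (j - 1)) * σ t ^ (i : ℕ) = σ t := by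
      obtain ⟨l, hl⟩ : ∃ l, 2 * (j - 1) = l := ⟨_, rfl⟩
      rw [show (i : ℕ) = l + 1 by omega, pow_succ, hl, ← mul_assoc, pow_mul_pow_eq_one l hσ,
        one_mul]
    rw [hinv, topCoeff_of_root_mul_eq_one hf (by omega) hσ, h0, inv_one, if_pos heq.symm]

theorem apply_apply_of_root_mul_apply_root_eq_one {f : F[X]} {σ : AdjoinRoot f ≃ₐ[F] AdjoinRoot f}
    (hσ : AdjoinRoot.root f * σ (AdjoinRoot.root f) = 1) (x : AdjoinRoot f) : σ (σ x) = x := by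
  have hroot : σ (σ (AdjoinRoot.root f)) = AdjoinRoot.root f :=
    left_inv_eq_right_inv (by rw [← map_mul, mul_comm, hσ, map_one]) ((mul_comm _ _).trans hσ)
  have hid : (σ : AdjoinRoot f →ₐ[F] AdjoinRoot f).comp σ = AlgHom.id F (AdjoinRoot f) :=
    AdjoinRoot.algHom_ext hroot
  exact DFunLike.congr_fun hid x

theorem exists_isAlt_nondegenerate_adjoinRoot_of_reverse_eq_self {f : F[X]} (hf : f.Monic)
    (hrev : f.reverse = f) (hdeg : Even f.natDegree) :
    ∃ β : LinearMap.BilinForm F (AdjoinRoot f), β.IsAlt ∧ β.Nondegenerate ∧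
      ∀ x y, β (AdjoinRoot.root f * x) (AdjoinRoot.root f * y) = β x y := by
  obtain ⟨j, hj⟩ := even_iff_exists_two_mul.mp hdeg
  have h0 : f.coeff 0 = 1 := by rw [← hrev, coeff_zero_reverse, hf]
  obtain ⟨σ, hσ⟩ : ∃ σ : AdjoinRoot f ≃ₐ[F] AdjoinRoot f,
      AdjoinRoot.root f * σ (AdjoinRoot.root f) = 1 := by
    have h := exists_algEquiv_adjoinRoot_monicReciprocal hf (h0 ▸ one_ne_zero)
    rwa [monicReciprocal, h0, inv_one, C_1, one_mul, hrev] at h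
  set t := AdjoinRoot.root f
  let τ := topCoeff hf ∘ₗ LinearMap.mulLeft F (t ^ (j - 1))
  have hτσ : ∀ x, τ (σ x) = -τ x := fun x => by
    have h := topCoeff_root_pow_mul_eq_neg hf hrev hj hσ (t ^ (j - 1) * x)
    rwa [map_mul σ, map_pow σ, two_mul, pow_add, mul_assoc, ← mul_assoc _ (σ t ^ _),
      pow_mul_pow_eq_one _ hσ, one_mul] at h
  have hτ_one : τ 1 = 0 := by
    rcases Nat.eq_zero_or_pos j with rfl | hpos
    · have hf1 : f = 1 := hf.natDegree_eq_zero.mp hj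
      have hone : (1 : AdjoinRoot f) = 0 := by
        rw [← map_one (AdjoinRoot.mk f), AdjoinRoot.mk_eq_zero, hf1]
      rw [hone, map_zero]
    · rw [LinearMap.comp_apply, LinearMap.mulLeft_apply, mul_one, topCoeff_root_pow hf (by omega),
        if_neg (by omega)]
  have hunit : IsUnit (t ^ (j - 1)) := (IsUnit.of_mul_eq_one _ hσ).pow _
  refine ⟨twistedForm τ σ, isAlt_of_span_eq_top (span_range_root_pow f) (fun x y => ?_) ?_,
    nondegenerate_twistedForm ((isFrobeniusForm_topCoeff hf).comp_mulLeft hunit),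
    twistedForm_mul_mul hσ⟩
  · rw [twistedForm_apply, twistedForm_apply, ← hτσ, map_mul σ,
      apply_apply_of_root_mul_apply_root_eq_one hσ, mul_comm]
  · rintro _ ⟨n, rfl⟩
    rw [twistedForm_apply, map_pow, pow_mul_pow_eq_one n hσ, hτ_one]

end TwistedForms

section OrthogonalSums

variable {F : Type*} [Field F]

theorem ker_add_of_isRefl {V : Type*} [AddCommGroup V] [Module F V]
    {β₁ β₂ : LinearMap.BilinForm F V} (h₁ : β₁.IsRefl) (h₂ : β₂.IsRefl)
    (h : Codisjoint (LinearMap.ker β₁) (LinearMap.ker β₂)) :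
    LinearMap.ker (β₁ + β₂) = LinearMap.ker β₁ ⊓ LinearMap.ker β₂ := by
  have hright : ∀ {β : LinearMap.BilinForm F V}, β.IsRefl → ∀ u, ∀ v ∈ LinearMap.ker β, β u v = 0 :=
    fun hβ u v hv => hβ v u (by rw [LinearMap.mem_ker.mp hv, LinearMap.zero_apply])
  refine le_antisymm (fun u hu => ?_) fun u hu => ?_
  · have hsum : ∀ v, β₁ u v + β₂ u v = 0 := fun v => DFunLike.congr_fun hu v
    refine ⟨LinearMap.ext fun v => ?_, LinearMap.ext fun v => ?_⟩ <;>
      obtain ⟨a, ha, b, hb, rfl⟩ := Submodule.mem_sup.mp (h.eq_top ▸ Submodule.mem_top : v ∈ _)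
    · have hub := hsum b
      rw [hright h₂ u b hb, add_zero] at hub
      rw [map_add, hright h₁ u a ha, hub, add_zero, LinearMap.zero_apply]
    · have hua := hsum a
      rw [hright h₁ u a ha, zero_add] at hua
      rw [map_add, hright h₂ u b hb, hua, add_zero, LinearMap.zero_apply]
  · rw [LinearMap.mem_ker, LinearMap.add_apply, hu.1, hu.2, add_zero]

/-- The product of the modules `V i` carries an alternating form that is invariant under the product
of the `T i` and whose radical consists of the vectors vanishing on `s`; in other words, the product
over `s` carries a nondegenerate one. Keeping all the factors spares us restricting to subsets of
the index set. -/
def HasInvariantFormOn {ι : Type*} {V : ι → Type*} [∀ i, AddCommGroup (V i)] [∀ i, Module F (V i)]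
    (T : ∀ i, End F (V i)) (s : Set ι) : Prop :=
  ∃ β : LinearMap.BilinForm F (∀ i, V i), β.IsAlt ∧
    (∀ u v, β (fun i => T i (u i)) (fun i => T i (v i)) = β u v) ∧
    LinearMap.ker β = Submodule.pi s fun _ => ⊥

namespace HasInvariantFormOn

variable {ι : Type*} {V : ι → Type*} [∀ i, AddCommGroup (V i)] [∀ i, Module F (V i)]
  {T : ∀ i, End F (V i)} {s t : Set ι}

theorem empty : HasInvariantFormOn T ∅ :=
  ⟨0, fun _ => rfl, fun _ _ => rfl, by rw [LinearMap.ker_zero, Submodule.pi_empty]⟩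

theorem union (hst : Disjoint s t) (hs : HasInvariantFormOn T s) (ht : HasInvariantFormOn T t) :
    HasInvariantFormOn T (s ∪ t) := by
  classical
  obtain ⟨β₁, halt₁, hinv₁, hker₁⟩ := hs
  obtain ⟨β₂, halt₂, hinv₂, hker₂⟩ := ht
  have hcodisj : Codisjoint (LinearMap.ker β₁) (LinearMap.ker β₂) := by
    refine codisjoint_iff.mpr (eq_top_iff.mpr fun u _ => Submodule.mem_sup.mpr ?_)
    refine ⟨s.piecewise 0 u, ?_, s.piecewise u 0, ?_, ?_⟩
    · rw [hker₁]
      exact fun i hi => Set.piecewise_eq_of_mem s _ _ hi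
    · rw [hker₂]
      exact fun i hi => Set.piecewise_eq_of_notMem s _ _ (hst.notMem_of_mem_right hi)
    · funext i
      by_cases hi : i ∈ s <;> simp [hi]
  refine ⟨β₁ + β₂, fun u => ?_, fun u v => ?_, ?_⟩
  · rw [LinearMap.add_apply, LinearMap.add_apply, halt₁ u, halt₂ u, add_zero]
  · simp only [LinearMap.add_apply, hinv₁, hinv₂]
  · rw [ker_add_of_isRefl halt₁.isRefl halt₂.isRefl hcodisj, hker₁, hker₂]
    ext u
    simp only [Submodule.mem_inf, Submodule.mem_pi, Set.mem_union, or_imp, forall_and]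

theorem singleton {i : ι} {b : LinearMap.BilinForm F (V i)} (halt : b.IsAlt)
    (hnd : b.Nondegenerate) (hinv : ∀ x y, b (T i x) (T i y) = b x y) :
    HasInvariantFormOn T {i} := by
  classical
  refine ⟨b.compl₁₂ (LinearMap.proj i) (LinearMap.proj i), fun u => halt _, fun u v => hinv _ _,
    Submodule.ext fun u => ?_⟩
  simp only [Submodule.mem_pi, Set.mem_singleton_iff, forall_eq]
  refine ⟨fun hu => hnd.1 _ fun y => ?_, fun hu => LinearMap.ext fun v => ?_⟩
  · have h := DFunLike.congr_fun hu (Pi.single i y)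
    rwa [LinearMap.compl₁₂_apply, LinearMap.proj_apply, LinearMap.proj_apply,
      Pi.single_eq_same] at h
  · rw [LinearMap.compl₁₂_apply, LinearMap.proj_apply, (Submodule.mem_bot F).mp hu, map_zero,
      LinearMap.zero_apply, LinearMap.zero_apply]

theorem pair {i j : ι} (hij : i ≠ j) {b : V i →ₗ[F] V j →ₗ[F] F} (hnd : b.Nondegenerate)
    (hinv : ∀ x y, b (T i x) (T j y) = b x y) : HasInvariantFormOn T {i, j} := by
  classical
  let B : LinearMap.BilinForm F (∀ i, V i) := b.compl₁₂ (LinearMap.proj i) (LinearMap.proj j)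
  have hB : ∀ u v, (B - B.flip) u v = b (u i) (v j) - b (v i) (u j) := fun _ _ => rfl
  refine ⟨B - B.flip, fun u => by rw [hB, sub_self], fun u v => by rw [hB, hB, hinv, hinv],
    Submodule.ext fun u => ?_⟩
  simp only [Submodule.mem_pi, Set.forall_mem_insert, Set.mem_singleton_iff, forall_eq]
  refine ⟨fun hu => ⟨hnd.1 _ fun y => ?_, hnd.2 _ fun x => ?_⟩,
    fun hu => LinearMap.ext fun v => ?_⟩
  · have h : (B - B.flip) u (Pi.single j y) = 0 := DFunLike.congr_fun hu _
    rwa [hB, Pi.single_eq_same, Pi.single_eq_of_ne hij, map_zero, LinearMap.zero_apply,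
      sub_zero] at h
  · have h : (B - B.flip) u (Pi.single i x) = 0 := DFunLike.congr_fun hu _
    rwa [hB, Pi.single_eq_same, Pi.single_eq_of_ne hij.symm, map_zero, zero_sub, neg_eq_zero] at h
  · rw [hB, (Submodule.mem_bot F).mp hu.1, (Submodule.mem_bot F).mp hu.2, map_zero, map_zero,
      LinearMap.zero_apply, sub_zero, LinearMap.zero_apply]

end HasInvariantFormOn

theorem mem_of_count_cons_eq {α : Type*} [DecidableEq α] {a b : α} {N : Multiset α}
    (hcount : (a ::ₘ N).count b = (a ::ₘ N).count a)
    (heven : b = a → Even ((a ::ₘ N).count a)) : b ∈ N := by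
  rw [← Multiset.count_pos]
  by_cases hba : b = a
  · have h := heven hba
    rw [Multiset.count_cons_self, Nat.even_add_one] at h
    rw [hba]
    exact Nat.pos_of_ne_zero fun h0 => h (h0 ▸ Even.zero)
  · rw [Multiset.count_cons_of_ne hba, Multiset.count_cons_self] at hcount
    omega

theorem multiset_induction_of_involution {α : Type*} [DecidableEq α] {r : α → α} {good : α → Prop}
    {P : Multiset α → Prop} (zero : P 0)
    (single : ∀ a M, r a = a → good a → P M → P (a ::ₘ M))
    (pair : ∀ a M, P M → P (a ::ₘ r a ::ₘ M)) (M : Multiset α) (hr : ∀ a ∈ M, r (r a) = a)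
    (hcount : ∀ a ∈ M, M.count (r a) = M.count a)
    (heven : ∀ a ∈ M, r a = a → ¬good a → Even (M.count a)) : P M := by
  induction M using Multiset.strongInductionOn with
  | ih M ih =>
  rcases M.empty_or_exists_mem with rfl | ⟨a, ha⟩
  · exact zero
  obtain ⟨N, rfl⟩ := Multiset.exists_cons_of_mem ha
  by_cases hgood : r a = a ∧ good a
  · refine single a N hgood.1 hgood.2 (ih N (Multiset.lt_cons_self N a)
      (fun b hb => hr b (Multiset.mem_cons_of_mem hb)) (fun b hb => ?_) fun b hb hrb hb' => ?_)
    · have hb' := hcount b (Multiset.mem_cons_of_mem hb)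
      have hiff : r b = a ↔ b = a :=
        ⟨fun h => by rw [← hr b (Multiset.mem_cons_of_mem hb), h, hgood.1], fun h => h ▸ hgood.1⟩
      simpa only [Multiset.count_cons, hiff, add_left_inj] using hb'
    · have hba : b ≠ a := fun h => hb' (h ▸ hgood.2)
      simpa only [Multiset.count_cons_of_ne hba] using
        heven b (Multiset.mem_cons_of_mem hb) hrb hb'
  · obtain ⟨N, rfl⟩ := Multiset.exists_cons_of_mem <|
      mem_of_count_cons_eq (hcount a ha) fun hfix => heven a ha hfix fun h => hgood ⟨hfix, h⟩
    have hsub : ∀ b ∈ N, b ∈ a ::ₘ r a ::ₘ N := fun b hb =>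
      Multiset.mem_cons_of_mem (Multiset.mem_cons_of_mem hb)
    have hswap : ∀ b ∈ N, (r b = a ↔ b = r a) := fun b hb =>
      ⟨fun h => by rw [← h, hr b (hsub b hb)], fun h => by rw [h, hr a ha]⟩
    have hinj : ∀ b ∈ N, (r b = r a ↔ b = a) := fun b hb =>
      ⟨fun h => by rw [← hr b (hsub b hb), h, hr a ha], fun h => h ▸ rfl⟩
    refine pair a N (ih N ((Multiset.lt_cons_self N _).trans (Multiset.lt_cons_self _ a))
      (fun b hb => hr b (hsub b hb)) (fun b hb => ?_) fun b hb hrb hb' => ?_)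
    · have h := hcount b (hsub b hb)
      simp only [Multiset.count_cons, hswap b hb, hinj b hb] at h
      omega
    · have h := heven b (hsub b hb) hrb hb'
      have hiff : b = r a ↔ b = a := by rw [← hswap b hb, hrb]
      simp only [Multiset.count_cons, hiff] at h
      split_ifs at h
      · rw [add_assoc, Nat.even_add] at h
        exact h.mpr even_two
      · exact h

end OrthogonalSums

section InvariantForms

theorem hasInvariantFormOn_mulLeft_root_singleton {F ι : Type*} [Field F] [CharP F 2]
    {f : ι → F[X]} {i : ι} (hf : (f i).Monic) (h0 : (f i).coeff 0 ≠ 0)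
    (hrec : monicReciprocal (f i) = f i) (heven : Even (f i).natDegree) :
    HasInvariantFormOn (fun i => LinearMap.mulLeft F (AdjoinRoot.root (f i))) {i} := by
  obtain ⟨β, halt, hnd, hinv⟩ := exists_isAlt_nondegenerate_adjoinRoot_of_reverse_eq_self hf
    (reverse_eq_self_of_monicReciprocal_eq_self hf h0 hrec) heven
  exact .singleton halt hnd hinv

theorem hasInvariantFormOn_mulLeft_root_pair {F ι : Type*} [Field F] {f : ι → F[X]} {i j : ι}
    (hij : i ≠ j) (hf : (f i).Monic) (h0 : (f i).coeff 0 ≠ 0) (hj : f j = monicReciprocal (f i)) :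
    HasInvariantFormOn (fun i => LinearMap.mulLeft F (AdjoinRoot.root (f i))) {i, j} := by
  obtain ⟨σ, hσ⟩ : ∃ σ : AdjoinRoot (f j) ≃ₐ[F] AdjoinRoot (f i),
      AdjoinRoot.root (f i) * σ (AdjoinRoot.root (f j)) = 1 :=
    hj ▸ exists_algEquiv_adjoinRoot_monicReciprocal hf h0
  exact .pair hij (nondegenerate_twistedForm (isFrobeniusForm_topCoeff hf))
    (twistedForm_mul_mul hσ)

theorem hasInvariantFormOn_mulLeft_root {F ι : Type*} [Field F] [CharP F 2] [DecidableEq F[X]]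
    {f : ι → F[X]} (hf : ∀ i, (f i).Monic) (h0 : ∀ i, (f i).coeff 0 ≠ 0) (s : Finset ι)
    (hcount : ∀ c ∈ s.val.map f, (s.val.map f).count (monicReciprocal c) = (s.val.map f).count c)
    (heven : ∀ c ∈ s.val.map f, monicReciprocal c = c → ¬Even c.natDegree →
      Even ((s.val.map f).count c)) :
    HasInvariantFormOn (fun i => LinearMap.mulLeft F (AdjoinRoot.root (f i))) (s : Set ι) := by
  classical
  have hinvol : ∀ c ∈ s.val.map f, monicReciprocal (monicReciprocal c) = c := fun c hc => by
    obtain ⟨i, -, rfl⟩ := Multiset.mem_map.mp hc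
    exact monicReciprocal_monicReciprocal (hf i) (h0 i)
  refine multiset_induction_of_involution (P := fun M => ∀ t : Finset ι, t.val.map f = M →
      HasInvariantFormOn (fun i => LinearMap.mulLeft F (AdjoinRoot.root (f i))) (t : Set ι))
    (fun t ht => ?_) (fun c M hrec hdeg ih t ht => ?_) (fun c M ih t ht => ?_) (s.val.map f)
    hinvol hcount heven s rfl
  · rw [Finset.val_eq_zero.mp (Multiset.map_eq_zero.mp ht), Finset.coe_empty]
    exact .empty
  · obtain ⟨i, hi, rfl, hM⟩ := (Multiset.map_eq_cons _ _ _ _).mpr ht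
    rw [← Finset.erase_val] at hM
    rw [← Finset.insert_erase hi, Finset.coe_insert, Set.insert_eq]
    exact .union (by simp) (hasInvariantFormOn_mulLeft_root_singleton (hf i) (h0 i) hrec hdeg)
      (ih _ hM)
  · obtain ⟨i, hi, rfl, hM⟩ := (Multiset.map_eq_cons _ _ _ _).mpr ht
    rw [← Finset.erase_val] at hM
    obtain ⟨j, hj, hji, hM⟩ := (Multiset.map_eq_cons _ _ _ _).mpr hM
    rw [← Finset.erase_val] at hM
    rw [← Finset.insert_erase hi, ← Finset.insert_erase hj, Finset.coe_insert, Finset.coe_insert,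
      ← Set.singleton_union, ← Set.singleton_union, ← Set.union_assoc, Set.singleton_union]
    exact .union (by simp) (hasInvariantFormOn_mulLeft_root_pair (Finset.ne_of_mem_erase hj).symm
      (hf i) (h0 i) hji) (ih _ hM)

variable {F V : Type*} [Field F] [AddCommGroup V] [Module F V]

theorem divisorWeight_monicReciprocal {T : V ≃ₗ[F] V} (h : IsConj T T⁻¹) {q : F[X]}
    (h0 : q.coeff 0 ≠ 0) (m : ℕ) :
    divisorWeight (T : End F V) (monicReciprocal q) m = divisorWeight (T : End F V) q m := by
  have hker : ∀ k, finrank F (LinearMap.ker (aeval (T : End F V) (monicReciprocal q) ^ k)) =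
      finrank F (LinearMap.ker (aeval (T : End F V) q ^ k)) := fun k => by
    have h0k : (q ^ k).coeff 0 ≠ 0 := by
      rw [← constantCoeff_apply, map_pow]
      exact pow_ne_zero k h0
    rw [← map_pow, ← map_pow, ← monicReciprocal_pow, ker_aeval_monicReciprocal T h0k,
      finrank_ker_aeval_of_isConj h]
  simp only [divisorWeight, hker]

namespace PrimaryDecomposition

variable {T : V ≃ₗ[F] V} (D : PrimaryDecomposition (T : End F V))

theorem coeff_zero_ne_zero (i : D.ι) : (D.p i ^ D.e i).coeff 0 ≠ 0 := by
  refine isUnit_root_iff.mp (IsUnit.of_mul_eq_one (D.equiv (T.symm (D.equiv.symm 1)) i) ?_)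
  have h := congrFun (D.equiv_apply (T.symm (D.equiv.symm 1))) i
  rw [LinearEquiv.coe_coe, T.apply_symm_apply, D.equiv.apply_symm_apply] at h
  exact h.symm

theorem count_monicReciprocal [DecidableEq F[X]] (h : IsConj T T⁻¹) {c : F[X]}
    (hc : c ∈ D.divisors) : D.divisors.count (monicReciprocal c) = D.divisors.count c := by
  obtain ⟨i, -, rfl⟩ := Multiset.mem_map.mp hc
  rcases Nat.eq_zero_or_pos (D.e i) with he | he
  · rw [he, pow_zero, monicReciprocal_one]
  have h0 : (D.p i).coeff 0 ≠ 0 := fun h0 => D.coeff_zero_ne_zero i <| by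
    rw [← constantCoeff_apply, map_pow, constantCoeff_apply, h0, zero_pow he.ne']
  have hweight := divisorWeight_monicReciprocal h h0 (D.e i)
  rw [D.divisorWeight_eq (monic_monicReciprocal h0)
      (irreducible_monicReciprocal (D.monic i) (D.irreducible i) h0) he,
    D.divisorWeight_eq (D.monic i) (D.irreducible i) he, natDegree_monicReciprocal h0] at hweight
  rw [monicReciprocal_pow]
  exact_mod_cast mul_left_cancel₀
    (Nat.cast_ne_zero.mpr (D.irreducible i).natDegree_pos.ne') hweight

end PrimaryDecomposition

theorem exists_isAlt_nondegenerate_isometry [CharP F 2] [FiniteDimensional F V] {T : V ≃ₗ[F] V}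
    (h : IsConj T T⁻¹) (heven : ∀ m, Odd m → Even (divisorWeight (T : End F V) (X - C 1) m)) :
    ∃ β : LinearMap.BilinForm F V, β.IsAlt ∧ β.Nondegenerate ∧ ∀ u v, β (T u) (T v) = β u v := by
  classical
  obtain ⟨D⟩ := nonempty_primaryDecomposition (T : End F V)
  obtain ⟨β, halt, hinv, hker⟩ := hasInvariantFormOn_mulLeft_root
    (fun i => (D.monic i).pow (D.e i)) D.coeff_zero_ne_zero Finset.univ
    (fun c hc => D.count_monicReciprocal h hc) fun c hc hrec hdeg => by
      obtain ⟨i, -, rfl⟩ := Multiset.mem_map.mp hc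
      obtain ⟨hp, hodd⟩ := eq_X_sub_one_and_odd_of_monicReciprocal_pow_eq (D.monic i)
        (D.irreducible i) (D.coeff_zero_ne_zero i) hrec (Nat.not_even_iff_odd.mp hdeg)
      have hm := heven (D.e i) hodd
      rw [D.divisorWeight_eq (monic_X_sub_C 1) (irreducible_X_sub_C 1) hodd.pos,
        natDegree_X_sub_C, Nat.cast_one, one_mul, Int.even_coe_nat, ← hp] at hm
      exact hm
  have hequiv : ∀ v, D.equiv (T v) = fun i => LinearMap.mulLeft F
      (AdjoinRoot.root (D.p i ^ D.e i)) (D.equiv v i) := fun v => D.equiv_apply v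
  have halt' : (β.compl₁₂ (D.equiv : V →ₗ[F] _) (D.equiv : V →ₗ[F] _)).IsAlt := fun u => halt _
  refine ⟨β.compl₁₂ D.equiv D.equiv, halt',
    (LinearMap.IsRefl.nondegenerate_iff_separatingLeft halt'.isRefl).mpr fun u hu => ?_,
    fun u v => ?_⟩
  · rw [Finset.coe_univ, Submodule.pi_univ_bot, LinearMap.ker_eq_bot] at hker
    refine D.equiv.map_eq_zero_iff.mp (hker (LinearMap.ext fun w => ?_))
    rw [map_zero, LinearMap.zero_apply, ← D.equiv.apply_symm_apply w]
    exact hu _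
  · simp only [LinearMap.compl₁₂_apply, LinearEquiv.coe_coe, hequiv]
    exact hinv _ _

theorem even_divisorWeight_of_isometry [FiniteDimensional F V] {β : LinearMap.BilinForm F V}
    (hβ : β.IsAlt) (hnd : β.Nondegenerate) {T : V ≃ₗ[F] V} (hT : ∀ u v, β (T u) (T v) = β u v)
    {m : ℕ} (hm : Odd m) : Even (divisorWeight (T : End F V) (X - C 1) m) := by
  obtain ⟨a, rfl⟩ := hm
  have haeval : aeval (T : End F V) (X - C 1 : F[X]) = (T : End F V) - 1 := by
    rw [map_sub, aeval_X, aeval_C, map_one]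
  have hker := even_finrank_add_finrank_ker_sub_one_pow hβ hnd hT a
  have hker_succ := even_finrank_add_finrank_ker_sub_one_pow hβ hnd hT (a + 1)
  rw [mul_add, mul_one] at hker_succ
  rw [divisorWeight, haeval, Nat.add_sub_cancel, add_assoc, one_add_one_eq_two]
  grind

theorem exists_isAlt_nondegenerate_isometry_iff [CharP F 2] [FiniteDimensional F V]
    (T : V ≃ₗ[F] V) :
    (∃ β : LinearMap.BilinForm F V, β.IsAlt ∧ β.Nondegenerate ∧ ∀ u v, β (T u) (T v) = β u v) ↔
      IsConj T T⁻¹ ∧ ∀ m, Odd m → Even (divisorWeight (T : End F V) (X - C 1) m) :=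
  ⟨fun ⟨_, halt, hnd, hT⟩ => ⟨isConj_inv_of_isometry hnd hT,
    fun _ => even_divisorWeight_of_isometry halt hnd hT⟩,
  fun ⟨h, heven⟩ => exists_isAlt_nondegenerate_isometry h heven⟩

theorem exists_nondegenerate_quadraticForm_isometry_iff [CharP F 2] [PerfectRing F 2]
    [FiniteDimensional F V] (T : V ≃ₗ[F] V) :
    (∃ Q : QuadraticForm F V, Q.polarBilin.Nondegenerate ∧ ∀ v, Q (T v) = Q v) ↔
      IsConj T T⁻¹ ∧ ∀ m, Odd m → Even (divisorWeight (T : End F V) (X - C 1) m) := by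
  rw [← exists_isAlt_nondegenerate_isometry_iff]
  constructor
  · rintro ⟨Q, hnd, hQ⟩
    refine ⟨Q.polarBilin, isAlt_polarBilin Q, hnd, fun u v => ?_⟩
    simp only [QuadraticMap.polarBilin_apply_apply, QuadraticMap.polar, ← map_add, hQ]
  · rintro ⟨β, halt, hnd, hT⟩
    obtain ⟨Q, rfl, hQ⟩ := exists_polarBilin_eq_and_isometry (T := (T : End F V)) halt hT
    exact ⟨Q, hnd, hQ⟩

end InvariantForms

section RowAction

/-- The action `v ↦ v X` of an invertible matrix on row vectors. -/
def vecMulEquiv {ι R : Type*} [Fintype ι] [DecidableEq ι] [CommRing R] (X : GL ι R) :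
    (ι → R) ≃ₗ[R] (ι → R) :=
  Matrix.toLinearEquivRight'OfInv X.inv_mul X.mul_inv

variable {ι R : Type*} [Fintype ι] [DecidableEq ι] [CommRing R]

theorem vecMulEquiv_apply (X : GL ι R) (v : ι → R) : vecMulEquiv X v = v ᵥ* (X : Matrix ι ι R) :=
  rfl

theorem vecMulEquiv_mul (X Y : GL ι R) : vecMulEquiv (X * Y) = vecMulEquiv Y * vecMulEquiv X :=
  LinearEquiv.ext fun v => (vecMul_vecMul v X.val Y.val).symm

theorem vecMulEquiv_injective : Function.Injective (vecMulEquiv : GL ι R → _) := fun _ _ h =>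
  Units.ext <| Matrix.toLinearMapRight'.injective <| congrArg LinearEquiv.toLinearMap h

theorem vecMulEquiv_surjective : Function.Surjective (vecMulEquiv : GL ι R → _) := fun T => by
  refine ⟨⟨LinearMap.toMatrixRight' T, LinearMap.toMatrixRight' T.symm, ?_, ?_⟩, ?_⟩
  · rw [← LinearMap.toMatrixRight'_comp, LinearEquiv.symm_comp, LinearMap.toMatrixRight'_id]
  · rw [← LinearMap.toMatrixRight'_comp, LinearEquiv.comp_symm, LinearMap.toMatrixRight'_id]
  · exact LinearEquiv.toLinearMap_injective (Matrix.toLinearMapRight'.apply_symm_apply _)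

theorem vecMulEquiv_inv (X : GL ι R) : vecMulEquiv X⁻¹ = (vecMulEquiv X)⁻¹ := rfl

theorem isConj_vecMulEquiv_iff {X Y : GL ι R} :
    IsConj (vecMulEquiv X) (vecMulEquiv Y) ↔ IsConj X Y := by
  rw [isConj_comm (g := X), isConj_iff, isConj_iff, vecMulEquiv_surjective.exists]
  refine exists_congr fun P => ?_
  rw [mul_inv_eq_iff_eq_mul, mul_inv_eq_iff_eq_mul, ← vecMulEquiv_mul, ← vecMulEquiv_mul,
    vecMulEquiv_injective.eq_iff, eq_comm]

theorem exists_inv_eq_conj_iff_isConj {X : GL ι R} :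
    (∃ P : Matrix ι ι R, IsUnit P ∧ (X : Matrix ι ι R)⁻¹ = P⁻¹ * X * P) ↔ IsConj X X⁻¹ := by
  rw [isConj_comm, isConj_iff]
  constructor
  · rintro ⟨_, ⟨P, rfl⟩, hP⟩
    have hP' : X⁻¹ = P⁻¹ * X * P := Units.ext <| by
      rw [Units.val_mul, Units.val_mul, coe_units_inv, coe_units_inv, hP]
    exact ⟨P, by rw [hP']; group⟩
  · rintro ⟨P, hP⟩
    refine ⟨P, P.isUnit, ?_⟩
    rw [← coe_units_inv, ← coe_units_inv, ← Units.val_mul, ← Units.val_mul, Units.val_inj]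
    nth_rewrite 2 [← hP]
    group

theorem toLinearMapRight'_pow (A : Matrix ι ι R) (k : ℕ) :
    toLinearMapRight' (A ^ k) = toLinearMapRight' A ^ k := by
  induction k with
  | zero => exact toLinearMapRight'_one
  | succ k ih => rw [pow_succ, pow_succ', toLinearMapRight'_mul, ih, End.mul_eq_comp]

theorem finrank_ker_toLin'_eq_finrank_ker_toLinearMapRight' {F : Type*} [Field F]
    (A : Matrix ι ι F) : finrank F (LinearMap.ker (toLin' A)) =
      finrank F (LinearMap.ker (toLinearMapRight' A)) := by
  have hcol := LinearMap.finrank_range_add_finrank_ker (toLin' A)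
  have hrow := LinearMap.finrank_range_add_finrank_ker (toLinearMapRight' A)
  have hrank : finrank F (LinearMap.range (toLinearMapRight' A)) =
      finrank F (LinearMap.range (toLin' A)) := by
    change finrank F (LinearMap.range A.vecMulLinear) = finrank F (LinearMap.range A.mulVecLin)
    rw [← mulVecLin_transpose]
    exact A.rank_transpose
  omega

theorem edMultiplicity_eq_divisorWeight {F : Type*} [Field F] {n : ℕ} (A : GL (Fin n) F)
    (lam : F) (m : ℕ) : edMultiplicity A.val lam m =
      divisorWeight (vecMulEquiv A : End F (Fin n → F)) (X - C lam) m := by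
  have haeval : aeval (vecMulEquiv A : End F (Fin n → F)) (X - C lam) =
      toLinearMapRight' (A.val - lam • 1) := by
    refine LinearMap.ext fun v => ?_
    rw [map_sub, aeval_X, aeval_C, toLinearMapRight'_apply, vecMul_sub, vecMul_smul, vecMul_one]
    rfl
  have hker : ∀ k, finrank F (LinearMap.ker (toLin' ((A.val - lam • 1) ^ k))) =
      finrank F (LinearMap.ker (aeval (vecMulEquiv A : End F (Fin n → F)) (X - C lam) ^ k)) :=
    fun k => by
      rw [haeval, ← toLinearMapRight'_pow, finrank_ker_toLin'_eq_finrank_ker_toLinearMapRight']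
  rw [edMultiplicity, divisorWeight, hker, hker, hker]

end RowAction

theorem exists_quadratic_form_iff_char_two_general
    {F : Type*} [Field F] [CharP F 2] [PerfectRing F 2] {n : ℕ}
    (X : Matrix (Fin n) (Fin n) F) (hX : IsUnit X) :
    (∃ Q : (Fin n → F) → F,
        (∀ (a : F) (v : Fin n → F), Q (a • v) = a ^ 2 * Q v) ∧
        (∀ u₁ u₂ v, QuadraticMap.polar Q (u₁ + u₂) v =
            QuadraticMap.polar Q u₁ v + QuadraticMap.polar Q u₂ v) ∧
        (∀ (a : F) (u v : Fin n → F), QuadraticMap.polar Q (a • u) v =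
            a * QuadraticMap.polar Q u v) ∧
        (∀ u v₁ v₂, QuadraticMap.polar Q u (v₁ + v₂) =
            QuadraticMap.polar Q u v₁ + QuadraticMap.polar Q u v₂) ∧
        (∀ (a : F) (u v : Fin n → F), QuadraticMap.polar Q u (a • v) =
            a * QuadraticMap.polar Q u v) ∧
        (∀ v, (∀ u, QuadraticMap.polar Q v u = 0) → v = 0) ∧
        (∀ v, Q (v ᵥ* X) = Q v)) ↔
      ((∃ P : Matrix (Fin n) (Fin n) F, IsUnit P ∧ X⁻¹ = P⁻¹ * X * P) ∧
        ∀ m : ℕ, 1 ≤ m → Odd m → Even (edMultiplicity X (-1) m)) := by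
  obtain ⟨A, rfl⟩ := hX
  have hodd : ∀ p : ℕ → Prop, (∀ m, 1 ≤ m → Odd m → p m) ↔ ∀ m, Odd m → p m := fun p =>
    forall_congr' fun m => ⟨fun h hm => h hm.pos hm, fun h _ => h⟩
  rw [exists_function_iff_exists_quadraticForm, exists_inv_eq_conj_iff_isConj,
    ← isConj_vecMulEquiv_iff, vecMulEquiv_inv, hodd]
  simp only [← nondegenerate_polarBilin_iff, ← vecMulEquiv_apply, edMultiplicity_eq_divisorWeight,
    CharTwo.neg_eq]
  exact exists_nondegenerate_quadraticForm_isometry_iff (vecMulEquiv A)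

/-- Let `F` be a finite field of characteristic 2 and `X ∈ GL(n,F)`.  There is a nonsingular
quadratic form `Q` on `F^n` with `X` an isometry of `Q` iff `X` is similar to `X⁻¹` and for
every odd `m ≥ 1` the multiplicity of `(t+1)^m` as an elementary divisor of `X` is even. -/
theorem exists_quadratic_form_iff_char_two
    {F : Type*} [Field F] [Fintype F] [CharP F 2] {n : ℕ}
    (X : Matrix (Fin n) (Fin n) F) (hX : IsUnit X) :
    (∃ Q : (Fin n → F) → F,
        (∀ (a : F) (v : Fin n → F), Q (a • v) = a ^ 2 * Q v) ∧
        (∀ u₁ u₂ v, QuadraticMap.polar Q (u₁ + u₂) v =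
            QuadraticMap.polar Q u₁ v + QuadraticMap.polar Q u₂ v) ∧
        (∀ (a : F) (u v : Fin n → F), QuadraticMap.polar Q (a • u) v =
            a * QuadraticMap.polar Q u v) ∧
        (∀ u v₁ v₂, QuadraticMap.polar Q u (v₁ + v₂) =
            QuadraticMap.polar Q u v₁ + QuadraticMap.polar Q u v₂) ∧
        (∀ (a : F) (u v : Fin n → F), QuadraticMap.polar Q u (a • v) =
            a * QuadraticMap.polar Q u v) ∧
        (∀ v, (∀ u, QuadraticMap.polar Q v u = 0) → v = 0) ∧
        (∀ v, Q (v ᵥ* X) = Q v)) ↔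
      ((∃ P : Matrix (Fin n) (Fin n) F, IsUnit P ∧ X⁻¹ = P⁻¹ * X * P) ∧
        ∀ m : ℕ, 1 ≤ m → Odd m → Even (edMultiplicity X (-1) m)) :=
  exists_quadratic_form_iff_char_two_general X hX
end

section
/- Let F be a finite field, let f ∈ F[t] be a monic irreducible polynomial of degree d > 1 with f = f* (self-dual), and let X ∈ M_d(F) be the companion matrix of f. Let Q be a nonsingular quadratic form on F^d such that X is an isometry of Q. Then every totally singular subspace W of F^d satisfies 2·dim W < d; that is, Q has minus type. -/
open Matrix Polynomial

/-- The dual polynomial `f*(t) = f(0)⁻¹ · t^(deg f) · f(1/t)`. -/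
noncomputable def dualPoly {F : Type*} [Field F] (f : Polynomial F) : Polynomial F :=
  Polynomial.C (f.coeff 0)⁻¹ * f.reverse

/-- The companion matrix of a polynomial `f` of degree `d`: the last column holds the
negated coefficients of `f`, the subdiagonal holds 1's. -/
def companionMatrix {F : Type*} [Field F] (f : Polynomial F) :
    Matrix (Fin f.natDegree) (Fin f.natDegree) F :=
  fun i j =>
    if (j : ℕ) = f.natDegree - 1 then -f.coeff i
    else if (i : ℕ) = (j : ℕ) + 1 then 1 else 0

/-!
A totally singular subspace `W` with `2 * dim W = dim V` is its own orthogonal complement. Put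
`q = |F|` and `N = |W|`. For `v ∉ W` the function `w ↦ Q (v + w)` on `W` is affine and not constant,
so it takes each value `N / q` times; summing over `v` and `w`, the form takes the value `1` at
exactly `N * (N - 1) / q` vectors. An isometry `g` permutes these vectors, and if an irreducible `f`
annihilates `g`, a power of `g` fixing a nonzero vector is the identity. So
`g ^ (N * (N - 1)) = 1`, hence `f` divides `X ^ (N * (N - 1)) - 1 = (X ^ (N - 1) - 1) ^ N`, all its
roots lie in the field with `N` elements, and `deg f ∣ dim W`. This is impossible for
`deg f = dim V`.
-/

/-- The subspace `W` is totally singular: `Q` vanishes on it. In characteristic two this is stronger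
than the vanishing of the polar form on `W`. -/
def IsTotallySingular {R M : Type*} [CommRing R] [AddCommGroup M] [Module R M]
    (Q : QuadraticForm R M) (W : Submodule R M) : Prop :=
  ∀ w ∈ W, Q w = 0

namespace IsTotallySingular

lemma le_orthogonal {R M : Type*} [CommRing R] [AddCommGroup M] [Module R M]
    {Q : QuadraticForm R M} {W : Submodule R M} (hW : IsTotallySingular Q W) :
    W ≤ LinearMap.BilinForm.orthogonal Q.polarBilin W := by
  intro v hv
  rw [LinearMap.BilinForm.mem_orthogonal_iff]
  intro w hw
  simp [QuadraticMap.polar, hW w hw, hW v hv, hW _ (W.add_mem hw hv)]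

variable {F V : Type*} [Field F] [AddCommGroup V] [Module F V] [FiniteDimensional F V]
  {Q : QuadraticForm F V} {W : Submodule F V}

lemma two_mul_finrank_le (hW : IsTotallySingular Q W) (hQ : Q.polarBilin.Nondegenerate) :
    2 * Module.finrank F W ≤ Module.finrank F V := by
  have hle := Submodule.finrank_mono hW.le_orthogonal
  rw [LinearMap.BilinForm.finrank_orthogonal hQ] at hle
  have := W.finrank_le
  lia

lemma orthogonal_eq_self (hW : IsTotallySingular Q W) (hQ : Q.polarBilin.Nondegenerate)
    (hdim : Module.finrank F V = 2 * Module.finrank F W) :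
    LinearMap.BilinForm.orthogonal Q.polarBilin W = W := by
  refine (Submodule.eq_of_le_of_finrank_le hW.le_orthogonal ?_).symm
  rw [LinearMap.BilinForm.finrank_orthogonal hQ]
  lia

end IsTotallySingular

section Counting

variable {F V : Type*} [Field F] [AddCommGroup V] [Module F V] [Finite V]

lemma card_mul_card_fiber {l : V →ₗ[F] F} (hl : l ≠ 0) (a : F) :
    Nat.card F * Nat.card {v // l v = a} = Nat.card V := by
  classical
  have := Fintype.ofFinite V
  have hsurj : Function.Surjective l := LinearMap.surjective hl
  have := Fintype.ofSurjective l hsurj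
  have hfib (b : F) : Nat.card {v // l v = b} = Nat.card {v // l v = a} := by
    simp only [Nat.card_eq_fintype_card, Fintype.card_subtype]
    exact AddMonoidHom.card_fiber_eq_of_mem_range l (hsurj b) (hsurj a)
  rw [← Nat.card_congr (Equiv.sigmaFiberEquiv l), Nat.card_sigma]
  simp only [hfib, Finset.sum_const, Finset.card_univ, smul_eq_mul, Nat.card_eq_fintype_card]

variable {Q : QuadraticForm F V} {W : Submodule F V}

lemma IsTotallySingular.card_mul_card_fiber_add_left (hW : IsTotallySingular Q W) {v : V}
    (hv : v ∉ LinearMap.BilinForm.orthogonal Q.polarBilin W) (a : F) :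
    Nat.card F * Nat.card {w : W // Q (v + w) = a} = Nat.card W := by
  have hl : (Q.polarBilin v).comp W.subtype ≠ 0 := by
    refine fun h ↦ hv (LinearMap.BilinForm.mem_orthogonal_iff.2 fun w hw ↦ ?_)
    simpa [QuadraticMap.polar_comm] using LinearMap.congr_fun h ⟨w, hw⟩
  rw [← card_mul_card_fiber hl (a - Q v)]
  congr 1
  refine Nat.card_congr (Equiv.subtypeEquivRight fun w ↦ ?_)
  simp [QuadraticMap.polar, hW w w.2]

lemma IsTotallySingular.card_mul_card_fiber_add_card (hW : IsTotallySingular Q W)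
    (horth : LinearMap.BilinForm.orthogonal Q.polarBilin W = W) {a : F} (ha : a ≠ 0) :
    Nat.card F * Nat.card {v // Q v = a} + Nat.card W = Nat.card V := by
  classical
  have := Fintype.ofFinite V
  have hsplit : Nat.card {v // v ∉ W} + Nat.card W = Nat.card V := by
    rw [add_comm, ← Nat.card_sum, Nat.card_congr (Equiv.sumCompl (· ∈ W))]
  have hrow (v : {v // v ∉ W}) :
      Nat.card F * Nat.card {w : W // Q (v + w) = a} = Nat.card W :=
    hW.card_mul_card_fiber_add_left (by rw [horth]; exact v.2) a
  have hcolumn (w : W) :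
      Nat.card {v : {v // v ∉ W} // Q (v + w) = a} = Nat.card {v // Q v = a} := by
    have hnotMem {v : V} (hv : Q (v + w) = a) : v ∉ W :=
      fun hvW ↦ ha (hv ▸ hW _ (W.add_mem hvW w.2))
    exact Nat.card_congr ((Equiv.subtypeSubtypeEquivSubtype hnotMem).trans
      ((Equiv.addRight (w : V)).subtypeEquiv fun v ↦ Iff.rfl))
  have hdouble : ∑ w : W, Nat.card {v : {v // v ∉ W} // Q (v + w) = a} =
      ∑ v : {v // v ∉ W}, Nat.card {w : W // Q (v + w) = a} := by
    simp only [Nat.card_eq_fintype_card, Fintype.card_subtype]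
    exact (Finset.sum_card_bipartiteAbove_eq_sum_card_bipartiteBelow
      fun (v : {v // v ∉ W}) (w : W) ↦ Q (v + w) = a).symm
  have hmul : Nat.card F * Nat.card {v // Q v = a} * Nat.card W =
      Nat.card {v // v ∉ W} * Nat.card W :=
    calc Nat.card F * Nat.card {v // Q v = a} * Nat.card W
      _ = Nat.card F * ∑ w : W, Nat.card {v : {v // v ∉ W} // Q (v + w) = a} := by
        simp only [hcolumn, Finset.sum_const, Finset.card_univ, smul_eq_mul,
          Nat.card_eq_fintype_card (α := W)]
        ring
      _ = ∑ v : {v // v ∉ W}, Nat.card F * Nat.card {w : W // Q (v + w) = a} := by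
        rw [hdouble, Finset.mul_sum]
      _ = Nat.card {v // v ∉ W} * Nat.card W := by
        simp only [hrow, Finset.sum_const, Finset.card_univ, smul_eq_mul,
          Nat.card_eq_fintype_card (α := {v // v ∉ W})]
  rw [Nat.eq_of_mul_eq_mul_right Nat.card_pos hmul, hsplit]

end Counting

section FreeAction

lemma natCard_dvd_natCard_of_isCancelSMul (G α : Type*) [Group G] [MulAction G α]
    [IsCancelSMul G α] : Nat.card G ∣ Nat.card α := by
  have hstab (a : α) : MulAction.stabilizer G a = ⊥ :=
    (Subgroup.eq_bot_iff_forall _).2 fun _ hg ↦ IsCancelSMul.eq_one_of_smul hg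
  rw [Nat.card_congr (MulAction.selfEquivOrbitsQuotientProd hstab), Nat.card_prod]
  exact dvd_mul_left _ _

lemma pow_natCard_eq_one_of_forall_pow_apply_eq {α : Type*} [Finite α] (σ : Equiv.Perm α)
    (hσ : ∀ (n : ℕ) (a : α), (σ ^ n) a = a → σ ^ n = 1) : σ ^ Nat.card α = 1 := by
  have : IsCancelSMul (Subgroup.zpowers σ) α := by
    rw [isCancelSMul_iff_eq_one_of_smul_eq]
    rintro ⟨τ, hτ⟩ a ha
    obtain ⟨n, rfl⟩ := mem_powers_iff_mem_zpowers.2 hτ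
    exact Subtype.ext (hσ n a ha)
  rw [← orderOf_dvd_iff_pow_eq_one, ← Nat.card_zpowers]
  exact natCard_dvd_natCard_of_isCancelSMul _ _

end FreeAction

section IrreducibleAnnihilator

variable {F V : Type*} [Field F] [AddCommGroup V] [Module F V] {f : F[X]} {g : Module.End F V}

lemma dvd_of_aeval_apply_eq_zero (hf : Irreducible f) (hfg : aeval g f = 0) {p : F[X]} {v : V}
    (hv : v ≠ 0) (hpv : aeval g p v = 0) : f ∣ p := by
  by_contra hdvd
  refine hv (Submodule.disjoint_def.1
    (disjoint_ker_aeval_of_isCoprime g (hf.coprime_iff_not_dvd.2 hdvd)) v ?_ hpv)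
  simp [hfg]

lemma aeval_eq_zero_of_apply_eq_zero (hf : Irreducible f) (hfg : aeval g f = 0) {p : F[X]} {v : V}
    (hv : v ≠ 0) (hpv : aeval g p v = 0) : aeval g p = 0 :=
  zero_dvd_iff.1 (hfg ▸ map_dvd (aeval g) (dvd_of_aeval_apply_eq_zero hf hfg hv hpv))

lemma injective_of_irreducible_of_ne_zero (hf : Irreducible f) (hfg : aeval g f = 0)
    (hg : g ≠ 0) : Function.Injective g := by
  refine (injective_iff_map_eq_zero g).2 fun v hv ↦ by_contra fun hv0 ↦ hg ?_
  simpa using aeval_eq_zero_of_apply_eq_zero (p := X) hf hfg hv0 (by simpa)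

lemma dvd_X_pow_natCard_sub_one_of_mapsTo (hf : Irreducible f) (hfg : aeval g f = 0)
    {s : Set V} [Finite s] (hs : Set.MapsTo g s s) (h0 : 0 ∉ s) : f ∣ X ^ Nat.card s - 1 := by
  obtain hempty | ⟨⟨v, hv⟩⟩ := isEmpty_or_nonempty s
  · simp
  have hinj : Function.Injective g :=
    injective_of_irreducible_of_ne_zero hf hfg fun hg ↦ h0 (by simpa [hg] using hs hv)
  let σ : Equiv.Perm s := .ofBijective (hs.restrict g s s)
    (Finite.injective_iff_bijective.1 ((hs.restrict_inj).2 hinj.injOn))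
  have hσ (n : ℕ) (u : s) : ((σ ^ n) u : V) = (g ^ n) u := by
    induction n with
    | zero => rfl
    | succ n ih => rw [pow_succ', pow_succ', Module.End.mul_apply, ← ih]; rfl
  have hfix (n : ℕ) (u : s) (hu : (σ ^ n) u = u) : σ ^ n = 1 := by
    have hgn : aeval g (X ^ n - 1 : F[X]) = 0 :=
      aeval_eq_zero_of_apply_eq_zero hf hfg (ne_of_mem_of_not_mem u.2 h0)
        (by simp [← hσ, hu])
    refine Equiv.ext fun w ↦ Subtype.ext ?_
    simpa [← hσ, sub_eq_zero] using LinearMap.congr_fun hgn w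
  refine dvd_of_aeval_apply_eq_zero hf hfg (ne_of_mem_of_not_mem hv h0) ?_
  have := hσ (Nat.card s) ⟨v, hv⟩
  rw [pow_natCard_eq_one_of_forall_pow_apply_eq σ hfix] at this
  simpa [sub_eq_zero] using this.symm

end IrreducibleAnnihilator

lemma sub_pow_natCard_pow (F : Type*) {A : Type*} [Field F] [Finite F] [CommRing A] [Algebra F A]
    (x y : A) (k : ℕ) :
    (x - y) ^ Nat.card F ^ k = x ^ Nat.card F ^ k - y ^ Nat.card F ^ k := by
  have := Fintype.ofFinite F
  have h := map_sub (FiniteField.frobeniusAlgHom F A ^ k) x y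
  simpa only [AlgHom.coe_pow, FiniteField.coe_frobeniusAlgHom, pow_iterate,
    ← Nat.card_eq_fintype_card] using h

lemma natDegree_dvd_of_dvd_X_pow_sub_one {F : Type*} [Field F] [Finite F] {f : F[X]}
    (hf : Irreducible f) {n k m : ℕ} (hn : n ∣ (Nat.card F ^ m - 1) * Nat.card F ^ k)
    (hfn : f ∣ X ^ n - 1) : f.natDegree ∣ m := by
  have hpow : f ∣ (X ^ (Nat.card F ^ m - 1) - 1) ^ Nat.card F ^ k := by
    rw [sub_pow_natCard_pow, one_pow, ← pow_mul]
    exact hfn.trans (dvd_pow_sub_one_of_dvd hn)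
  refine hf.natDegree_dvd_of_dvd_X_pow_card_pow_sub_X
    ((hf.prime.dvd_of_dvd_pow hpow).trans ⟨X, ?_⟩)
  rw [sub_one_mul, ← pow_succ, Nat.sub_add_cancel (Nat.pow_pos Nat.card_pos)]

section CompanionMatrix

lemma aeval_vecMulLinear {R n : Type*} [CommSemiring R] [Fintype n] [DecidableEq n]
    (M : Matrix n n R) (p : R[X]) :
    aeval (M.vecMulLinear : Module.End R (n → R)) p = (aeval M p).vecMulLinear := by
  induction p using Polynomial.induction_on' with
  | add p q hp hq => ext; simp [hp, hq]
  | monomial k a =>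
    have hpow : (M.vecMulLinear : Module.End R (n → R)) ^ k = (M ^ k).vecMulLinear := by
      induction k with
      | zero => ext; simp
      | succ k ih =>
        rw [pow_succ', ih, pow_succ]
        exact LinearMap.ext fun v ↦ by simp [Matrix.vecMul_vecMul]
    ext
    simp [aeval_monomial, hpow, ← Algebra.smul_def]

lemma companionMatrix_eq_leftMulMatrix {F : Type*} [Field F] {f : F[X]} (hf : f.Monic) :
    companionMatrix f = Algebra.leftMulMatrix (AdjoinRoot.powerBasis hf.ne_zero).basis
      (AdjoinRoot.root f) := by
  rw [← AdjoinRoot.powerBasis_gen hf.ne_zero, PowerBasis.leftMulMatrix]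
  ext i j
  have hj : (j : ℕ) = f.natDegree - 1 ↔ (j : ℕ) + 1 = f.natDegree := by lia
  simp only [companionMatrix, hj, AdjoinRoot.powerBasis_dim, PowerBasis.minpolyGen_eq,
    AdjoinRoot.powerBasis_gen, AdjoinRoot.minpoly_root hf.ne_zero, hf.leadingCoeff, inv_one,
    map_one, mul_one]
  rfl

lemma aeval_companionMatrix {F : Type*} [Field F] {f : F[X]} (hf : f.Monic) :
    aeval (companionMatrix f) f = 0 := by
  have h := aeval_algHom_apply (Algebra.leftMulMatrix (AdjoinRoot.powerBasis hf.ne_zero).basis)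
    (AdjoinRoot.root f) f
  rw [AdjoinRoot.aeval_eq, AdjoinRoot.mk_self, map_zero,
    ← companionMatrix_eq_leftMulMatrix hf] at h
  exact h

end CompanionMatrix

section Isometry

variable {F V : Type*} [Field F] [Finite F] [AddCommGroup V] [Module F V] [FiniteDimensional F V]
  {f : F[X]} {g : Module.End F V} {Q : QuadraticForm F V} {W : Submodule F V}

lemma IsTotallySingular.natDegree_dvd_finrank (hW : IsTotallySingular Q W)
    (hQ : Q.polarBilin.Nondegenerate) (hdim : Module.finrank F V = 2 * Module.finrank F W)
    (hg : ∀ v, Q (g v) = Q v) (hf : Irreducible f) (hfg : aeval g f = 0) :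
    f.natDegree ∣ Module.finrank F W := by
  have : Finite V := Module.finite_of_finite F
  have hdvd : f ∣ X ^ Nat.card {v | Q v = 1} - 1 :=
    dvd_X_pow_natCard_sub_one_of_mapsTo hf hfg (fun v hv ↦ (hg v).trans hv) (by simp)
  have hcount := hW.card_mul_card_fiber_add_card (hW.orthogonal_eq_self hQ hdim) one_ne_zero
  rw [Module.natCard_eq_pow_finrank (K := F) (V := W),
    Module.natCard_eq_pow_finrank (K := F) (V := V), hdim, two_mul, pow_add] at hcount
  refine natDegree_dvd_of_dvd_X_pow_sub_one hf (k := Module.finrank F W)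
    (Dvd.intro_left (Nat.card F) ?_) hdvd
  rw [Nat.sub_one_mul]
  exact Nat.eq_sub_of_add_eq hcount

theorem companion_selfdual_preserves_minus_type_general (hW : IsTotallySingular Q W)
    (hQ : Q.polarBilin.Nondegenerate) (hg : ∀ v, Q (g v) = Q v) (hf : Irreducible f)
    (hfg : aeval g f = 0) (hdim : ¬ 2 * f.natDegree ∣ Module.finrank F V) :
    2 * Module.finrank F W < Module.finrank F V := by
  refine (hW.two_mul_finrank_le hQ).lt_of_ne fun heq ↦ hdim ?_
  rw [← heq]
  exact mul_dvd_mul_left 2 (hW.natDegree_dvd_finrank hQ heq.symm hg hf hfg)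

end Isometry

/-- Let `f` be a monic irreducible self-dual polynomial of degree `d > 1` over a finite
field, and let `X` be its companion matrix.  If `Q` is a nonsingular quadratic form on
`F^d` preserved by `X`, then every totally singular subspace `W` satisfies
`2·dim W < d`: that is, `Q` has minus type. -/
theorem companion_selfdual_preserves_minus_type
    {F : Type*} [Field F] [Fintype F] (f : Polynomial F)
    (hmonic : f.Monic) (hirr : Irreducible f) (hdeg : 1 < f.natDegree)
    (hdual : dualPoly f = f)
    (Q : (Fin f.natDegree → F) → F)
    (hQsmul : ∀ (a : F) (v : Fin f.natDegree → F), Q (a • v) = a ^ 2 * Q v)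
    (hpolar_addl : ∀ u₁ u₂ v, QuadraticMap.polar Q (u₁ + u₂) v =
        QuadraticMap.polar Q u₁ v + QuadraticMap.polar Q u₂ v)
    (hpolar_smull : ∀ (a : F) (u v : Fin f.natDegree → F),
        QuadraticMap.polar Q (a • u) v = a * QuadraticMap.polar Q u v)
    (hpolar_addr : ∀ u v₁ v₂, QuadraticMap.polar Q u (v₁ + v₂) =
        QuadraticMap.polar Q u v₁ + QuadraticMap.polar Q u v₂)
    (hpolar_smulr : ∀ (a : F) (u v : Fin f.natDegree → F),
        QuadraticMap.polar Q u (a • v) = a * QuadraticMap.polar Q u v)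
    (hnd : ∀ v, (∀ u, QuadraticMap.polar Q v u = 0) → v = 0)
    (hiso : ∀ v, Q (v ᵥ* companionMatrix f) = Q v)
    (W : Submodule F (Fin f.natDegree → F))
    (hW : ∀ w ∈ W, Q w = 0) :
    2 * Module.finrank F W < f.natDegree := by
  let Q' : QuadraticForm F (Fin f.natDegree → F) :=
    .ofPolar Q (fun a v ↦ by rw [hQsmul, sq, smul_eq_mul]) hpolar_addl hpolar_smull
  have hQ' : Q'.polarBilin.Nondegenerate :=
    ⟨hnd, fun v hv ↦ hnd v fun u ↦ (QuadraticMap.polar_comm Q v u).trans (hv u)⟩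
  have hroot : aeval (companionMatrix f).vecMulLinear f = 0 := by
    simp [aeval_vecMulLinear, aeval_companionMatrix hmonic]
  have hdim : ¬ 2 * f.natDegree ∣ Module.finrank F (Fin f.natDegree → F) := by
    rw [Module.finrank_fin_fun]
    exact Nat.not_dvd_of_pos_of_lt hirr.natDegree_pos (by lia)
  simpa using companion_selfdual_preserves_minus_type_general (Q := Q') (W := W)
    hW hQ' hiso hirr hroot hdim
end
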